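/- arXiv:2001.07894 — 4 statements merged into one kernel-verified Lean document; each statement's English description precedes it below -/
import Mathlib

section
/- For every n-vertex unicyclic graph G with n ≥ 3, n(US_n) ≥ n(G) ≥ n(UP_n), where n(·) denotes the total number of subtrees. -/
open SimpleGraph

/-- A subtree of `G` is a nonempty connected acyclic subgraph of `G`. -/
def IsSubtree {V : Type*} {G : SimpleGraph V} (H : G.Subgraph) : Prop :=
  H.Connected ∧ H.coe.IsAcyclic

/-- `nk G k` : the number of subtrees of `G` with exactly `k` vertices. -/
noncomputable def nk {V : Type*} (G : SimpleGraph V) (k : ℕ) : ℕ :=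
  Nat.card {H : G.Subgraph // IsSubtree H ∧ H.verts.ncard = k}

/-- number of `k`-vertex subtrees of `G` containing the vertex `v`. -/
noncomputable def nkAt {V : Type*} (G : SimpleGraph V) (v : V) (k : ℕ) : ℕ :=
  Nat.card {H : G.Subgraph // IsSubtree H ∧ v ∈ H.verts ∧ H.verts.ncard = k}

/-- `nT G` : total number of subtrees of `G`, counting the empty subtree once. -/
noncomputable def nT {V : Type*} (G : SimpleGraph V) : ℕ :=
  1 + Nat.card {H : G.Subgraph // IsSubtree H}

/-- number of subtrees of `G` containing the vertex `v`. -/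
noncomputable def nAt {V : Type*} (G : SimpleGraph V) (v : V) : ℕ :=
  Nat.card {H : G.Subgraph // IsSubtree H ∧ v ∈ H.verts}

/-- the path on `n` vertices `0 - 1 - ⋯ - (n-1)`. -/
def pathG (n : ℕ) : SimpleGraph (Fin n) :=
  SimpleGraph.fromRel (fun u v => v.val = u.val + 1)

/-- the cycle on `n` vertices. -/
def cycG (n : ℕ) : SimpleGraph (Fin n) :=
  SimpleGraph.fromRel (fun u v => v.val = u.val + 1 ∨ (u.val = 0 ∧ v.val + 1 = n))

/-- the star on `n` vertices with center `0`. -/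
def starG (n : ℕ) : SimpleGraph (Fin n) :=
  SimpleGraph.fromRel (fun u _ => u.val = 0)

/-- `USnl n l` : the cycle `C_l` (on `0,…,l-1`) with `n - l` pendant vertices attached
to the vertex `0`. -/
def USnl (n l : ℕ) : SimpleGraph (Fin n) :=
  SimpleGraph.fromRel (fun u v =>
    (v.val = u.val + 1 ∧ v.val < l) ∨ (u.val = 0 ∧ v.val + 1 = l) ∨ (u.val = 0 ∧ l ≤ v.val))

/-- `UPnl n l` : the cycle `C_l` (on `0,…,l-1`) with a pendant path of length `n - l`
attached to the vertex `l-1`. -/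
def UPnl (n l : ℕ) : SimpleGraph (Fin n) :=
  SimpleGraph.fromRel (fun u v => v.val = u.val + 1 ∨ (u.val = 0 ∧ v.val + 1 = l))

/-- `US_n` : the star `S_n` together with an edge joining two of its leaves. -/
def USn (n : ℕ) : SimpleGraph (Fin n) := USnl n 3

/-- `UP_n` : a triangle with a pendant path, obtained by identifying a vertex of `C_3`
with an end of `P_{n-2}`. -/
def UPn (n : ℕ) : SimpleGraph (Fin n) := UPnl n 3

/-- the Merrifield–Simmons index: the number of independent vertex subsets
(including the empty set). -/
noncomputable def sigmaG {V : Type*} (G : SimpleGraph V) : ℕ :=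
  Nat.card {s : Set V // ∀ u ∈ s, ∀ v ∈ s, ¬ G.Adj u v}

/-- the Hosoya index: the number of matchings (including the empty one). -/
noncomputable def hosoya {V : Type*} (G : SimpleGraph V) : ℕ :=
  Nat.card {s : Set (Sym2 V) // s ⊆ G.edgeSet ∧
    s.Pairwise (fun e f => ∀ v, ¬(v ∈ e ∧ v ∈ f))}

/-- the Wiener index: the sum of the distances over all unordered pairs of vertices. -/
noncomputable def wiener {V : Type*} [Fintype V] (G : SimpleGraph V) : ℕ :=
  (∑ u : V, ∑ v : V, G.dist u v) / 2


namespace UniX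

variable {V : Type*} {G : SimpleGraph V}

/-- cut characterisation of connectedness of a subgraph -/
theorem conn_iff (H : G.Subgraph) : H.Connected ↔ H.verts.Nonempty ∧
    ∀ A : Set V, (∃ x ∈ H.verts, x ∈ A) → (∀ x ∈ A, ∀ y, H.Adj x y → y ∈ A) → H.verts ⊆ A := by
  constructor
  · intro h
    refine ⟨h.nonempty, ?_⟩
    rintro A ⟨x, hx, hxA⟩ hcl y hy
    obtain ⟨w⟩ := h.preconnected.coe ⟨x, hx⟩ ⟨y, hy⟩
    have key : ∀ (a b : H.verts) (w : H.coe.Walk a b), (a : V) ∈ A → (b : V) ∈ A := by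
      intro a b w
      induction w with
      | nil => exact id
      | cons h p ih => intro ha; exact ih (hcl _ ha _ (by simpa using h))
    exact key _ _ w hxA
  · rintro ⟨hne, hcut⟩
    rw [Subgraph.connected_iff]
    refine ⟨⟨?_⟩, hne⟩
    rintro ⟨x, hx⟩ ⟨y, hy⟩
    have := hcut {z | ∃ hz : z ∈ H.verts, H.coe.Reachable ⟨x, hx⟩ ⟨z, hz⟩}
      ⟨x, hx, hx, Reachable.refl _⟩ (by
        rintro z ⟨hz, hr⟩ t hzt
        refine ⟨hzt.snd_mem, hr.trans ?_⟩
        exact Adj.reachable (by simpa using hzt)) hy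
    exact this.2

theorem subtree_iff [Finite V] (H : G.Subgraph) :
    IsSubtree H ↔ H.Connected ∧ H.edgeSet.ncard + 1 = H.verts.ncard := by
  unfold IsSubtree
  constructor
  · rintro ⟨h1, h2⟩
    refine ⟨h1, ?_⟩
    have : H.coe.IsTree := ⟨h1.coe, h2⟩
    have := (isTree_iff_connected_and_card.1 this).2
    rw [← Subgraph.image_coe_edgeSet_coe,
      Set.ncard_image_of_injective _ (Sym2.map.injective Subtype.val_injective)]
    exact this
  · rintro ⟨h1, h2⟩
    refine ⟨h1, ?_⟩
    refine (isTree_iff_connected_and_card.2 ⟨h1.coe, ?_⟩).isAcyclic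
    rw [← Subgraph.image_coe_edgeSet_coe,
      Set.ncard_image_of_injective _ (Sym2.map.injective Subtype.val_injective)] at h2
    exact h2

/-- add the leaf `v` at `u` -/
def addL {u v : V} (h : G.Adj u v) (H : G.Subgraph) : G.Subgraph := H ⊔ G.subgraphOfAdj h

theorem addL_verts {u v : V} (h : G.Adj u v) (H : G.Subgraph) (hu : u ∈ H.verts) :
    (addL h H).verts = insert v H.verts := by
  ext x; simp [addL]; grind

theorem addL_adj {u v : V} (h : G.Adj u v) (H : G.Subgraph) (x y : V) :
    (addL h H).Adj x y ↔ H.Adj x y ∨ (x = u ∧ y = v) ∨ (x = v ∧ y = u) := by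
  simp [addL, subgraphOfAdj_adj]; grind

theorem addL_edge {u v : V} (h : G.Adj u v) (H : G.Subgraph) :
    (addL h H).edgeSet = insert s(u, v) H.edgeSet := by
  ext e
  induction e with | _ x y => ?_
  simp [addL_adj]; grind

theorem addL_subtree [Finite V] {u v : V} (h : G.Adj u v) (H : G.Subgraph) (hu : u ∈ H.verts)
    (hv : v ∉ H.verts) (hH : IsSubtree H) : IsSubtree (addL h H) := by
  rw [subtree_iff] at *
  obtain ⟨h1, h2⟩ := hH
  constructor
  · rw [conn_iff] at *
    refine ⟨⟨u, by rw [addL_verts h H hu]; exact Or.inr hu⟩, ?_⟩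
    rintro A ⟨x, hx, hxA⟩ hcl
    rw [addL_verts h H hu] at *
    have hcl' : ∀ x ∈ A, ∀ y, H.Adj x y → y ∈ A := fun x hx y hxy =>
      hcl x hx y ((addL_adj h H x y).2 (Or.inl hxy))
    have huA : u ∈ A := by
      rcases hx with rfl | hx
      · exact hcl x hxA u ((addL_adj h H _ _).2 (by simp))
      · exact h1.2 A ⟨x, hx, hxA⟩ hcl' hu
    have hvA : v ∈ A := hcl u huA v ((addL_adj h H _ _).2 (by simp))
    exact Set.insert_subset hvA (h1.2 A ⟨u, hu, huA⟩ hcl')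
  · rw [addL_verts h H hu, addL_edge, Set.ncard_insert_of_notMem, Set.ncard_insert_of_notMem hv, h2]
    intro hmem
    exact hv (H.edge_vert (Subgraph.mem_edgeSet.1 hmem).symm)

theorem singleton_subtree [Finite V] (v : V) : IsSubtree (G.singletonSubgraph v) := by
  rw [subtree_iff]
  refine ⟨Subgraph.singletonSubgraph_connected, ?_⟩
  simp

theorem eq_singleton {v : V} {H : G.Subgraph} (hc : H.Connected) (hv : v ∈ H.verts)
    (hno : ∀ w, ¬ H.Adj v w) : H = G.singletonSubgraph v := by
  rw [conn_iff] at hc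
  have h1 : H.verts ⊆ {v} := hc.2 {v} ⟨v, hv, rfl⟩ (by
    rintro x rfl y hxy; exact absurd hxy (hno y))
  have h2 : H.verts = {v} := le_antisymm h1 (by simpa using hv)
  ext x y
  · simp [h2]
  · simp only [singletonSubgraph_adj]
    constructor
    · intro h
      have := h1 (H.edge_vert h)
      subst this
      exact absurd h (hno y)
    · intro h; exact absurd h (by simp)

theorem addL_del {u v : V} (h : G.Adj u v) (H : G.Subgraph) (hu : u ∈ H.verts)
    (hv : v ∉ H.verts) : (addL h H).deleteVerts {v} = H := by
  have hh : ∀ y, ¬ H.Adj v y := fun y hy => hv (H.edge_vert hy)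
  have hh' : ∀ y, ¬ H.Adj y v := fun y hy => hv (H.edge_vert hy.symm)
  ext x y
  · simp only [Subgraph.deleteVerts_verts, addL_verts h H hu]
    simp; grind
  · simp only [Subgraph.deleteVerts_adj, addL_verts h H hu, addL_adj]
    have : H.Adj x y → x ∈ H.verts := fun h => H.edge_vert h
    have : H.Adj x y → y ∈ H.verts := fun h => H.edge_vert h.symm
    simp; grind

theorem del_addL {u v : V} (h : G.Adj u v) (H : G.Subgraph) (huv : H.Adj u v)
    (huniq : ∀ w, H.Adj v w → w = u) : addL h (H.deleteVerts {v}) = H := by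
  have hne := h.ne
  have hu := H.edge_vert huv
  have hv := H.edge_vert huv.symm
  ext x y
  · rw [addL_verts _ _ (by simp [hu, hne])]
    simp; grind
  · rw [addL_adj]
    have : H.Adj x y → x ∈ H.verts := fun h => H.edge_vert h
    have : H.Adj x y → y ∈ H.verts := fun h => H.edge_vert h.symm
    have : H.Adj x y → H.Adj y x := fun h => h.symm
    have := huv.symm
    simp; grind

theorem del_subtree [Finite V] {u v : V} (h : G.Adj u v) (H : G.Subgraph) (huv : H.Adj u v)
    (huniq : ∀ w, H.Adj v w → w = u) (hH : IsSubtree H) : IsSubtree (H.deleteVerts {v}) := by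
  have hne := h.ne
  have hu := H.edge_vert huv
  have hv := H.edge_vert huv.symm
  have e := del_addL h H huv huniq
  have hu' : u ∈ (H.deleteVerts {v}).verts := by simp [hu, hne]
  have hv' : v ∉ (H.deleteVerts {v}).verts := by simp
  rw [subtree_iff] at *
  obtain ⟨h1, h2⟩ := hH
  constructor
  · rw [conn_iff] at *
    refine ⟨⟨u, hu'⟩, ?_⟩
    rintro A ⟨x, hx, hxA⟩ hcl y hy
    have hxv : x ≠ v := by rintro rfl; exact hv' hx
    have hyv : y ≠ v := by rintro rfl; exact hv' hy
    have hcl' : ∀ x ∈ A, x ≠ v → ∀ y, H.Adj x y → y ≠ v → y ∈ A := fun x hx hxv y hxy hyv =>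
      hcl x hx y (by
        have := H.edge_vert hxy
        have := H.edge_vert hxy.symm
        simp [*])
    by_cases huA : u ∈ A
    · have := h1.2 (insert v A) ⟨x, hx.1, Or.inr hxA⟩ (by
        intro a ha b hab
        by_cases hb : b = v
        · exact Or.inl hb
        right
        by_cases hav : a = v
        · subst hav; rw [huniq b hab]; exact huA
        · exact hcl' a (ha.resolve_left hav) hav b hab hb) hy.1
      exact this.resolve_left hyv
    · have := h1.2 (A \ {v}) ⟨x, hx.1, hxA, hxv⟩ (by
        rintro a ⟨ha, hav⟩ b hab
        have hb : b ≠ v := by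
          rintro rfl
          exact huA (huniq a hab.symm ▸ ha)
        exact ⟨hcl' a ha hav b hab hb, hb⟩) hy.1
      exact this.1
  · have e1 := addL_verts h _ hu'
    have e2 := addL_edge h (H.deleteVerts {v})
    rw [e] at e1 e2
    rw [e1, e2, Set.ncard_insert_of_notMem hv', Set.ncard_insert_of_notMem] at h2
    · omega
    · intro hmem
      exact hv' (Subgraph.edge_vert _ (Subgraph.mem_edgeSet.1 hmem).symm)

/-- subtrees inside `s` -/
def S (G : SimpleGraph V) (s : Set V) : Set G.Subgraph := {H | IsSubtree H ∧ H.verts ⊆ s}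

/-- subtrees inside `s` through `x` -/
def S1 (G : SimpleGraph V) (s : Set V) (x : V) : Set G.Subgraph := {H | H ∈ S G s ∧ x ∈ H.verts}

/-- subtrees inside `s` through `x` and `y` -/
def S2 (G : SimpleGraph V) (s : Set V) (x y : V) : Set G.Subgraph :=
  {H | H ∈ S1 G s x ∧ y ∈ H.verts}

/-- `v` is a new leaf attached to `s` at `u` -/
structure Leaf (G : SimpleGraph V) (s : Set V) (u v : V) : Prop where
  hv : v ∉ s
  hu : u ∈ s
  adj : G.Adj u v
  uniq : ∀ w ∈ s, G.Adj v w → w = u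

theorem leaf_mem [Finite V] {s : Set V} {u v : V} (L : Leaf G s u v) (H : G.Subgraph) :
    H ∈ S1 G (insert v s) v ↔ H = G.singletonSubgraph v ∨ H ∈ addL L.adj '' S1 G s u := by
  constructor
  · rintro ⟨⟨h1, h2⟩, h3⟩
    by_cases hw : ∃ w, H.Adj v w
    · right
      have huniq : ∀ w, H.Adj v w → w = u := by
        intro w hw
        have hws := h2 (H.edge_vert hw.symm)
        rcases hws with rfl | hws
        · exact absurd rfl hw.ne
        · exact L.uniq w hws hw.adj_sub
      obtain ⟨w, hw⟩ := hw
      have := huniq w hw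
      subst this
      refine ⟨H.deleteVerts {v}, ⟨⟨del_subtree L.adj H hw.symm huniq h1, ?_⟩, ?_⟩,
        del_addL L.adj H hw.symm huniq⟩
      · rintro x ⟨hx, hxv⟩
        exact (h2 hx).resolve_left hxv
      · exact ⟨H.edge_vert hw.symm, L.adj.ne⟩
    · left
      push Not at hw
      exact eq_singleton h1.1 h3 hw
  · rintro (rfl | ⟨K, ⟨⟨h1, h2⟩, h3⟩, rfl⟩)
    · exact ⟨⟨singleton_subtree v, by simp⟩, by simp⟩
    · have := addL_verts L.adj K h3
      refine ⟨⟨addL_subtree L.adj K h3 (fun h => L.hv (h2 h)) h1, ?_⟩, ?_⟩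
      · rw [this]; exact Set.insert_subset_insert h2
      · rw [this]; simp

theorem addL_injOn {s : Set V} {u v : V} (L : Leaf G s u v) :
    Set.InjOn (addL L.adj) (S1 G s u) := by
  rintro H hH K hK e
  have := addL_del L.adj H hH.2 (fun h => L.hv (hH.1.2 h))
  rw [e, addL_del L.adj K hK.2 (fun h => L.hv (hK.1.2 h))] at this
  exact this.symm

theorem leaf_at_v [Finite V] {s : Set V} {u v : V} (L : Leaf G s u v) :
    (S1 G (insert v s) v).ncard = 1 + (S1 G s u).ncard := by
  have : S1 G (insert v s) v = insert (G.singletonSubgraph v) (addL L.adj '' S1 G s u) := by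
    ext H; exact leaf_mem L H
  rw [this, Set.ncard_insert_of_notMem, (addL_injOn L).ncard_image, add_comm]
  rintro ⟨K, hK, e⟩
  have h1 := addL_verts L.adj K hK.2
  rw [e] at h1
  have : u ∈ (G.singletonSubgraph v).verts := h1 ▸ Or.inr hK.2
  exact L.adj.ne (by simpa using this)

theorem leaf_tot [Finite V] {s : Set V} {u v : V} (L : Leaf G s u v) :
    (S G (insert v s)).ncard = (S G s).ncard + 1 + (S1 G s u).ncard := by
  rw [add_assoc, ← leaf_at_v L, ← Set.ncard_union_eq]
  · congr 1
    ext H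
    constructor
    · intro h
      by_cases hv : v ∈ H.verts
      · exact Or.inr ⟨h, hv⟩
      · left
        exact ⟨h.1, fun x hx => (h.2 hx).resolve_left (by rintro rfl; exact hv hx)⟩
    · rintro (h | h)
      · exact ⟨h.1, h.2.trans (Set.subset_insert _ _)⟩
      · exact h.1
  · rw [Set.disjoint_left]
    intro H h1 h2
    exact L.hv (h1.2 h2.2)

theorem leaf_at [Finite V] {s : Set V} {u v x : V} (L : Leaf G s u v) (hx : x ∈ s) :
    (S1 G (insert v s) x).ncard = (S1 G s x).ncard + (S2 G s u x).ncard := by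
  have hinj := (addL_injOn L).mono (s₁ := S2 G s u x) (fun H h => h.1)
  have hxv : x ≠ v := by rintro rfl; exact L.hv hx
  rw [← hinj.ncard_image, ← Set.ncard_union_eq]
  · congr 1
    ext H
    constructor
    · intro h
      by_cases hv : v ∈ H.verts
      · right
        rcases (leaf_mem L H).1 ⟨h.1, hv⟩ with rfl | ⟨K, hK, rfl⟩
        · exact absurd h.2 (by simpa using hxv)
        · refine ⟨K, ⟨hK, ?_⟩, rfl⟩
          have := h.2
          rw [addL_verts _ _ hK.2] at this
          exact this.resolve_left hxv
      · left
        exact ⟨⟨h.1.1, fun y hy => (h.1.2 hy).resolve_left (by rintro rfl; exact hv hy)⟩, h.2⟩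
    · rintro (h | ⟨K, hK, rfl⟩)
      · exact ⟨⟨h.1.1, h.1.2.trans (Set.subset_insert _ _)⟩, h.2⟩
      · refine ⟨((leaf_mem L _).2 (Or.inr ⟨K, hK.1, rfl⟩)).1, ?_⟩
        rw [addL_verts _ _ hK.1.2]; exact Or.inr hK.2
  · rw [Set.disjoint_left]
    rintro H h1 ⟨K, hK, rfl⟩
    refine L.hv (h1.1.2 ?_)
    rw [addL_verts _ _ hK.1.2]; exact Or.inl rfl

/-- there is a subtree spanning `s` -/
def Sp (G : SimpleGraph V) (s : Set V) : Prop := ∃ H : G.Subgraph, IsSubtree H ∧ H.verts = s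

theorem leaf_sp [Finite V] {s : Set V} {u v : V} (L : Leaf G s u v) (h : Sp G s) :
    Sp G (insert v s) := by
  obtain ⟨H, h1, rfl⟩ := h
  exact ⟨addL L.adj H, addL_subtree _ _ L.hu L.hv h1, addL_verts _ _ L.hu⟩

theorem leaf_at_bounds [Finite V] {s : Set V} {u v x : V} (L : Leaf G s u v) (hx : x ∈ s)
    (hsp : Sp G s) : (S1 G s x).ncard + 1 ≤ (S1 G (insert v s) x).ncard ∧
      (S1 G (insert v s) x).ncard ≤ 2 * (S1 G s x).ncard := by
  rw [leaf_at L hx]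
  have h1 : (S2 G s u x).ncard ≤ (S1 G s x).ncard :=
    Set.ncard_le_ncard (fun H h => ⟨h.1.1, h.2⟩)
  have h2 : 0 < (S2 G s u x).ncard := by
    rw [Set.ncard_pos]
    obtain ⟨H, h3, rfl⟩ := hsp
    exact ⟨H, ⟨⟨h3, subset_rfl⟩, L.hu⟩, hx⟩
  omega

theorem leaf_at_u [Finite V] {s : Set V} {u v : V} (L : Leaf G s u v) :
    (S1 G (insert v s) u).ncard = 2 * (S1 G s u).ncard := by
  rw [leaf_at L L.hu]
  have : S2 G s u u = S1 G s u := by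
    ext H; exact ⟨fun h => h.1, fun h => ⟨h, h.2⟩⟩
  rw [this]; omega

/-- bounds for trees -/
structure TB (G : SimpleGraph V) (s : Set V) : Prop where
  sp : Sp G s
  at_lo : ∀ x ∈ s, s.ncard ≤ (S1 G s x).ncard
  at_hi : ∀ x ∈ s, 2 * (S1 G s x).ncard ≤ 2 ^ s.ncard
  lo : s.ncard * (s.ncard + 1) ≤ 2 * (S G s).ncard
  hi : 2 * (S G s).ncard + 2 ≤ 2 ^ s.ncard + 2 * s.ncard

/-- bounds for unicyclic graphs -/
structure UB (G : SimpleGraph V) (s : Set V) : Prop where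
  sp : Sp G s
  at_lo : ∀ x ∈ s, s.ncard + 3 ≤ (S1 G s x).ncard
  at_hi : ∀ x ∈ s, 4 * (S1 G s x).ncard ≤ 3 * 2 ^ s.ncard
  lo : s.ncard ^ 2 + 7 * s.ncard ≤ 2 * (S G s).ncard + 12
  hi : 4 * (S G s).ncard ≤ 3 * 2 ^ s.ncard + 4 * s.ncard

theorem TB.step [Finite V] {s : Set V} {u v : V} (L : Leaf G s u v) (h : TB G s) :
    TB G (insert v s) := by
  have hc := Set.ncard_insert_of_notMem L.hv
  have a1 := h.at_lo u L.hu
  have a2 := h.at_hi u L.hu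
  have a3 := leaf_at_v L
  refine ⟨leaf_sp L h.sp, ?_, ?_, ?_, ?_⟩
  · rintro x (rfl | hx)
    · omega
    · have := leaf_at_bounds L hx h.sp
      have := h.at_lo x hx
      omega
  · rw [hc, pow_succ]
    rintro x (rfl | hx)
    · have : 0 < s.ncard := (Set.ncard_pos).2 ⟨u, L.hu⟩
      have : 2 ^ 1 ≤ 2 ^ s.ncard := Nat.pow_le_pow_right (by norm_num) this
      omega
    · have := leaf_at_bounds L hx h.sp
      have := h.at_hi x hx
      omega
  · have := h.lo
    rw [leaf_tot L, hc]
    nlinarith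
  · have := h.hi
    rw [leaf_tot L, hc, pow_succ]
    omega

theorem UB.step [Finite V] {s : Set V} {u v : V} (L : Leaf G s u v) (h : UB G s)
    (h3 : 3 ≤ s.ncard) : UB G (insert v s) := by
  have hc := Set.ncard_insert_of_notMem L.hv
  have a1 := h.at_lo u L.hu
  have a2 := h.at_hi u L.hu
  have a3 := leaf_at_v L
  refine ⟨leaf_sp L h.sp, ?_, ?_, ?_, ?_⟩
  · rintro x (rfl | hx)
    · omega
    · have := leaf_at_bounds L hx h.sp
      have := h.at_lo x hx
      omega
  · rw [hc, pow_succ]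
    rintro x (rfl | hx)
    · have : 2 ^ 3 ≤ 2 ^ s.ncard := Nat.pow_le_pow_right (by norm_num) h3
      omega
    · have := leaf_at_bounds L hx h.sp
      have := h.at_hi x hx
      omega
  · have := h.lo
    rw [leaf_tot L, hc]
    nlinarith
  · have := h.hi
    rw [leaf_tot L, hc, pow_succ]
    omega

theorem TB.single [Finite V] (v : V) : TB G {v} := by
  have key : S G {v} = {G.singletonSubgraph v} := by
    ext H
    constructor
    · rintro ⟨h1, h2⟩
      obtain ⟨x, hx⟩ := h1.1.nonempty
      have := h2 hx
      obtain rfl : x = v := by simpa using this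
      refine eq_singleton h1.1 hx ?_
      intro w hw
      have := h2 (H.edge_vert hw.symm)
      exact hw.ne (by simpa using this.symm)
    · rintro rfl
      exact ⟨singleton_subtree v, by simp⟩
  have key1 : S1 G {v} v = {G.singletonSubgraph v} := by
    ext H
    unfold S1
    rw [key]
    constructor
    · exact fun h => h.1
    · rintro rfl; exact ⟨rfl, by simp⟩
  refine ⟨⟨_, singleton_subtree v, by simp⟩, ?_, ?_, ?_, ?_⟩ <;> simp [key, key1]

/-- `s` induces a cycle of length `m` parametrised by `p` -/
structure Cyc (G : SimpleGraph V) (s : Set V) (m : ℕ) (p : ℤ → V) : Prop where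
  h3 : 3 ≤ m
  inj : ∀ i j, p i = p j ↔ (m : ℤ) ∣ i - j
  adj : ∀ i j, G.Adj (p i) (p j) ↔ (m : ℤ) ∣ j - i - 1 ∨ (m : ℤ) ∣ i - j - 1
  ran : s = Set.range p

theorem dvz {m z : ℤ} (h : m ∣ z) (h1 : -m < z) (h2 : z < m) : z = 0 :=
  Int.eq_zero_of_abs_lt_dvd h (abs_lt.2 ⟨h1, h2⟩)

theorem Cyc.rot {s : Set V} {m : ℕ} {p : ℤ → V} (C : Cyc G s m p) (r : ℤ) :
    Cyc G s m (fun i => p (i + r)) := by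
  refine ⟨C.h3, ?_, ?_, ?_⟩
  · intro i j; rw [C.inj]; ring_nf
  · intro i j; rw [C.adj]; ring_nf
  · rw [C.ran]; ext x; constructor
    · rintro ⟨i, rfl⟩; exact ⟨i - r, by simp⟩
    · rintro ⟨i, rfl⟩; exact ⟨i + r, rfl⟩

theorem Cyc.succ {s : Set V} {m : ℕ} {p : ℤ → V} (C : Cyc G s m p) (k : ℤ) :
    G.Adj (p k) (p (k + 1)) := by
  rw [C.adj]; left; ring_nf; exact dvd_zero _

/-- the arc from `a` to `b` -/
def arc {s : Set V} {m : ℕ} {p : ℤ → V} (C : Cyc G s m p) (a b : ℤ) : G.Subgraph where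
  verts := {x | ∃ k, a ≤ k ∧ k ≤ b ∧ x = p k}
  Adj x y := ∃ k, a ≤ k ∧ k < b ∧ ((x = p k ∧ y = p (k + 1)) ∨ (y = p k ∧ x = p (k + 1)))
  adj_sub := by
    rintro x y ⟨k, h1, h2, ⟨rfl, rfl⟩ | ⟨rfl, rfl⟩⟩
    · exact C.succ k
    · exact (C.succ k).symm
  edge_vert := by
    rintro x y ⟨k, h1, h2, ⟨rfl, rfl⟩ | ⟨rfl, rfl⟩⟩
    · exact ⟨k, h1, h2.le, rfl⟩
    · exact ⟨k + 1, by omega, by omega, rfl⟩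
  symm := ⟨by
    rintro x y ⟨k, h1, h2, h⟩
    exact ⟨k, h1, h2, h.symm⟩⟩

section
variable {s : Set V} {m : ℕ} {p : ℤ → V} (C : Cyc G s m p)

theorem Cyc.wit (C : Cyc G s m p) (a z : ℤ) : ∃ k, a ≤ k ∧ k < a + m ∧ p z = p k := by
  have h3 := C.h3
  have hm : (0 : ℤ) < m := by omega
  refine ⟨a + (z - a) % m, ?_, ?_, ?_⟩
  · have := Int.emod_nonneg (z - a) hm.ne'; omega
  · have := Int.emod_lt_of_pos (z - a) hm; omega
  · rw [C.inj]
    have := Int.dvd_sub_self_of_emod_eq (a := z - a) (b := m) rfl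
    have e : z - (a + (z - a) % m) = -((z - a) % m - (z - a)) := by ring
    rw [e, dvd_neg]; exact this

theorem Cyc.card (C : Cyc G s m p) : s.ncard = m := by
  have h3 := C.h3
  have e : s = p '' (Set.Ico (0 : ℤ) m) := by
    rw [C.ran]; ext x; constructor
    · rintro ⟨z, rfl⟩
      obtain ⟨k, h1, h2, h⟩ := C.wit 0 z
      exact ⟨k, ⟨h1, by omega⟩, h.symm⟩
    · rintro ⟨z, -, rfl⟩; exact ⟨z, rfl⟩
  rw [e, Set.InjOn.ncard_image]
  · rw [← Finset.coe_Ico, Set.ncard_coe_finset]; simp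
  · rintro i ⟨h1, h2⟩ j ⟨h4, h5⟩ h
    have := dvz ((C.inj i j).1 h) (by omega) (by omega)
    omega

theorem arc_verts_sub (a b : ℤ) : (arc C a b).verts ⊆ s := by
  rintro x ⟨k, -, -, rfl⟩; rw [C.ran]; exact ⟨k, rfl⟩

theorem arc_verts_full (a b : ℤ) (h : b + 1 = a + m) : (arc C a b).verts = s := by
  refine le_antisymm (arc_verts_sub C a b) ?_
  intro x hx
  obtain ⟨z, rfl⟩ : x ∈ Set.range p := C.ran ▸ hx
  obtain ⟨k, h1, h2, h⟩ := C.wit a z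
  exact ⟨k, h1, by omega, h⟩

theorem arc_adj_iff (a b k : ℤ) : (arc C a b).Adj (p k) (p (k + 1)) ↔
    ∃ t, a ≤ t ∧ t < b ∧ (m : ℤ) ∣ k - t := by
  have h3 := C.h3
  constructor
  · rintro ⟨t, h1, h2, ⟨e1, e2⟩ | ⟨e1, e2⟩⟩
    · exact ⟨t, h1, h2, (C.inj _ _).1 e1⟩
    · rw [C.inj] at e1 e2
      have := dvd_sub e1 e2
      have := dvz this (by omega) (by omega)
      omega
  · rintro ⟨t, h1, h2, h⟩
    refine ⟨t, h1, h2, Or.inl ⟨(C.inj _ _).2 h, (C.inj _ _).2 ?_⟩⟩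
    convert h using 1; ring

theorem arc_right (a b : ℤ) (hab : a ≤ b) : arc C a (b + 1) = addL (C.succ b) (arc C a b) := by
  ext x y
  · rw [addL_verts (C.succ b) (arc C a b) (show p b ∈ (arc C a b).verts from ⟨b, hab, le_rfl, rfl⟩)]
    constructor
    · rintro ⟨k, h1, h2, rfl⟩
      rcases h2.lt_or_eq with h | rfl
      · exact Or.inr ⟨k, h1, by omega, rfl⟩
      · exact Or.inl rfl
    · rintro (rfl | ⟨k, h1, h2, rfl⟩)
      · exact ⟨b + 1, by omega, le_rfl, rfl⟩
      · exact ⟨k, h1, by omega, rfl⟩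
  · rw [addL_adj]
    constructor
    · rintro ⟨k, h1, h2, h⟩
      rcases (Int.lt_add_one_iff.1 h2).lt_or_eq with h' | rfl
      · exact Or.inl ⟨k, h1, h', h⟩
      · right; grind
    · rintro (⟨k, h1, h2, h⟩ | h)
      · exact ⟨k, h1, by omega, h⟩
      · exact ⟨b, hab, by omega, by grind⟩

theorem arc_self (a : ℤ) : arc C a a = G.singletonSubgraph (p a) := by
  ext x y
  · simp [arc]
    constructor
    · rintro ⟨k, h1, h2, rfl⟩; congr 1; omega
    · rintro rfl; exact ⟨a, le_rfl, le_rfl, rfl⟩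
  · simp [arc]
    intro k h1 h2; omega

theorem arc_subtree [Finite V] (a : ℤ) (l : ℕ) (hl : l < m) : IsSubtree (arc C a (a + l)) := by
  induction l with
  | zero => simp [arc_self, singleton_subtree]
  | succ l ih =>
    have := ih (by omega)
    push_cast
    rw [← add_assoc, arc_right C _ _ (by omega)]
    refine addL_subtree _ _ ⟨a + l, by omega, le_rfl, rfl⟩ ?_ this
    rintro ⟨k, h1, h2, h⟩
    have := dvz ((C.inj _ _).1 h) (by omega) (by omega)
    omega

theorem arc_inj_aux {a b a' b' : ℤ} (h1 : a ≤ 0) (h2 : 0 ≤ b) (h1' : a' ≤ 0) (h2' : 0 ≤ b')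
    (hl : b - a < m) (hlt : b < b' ∨ a' < a) (e : arc C a b = arc C a' b') : False := by
  rcases hlt with hlt | hlt
  · have := (arc_adj_iff C a' b' b).2 ⟨b, by omega, by omega, by simp⟩
    rw [← e, arc_adj_iff] at this
    obtain ⟨t, h3, h4, h5⟩ := this
    have := dvz h5 (by omega) (by omega)
    omega
  · have := (arc_adj_iff C a' b' (a - 1)).2 ⟨a - 1, by omega, by omega, by simp⟩
    rw [← e, arc_adj_iff] at this
    obtain ⟨t, h3, h4, h5⟩ := this
    have := dvz h5 (by omega) (by omega)
    omega

theorem arc_inj {a b a' b' : ℤ} (h1 : a ≤ 0) (h2 : 0 ≤ b) (h1' : a' ≤ 0) (h2' : 0 ≤ b')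
    (hl : b - a < m) (hl' : b' - a' < m) (e : arc C a b = arc C a' b') : a = a' ∧ b = b' := by
  by_contra hne
  by_cases h : b < b' ∨ a' < a
  · exact arc_inj_aux C h1 h2 h1' h2' hl h e
  · exact arc_inj_aux C h1' h2' h1 h2 hl' (by omega) e.symm

theorem not_all [Finite V] {H : G.Subgraph} (hH : H ∈ S G s) (a b : ℤ) (hab : b + 1 = a + m)
    (hle : arc C a b ≤ H) (hadj : H.Adj (p b) (p (b + 1))) : False := by
  have h3 := C.h3
  have hsub : IsSubtree (arc C a b) := by
    have := arc_subtree C a (m - 1) (by omega)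
    convert this using 2
    omega
  have e1 := ((subtree_iff _).1 hsub).2
  have e2 := ((subtree_iff _).1 hH.1).2
  rw [arc_verts_full C a b hab] at e1
  have hle' : H.verts.ncard ≤ s.ncard := Set.ncard_le_ncard hH.2 (by
    rw [← arc_verts_full C a b hab]; exact Set.toFinite _)
  have hss : insert s(p b, p (b + 1)) (arc C a b).edgeSet ⊆ H.edgeSet := by
    refine Set.insert_subset (by simpa using hadj) (Subgraph.edgeSet_mono hle)
  have := Set.ncard_le_ncard hss (Set.toFinite _)
  rw [Set.ncard_insert_of_notMem] at this
  · omega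
  · rw [Subgraph.mem_edgeSet, arc_adj_iff]
    rintro ⟨t, h4, h5, h6⟩
    have := dvz h6 (by omega) (by omega)
    omega

theorem exists_arc [Finite V] {H : G.Subgraph} (hH : H ∈ S1 G s (p 0)) :
    ∃ i j : ℕ, i + j < m ∧ arc C (-j) i = H := by
  have h3 := C.h3
  classical
  let D := ((Finset.range m) ×ˢ (Finset.range m)).filter
    (fun q => q.1 + q.2 < m ∧ arc C (-(q.2 : ℤ)) q.1 ≤ H)
  have hmem : ∀ i j : ℕ, (i, j) ∈ D ↔ i + j < m ∧ arc C (-(j : ℤ)) i ≤ H := by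
    intro i j
    simp only [D, Finset.mem_filter, Finset.mem_product, Finset.mem_range]
    constructor
    · exact fun h => h.2
    · exact fun h => ⟨by omega, h⟩
  have hne : D.Nonempty := ⟨(0, 0), by
    rw [hmem]
    refine ⟨by omega, ?_⟩
    simp only [Nat.cast_zero, neg_zero, arc_self]
    simpa [singletonSubgraph_le_iff] using hH.2⟩
  obtain ⟨⟨i, j⟩, hij, hmax⟩ := Finset.exists_max_image D (fun q => q.1 + q.2) hne
  rw [hmem] at hij
  obtain ⟨hlt, hle⟩ := hij
  have hmax' : ∀ i' j' : ℕ, i' + j' < m → arc C (-(j' : ℤ)) i' ≤ H → i' + j' ≤ i + j :=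
    fun i' j' h1 h2 => hmax (i', j') ((hmem _ _).2 ⟨h1, h2⟩)
  have claim : ∀ x ∈ (arc C (-(j : ℤ)) i).verts, ∀ y, H.Adj x y → (arc C (-(j : ℤ)) i).Adj x y := by
    rintro x ⟨k, h1, h2, rfl⟩ y hy
    have hys : y ∈ s := hH.1.2 (H.edge_vert hy.symm)
    rw [C.ran] at hys
    obtain ⟨t, rfl⟩ := hys
    rcases (C.adj _ _).1 hy.adj_sub with h | h
    · have e : p t = p (k + 1) := by rw [C.inj]; convert h using 1; ring
      rw [e] at hy ⊢
      rcases h2.lt_or_eq with h2 | rfl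
      · exact ⟨k, h1, h2, Or.inl ⟨rfl, rfl⟩⟩
      exfalso
      by_cases hm : i + j + 1 < m
      · have := hmax' (i + 1) j (by omega) (by
          push_cast
          rw [arc_right C _ _ (by omega)]
          exact sup_le hle (subgraphOfAdj_le_of_adj _ hy))
        omega
      · exact not_all C hH.1 _ _ (by omega) hle hy
    · have e : p t = p (k - 1) := by
        rw [C.inj, ← Int.dvd_neg]; convert h using 1; ring
      rw [e] at hy ⊢
      rcases h1.lt_or_eq with h1 | h1
      · exact ⟨k - 1, by omega, by omega, Or.inr ⟨rfl, by rw [sub_add_cancel]⟩⟩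
      exfalso
      by_cases hm : i + j + 1 < m
      · have := hmax' i (j + 1) (by omega) (by
          constructor
          · rintro x ⟨t, h5, h6, rfl⟩
            rcases h5.lt_or_eq with h5 | h5
            · exact hle.1 ⟨t, by push_cast at h5; omega, h6, rfl⟩
            · have : t = k - 1 := by push_cast at h5; omega
              rw [this]; exact H.edge_vert hy.symm
          · rintro x y ⟨t, h5, h6, h7⟩
            rcases h5.lt_or_eq with h5 | h5
            · exact hle.2 ⟨t, by push_cast at h5; omega, h6, h7⟩
            · have : t = k - 1 := by push_cast at h5; omega
              have e2 : k - 1 + 1 = k := by ring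
              rw [this, e2] at h7
              rcases h7 with ⟨rfl, rfl⟩ | ⟨rfl, rfl⟩
              · exact hy.symm
              · exact hy)
        omega
      · have e1 : p (k - 1) = p i := by
          rw [C.inj, ← dvd_neg]; exact ⟨1, by omega⟩
        have e2 : p k = p (i + 1) := by
          rw [C.inj, ← dvd_neg]; exact ⟨1, by omega⟩
        rw [e1, e2] at hy
        exact not_all C hH.1 _ _ (by omega) hle hy.symm
  have hv : H.verts ⊆ (arc C (-(j : ℤ)) i).verts := by
    refine ((conn_iff H).1 hH.1.1.1).2 _ ⟨p 0, hH.2, 0, by omega, by omega, rfl⟩ ?_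
    intro x hx y hxy
    exact Subgraph.edge_vert _ (claim x hx y hxy).symm
  refine ⟨i, j, hlt, le_antisymm hle ⟨hv, ?_⟩⟩
  intro x y hxy
  exact claim x (hv (H.edge_vert hxy)) y hxy

theorem cyc_at [Finite V] (C : Cyc G s m p) : 2 * (S1 G s (p 0)).ncard = m * (m + 1) := by
  have h3 := C.h3
  let D : Finset (Σ _ : ℕ, ℕ) := (Finset.range m).sigma (fun i => Finset.range (m - i))
  have hmem : ∀ i j : ℕ, (⟨i, j⟩ : Σ _ : ℕ, ℕ) ∈ (D : Set (Σ _ : ℕ, ℕ)) ↔ i + j < m := by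
    intro i j
    simp [D]; omega
  have e : S1 G s (p 0) = (fun q : (Σ _ : ℕ, ℕ) => arc C (-(q.2 : ℤ)) q.1) '' D := by
    ext H
    constructor
    · intro h
      obtain ⟨i, j, h1, h2⟩ := exists_arc C h
      exact ⟨⟨i, j⟩, (hmem _ _).2 h1, h2⟩
    · rintro ⟨⟨i, j⟩, h1, rfl⟩
      rw [hmem] at h1
      refine ⟨⟨?_, arc_verts_sub C _ _⟩, 0, by simp, by simp, rfl⟩
      have := arc_subtree C (-(j : ℤ)) (i + j) h1
      convert this using 2
      push_cast; ring
  rw [e, Set.InjOn.ncard_image, Set.ncard_coe_finset, Finset.card_sigma]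
  · simp only [Finset.card_range]
    have : ∀ n : ℕ, 2 * ∑ i ∈ Finset.range n, (n - i) = n * (n + 1) := by
      intro n
      have h := Finset.sum_range_reflect (fun i => i + 1) n
      have h' : ∑ i ∈ Finset.range n, (n - i) = ∑ j ∈ Finset.range n, (n - 1 - j + 1) := by
        refine Finset.sum_congr rfl ?_
        intro i hi
        rw [Finset.mem_range] at hi
        omega
      rw [h', h, Finset.sum_add_distrib]
      have := Finset.sum_range_id_mul_two n
      simp only [Finset.sum_const, Finset.card_range, smul_eq_mul, mul_one]
      cases n with
      | zero => simp
      | succ n => simp at this ⊢; nlinarith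
    exact this m
  · rintro ⟨i, j⟩ h1 ⟨i', j'⟩ h2 h
    rw [hmem] at h1 h2
    have := arc_inj C (by simp) (by simp) (by simp) (by simp) (by simp; omega) (by simp; omega) h
    obtain ⟨rfl, rfl⟩ : i = i' ∧ j = j' := by simp at this; omega
    rfl

theorem path_TB [Finite V] (C : Cyc G s m p) (k : ℕ) (h1 : 1 ≤ k) (hk : k < m) : TB G (p '' Set.Icc 1 (k : ℤ)) := by
  induction k, h1 using Nat.le_induction with
  | base => simpa using TB.single (G := G) (p 1)
  | succ k h1 ih =>
    have := ih (by omega)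
    have L : Leaf G (p '' Set.Icc 1 (k : ℤ)) (p k) (p (k + 1)) := by
      refine ⟨?_, ⟨k, ⟨by omega, le_rfl⟩, rfl⟩, C.succ _, ?_⟩
      · rintro ⟨t, ⟨h4, h5⟩, h⟩
        have := dvz ((C.inj _ _).1 h) (by omega) (by omega)
        omega
      · rintro _ ⟨t, ⟨h4, h5⟩, rfl⟩ h
        rcases (C.adj _ _).1 h with h | h
        · have := dvz h (by omega) (by omega)
          omega
        · have := dvz h (by omega) (by omega)
          congr 1; omega
    have h2 := TB.step L this
    convert h2 using 1
    rw [← Set.image_insert_eq]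
    congr 1
    ext t; simp; omega

theorem cyc_UB [Finite V] (C : Cyc G s m p) : UB G s := by
  have h3 := C.h3
  have hcard := C.card
  have hat : ∀ x ∈ s, 2 * (S1 G s x).ncard = m * (m + 1) := by
    intro x hx
    rw [C.ran] at hx
    obtain ⟨r, rfl⟩ := hx
    have := cyc_at (C.rot r)
    simpa using this
  have hP := path_TB C (m - 1) (by omega) (by omega)
  set P := p '' Set.Icc 1 ((m - 1 : ℕ) : ℤ) with hPd
  have h0 : p 0 ∈ s := by rw [C.ran]; exact ⟨0, rfl⟩
  have h0P : p 0 ∉ P := by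
    rintro ⟨t, ⟨h4, h5⟩, h⟩
    have := dvz ((C.inj _ _).1 h) (by omega) (by omega)
    omega
  have hs : s = insert (p 0) P := by
    apply le_antisymm
    · rw [C.ran]
      rintro _ ⟨z, rfl⟩
      obtain ⟨k, h1, h2, h⟩ := C.wit 0 z
      rw [h]
      rcases h1.lt_or_eq with h1 | rfl
      · exact Or.inr ⟨k, ⟨by omega, by omega⟩, rfl⟩
      · exact Or.inl rfl
    · rintro _ (rfl | ⟨t, -, rfl⟩)
      · exact h0
      · rw [C.ran]; exact ⟨t, rfl⟩
  have hPc : P.ncard + 1 = m := by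
    rw [← hcard, hs, Set.ncard_insert_of_notMem h0P]
  have htot : (S G s).ncard = (S1 G s (p 0)).ncard + (S G P).ncard := by
    rw [← Set.ncard_union_eq]
    · congr 1
      ext H
      constructor
      · intro h
        by_cases hv : p 0 ∈ H.verts
        · exact Or.inl ⟨h, hv⟩
        · right
          refine ⟨h.1, fun x hx => ?_⟩
          have := h.2 hx
          rw [hs] at this
          exact this.resolve_left (by rintro rfl; exact hv hx)
      · rintro (h | h)
        · exact h.1
        · exact ⟨h.1, h.2.trans (by rw [hs]; exact Set.subset_insert _ _)⟩
    · rw [Set.disjoint_left]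
      intro H h1 h2
      exact h0P (h2.2 h1.2)
  have hp1 : ∀ k : ℕ, 3 ≤ k → 2 * (k * (k + 1)) ≤ 3 * 2 ^ k := by
    intro k hk
    induction k, hk using Nat.le_induction with
    | base => norm_num
    | succ k hk ih => rw [pow_succ]; nlinarith
  have hp2 : ∀ k : ℕ, 3 ≤ k → k * (k + 1) ≤ 2 ^ k + 4 := by
    intro k hk
    rcases hk.lt_or_eq with hk | rfl
    · induction k, hk using Nat.le_induction with
      | base => norm_num
      | succ k hk ih => rw [pow_succ]; have := ih (by omega); nlinarith
    · norm_num
  have a0 := hat _ h0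
  refine ⟨?_, ?_, ?_, ?_, ?_⟩
  · have := arc_subtree C 0 (m - 1) (by omega)
    exact ⟨_, this, arc_verts_full C _ _ (by omega)⟩
  · intro x hx
    have := hat x hx
    rw [hcard]
    nlinarith
  · intro x hx
    have := hat x hx
    have := hp1 m h3
    rw [hcard]
    omega
  · have h1 := hP.lo
    rw [htot, hcard]
    obtain ⟨q, rfl⟩ : ∃ q, m = q + 3 := ⟨m - 3, by omega⟩
    have : P.ncard = q + 2 := by omega
    rw [this] at h1
    rcases q with _ | q
    · omega
    · nlinarith
  · have h1 := hP.hi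
    have := hp2 m h3
    have e : 2 ^ m = 2 * 2 ^ P.ncard := by rw [← hPc]; ring
    rw [htot, hcard]
    omega

end

/-- edges inside `s` -/
def E (G : SimpleGraph V) (s : Set V) : Set (Sym2 V) := {e | e ∈ G.edgeSet ∧ ∀ x ∈ e, x ∈ s}

theorem mem_E {s : Set V} {x y : V} : s(x, y) ∈ E G s ↔ G.Adj x y ∧ x ∈ s ∧ y ∈ s := by
  simp [E]

theorem E_mono {s t : Set V} (h : s ⊆ t) : E G s ⊆ E G t :=
  fun _ he => ⟨he.1, fun x hx => h (he.2 x hx)⟩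

theorem E_one [Finite V] {s : Set V} {u v : V} (hu : u ∈ s) (hv : v ∉ s) (h : G.Adj u v) :
    (E G s).ncard + 1 ≤ (E G (insert v s)).ncard := by
  rw [← Set.ncard_insert_of_notMem (a := s(u, v)) (s := E G s) (by
    rw [mem_E]; exact fun h => hv h.2.2)]
  refine Set.ncard_le_ncard (Set.insert_subset ?_ (E_mono (Set.subset_insert _ _)))
  rw [mem_E]; exact ⟨h, Or.inr hu, Or.inl rfl⟩

theorem E_two [Finite V] {s : Set V} {u w v : V} (hu : u ∈ s) (hw : w ∈ s) (hv : v ∉ s)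
    (h : G.Adj u v) (h' : G.Adj w v) (hne : w ≠ u) :
    (E G s).ncard + 2 ≤ (E G (insert v s)).ncard := by
  have h1 : s(u, v) ∉ E G s := by rw [mem_E]; exact fun h => hv h.2.2
  have h2 : s(w, v) ∉ insert s(u, v) (E G s) := by
    rw [Set.mem_insert_iff, mem_E]
    rintro (h3 | h3)
    · have := h.ne
      simp at h3; grind
    · exact hv h3.2.2
  have e : (E G s).ncard + 2 = (insert s(w, v) (insert s(u, v) (E G s))).ncard := by
    rw [Set.ncard_insert_of_notMem h2, Set.ncard_insert_of_notMem h1]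
  rw [e]
  refine Set.ncard_le_ncard (Set.insert_subset ?_ (Set.insert_subset ?_
    (E_mono (Set.subset_insert _ _))))
  · rw [mem_E]; exact ⟨h', Or.inr hw, Or.inl rfl⟩
  · rw [mem_E]; exact ⟨h, Or.inr hu, Or.inl rfl⟩

theorem exists_next (hc : G.Connected) {s : Set V} (hs : s.Nonempty) (hs' : s ≠ Set.univ) :
    ∃ u ∈ s, ∃ v, v ∉ s ∧ G.Adj u v := by
  obtain ⟨x, hx⟩ := hs
  obtain ⟨y, hy⟩ := (Set.ne_univ_iff_exists_notMem s).1 hs'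
  obtain ⟨w⟩ := hc.preconnected x y
  obtain ⟨d, -, h1, h2⟩ := w.exists_boundary_dart s hx hy
  exact ⟨_, h1, _, h2, d.adj⟩

theorem E_claim [Finite V] (hc : G.Connected) (k : ℕ) : ∀ s : Set V, s.Nonempty →
    s.ncard + k = Nat.card V → (E G s).ncard + k ≤ G.edgeSet.ncard := by
  induction k with
  | zero =>
    intro s _ _
    exact Set.ncard_le_ncard (fun e he => he.1)
  | succ k ih =>
    intro s hs hk
    have hne : s ≠ Set.univ := by
      rintro rfl
      rw [Set.ncard_univ] at hk; omega
    obtain ⟨u, hu, v, hv, h⟩ := exists_next hc hs hne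
    have h1 := E_one hu hv h
    have h2 := ih (insert v s) (Set.insert_nonempty _ _) (by
      rw [Set.ncard_insert_of_notMem hv]; omega)
    omega

theorem E_le [Finite V] (hc : G.Connected) (he : G.edgeSet.ncard = Nat.card V) (s : Set V)
    (hs : s.Nonempty) : (E G s).ncard ≤ s.ncard := by
  have h1 : s.ncard ≤ Nat.card V := by
    rw [← Set.ncard_univ]; exact Set.ncard_le_ncard (Set.subset_univ _)
  have := E_claim hc (Nat.card V - s.ncard) s hs (by omega)
  omega

theorem grow [Finite V] (hc : G.Connected) (he : G.edgeSet.ncard = Nat.card V) (k : ℕ) :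
    ∀ s : Set V, 3 ≤ s.ncard → s.ncard + k = Nat.card V → (E G s).ncard = s.ncard → UB G s →
      UB G Set.univ := by
  induction k with
  | zero =>
    intro s _ h2 _ h
    rwa [Set.eq_univ_iff_ncard s |>.2 (by omega)] at h
  | succ k ih =>
    intro s h3 hk hE h
    have hne : s ≠ Set.univ := by
      rintro rfl
      rw [Set.ncard_univ] at hk; omega
    have hs : s.Nonempty := (Set.ncard_pos).1 (by omega)
    obtain ⟨u, hu, v, hv, hadj⟩ := exists_next hc hs hne
    have h1 := E_one hu hv hadj
    have h2 := E_le hc he (insert v s) (Set.insert_nonempty _ _)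
    have hcd := Set.ncard_insert_of_notMem hv
    have L : Leaf G s u v := ⟨hv, hu, hadj, by
      intro w hw hvw
      by_contra hne
      have := E_two hu hw hv hadj hvw.symm hne
      omega⟩
    exact ih (insert v s) (by omega) (by omega) (by omega) (h.step L h3)

theorem exists_cyc [Finite V] (hc : G.Connected) (he : G.edgeSet.ncard = Nat.card V) :
    ∃ s m p, Cyc G s m p ∧ (E G s).ncard = s.ncard := by
  have hna : ¬ G.IsAcyclic := by
    intro h
    have : G.IsTree := ⟨hc, h⟩
    have h1 := (isTree_iff_connected_and_card.1 this).2
    rw [Nat.card_coe_set_eq] at h1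
    omega
  unfold IsAcyclic at hna
  push Not at hna
  obtain ⟨x, c, hcyc⟩ := hna
  have h3 := hcyc.three_le_length
  set m := c.length with hm
  have hm0 : (0 : ℤ) < m := by omega
  set p : ℤ → V := fun i => c.getVert (i % m).toNat with hp
  have hpn : ∀ t : ℕ, t < m → p t = c.getVert t := by
    intro t ht
    simp only [hp]
    rw [Int.emod_eq_of_lt (by omega) (by omega)]
    simp
  have hinj : ∀ i j, p i = p j ↔ (m : ℤ) ∣ i - j := by
    intro i j
    have i1 := Int.emod_nonneg i hm0.ne'
    have i2 := Int.emod_lt_of_pos i hm0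
    have j1 := Int.emod_nonneg j hm0.ne'
    have j2 := Int.emod_lt_of_pos j hm0
    rw [Int.dvd_iff_emod_eq_zero, ← Int.emod_eq_emod_iff_emod_sub_eq_zero]
    constructor
    · intro h
      have := hcyc.getVert_injOn' (show (i % m).toNat ≤ c.length - 1 by omega)
        (show (j % m).toNat ≤ c.length - 1 by omega) h
      omega
    · intro h
      simp only [hp, h]
  have hpm : p m = c.getVert m := by
    simp [hp, hm]
  have hpn1 : ∀ t : ℕ, t < m → p (t + 1) = c.getVert (t + 1) := by
    intro t ht
    rcases Nat.lt_or_ge (t + 1) m with h | h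
    · exact_mod_cast hpn (t + 1) h
    · have e : t + 1 = m := by omega
      rw [e, ← hpm, ← e]
      push_cast
      rfl
  have hred : ∀ i, ∃ t : ℕ, t < m ∧ (m : ℤ) ∣ i - t := by
    intro i
    have i1 := Int.emod_nonneg i hm0.ne'
    have i2 := Int.emod_lt_of_pos i hm0
    refine ⟨(i % m).toNat, by omega, ?_⟩
    rw [Int.toNat_of_nonneg i1]
    exact Int.dvd_self_sub_emod
  have hsucc : ∀ i, G.Adj (p i) (p (i + 1)) := by
    intro i
    obtain ⟨t, ht, hd⟩ := hred i
    rw [(hinj i t).2 hd, (hinj (i + 1) (t + 1)).2 (by convert hd using 1; ring), hpn t ht,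
      hpn1 t ht]
    exact c.adj_getVert_succ (by omega)
  set s := Set.range p with hs
  have hsc : s.ncard ≤ m := by
    have : s ⊆ c.getVert '' (Finset.range m : Set ℕ) := by
      rintro _ ⟨i, rfl⟩
      obtain ⟨t, ht, hd⟩ := hred i
      exact ⟨t, by simpa using ht, by rw [(hinj i t).2 hd, hpn t ht]⟩
    refine (Set.ncard_le_ncard this).trans ((Set.ncard_image_le).trans ?_)
    rw [Set.ncard_coe_finset]; simp
  have hE1 := E_le hc he s ⟨p 0, 0, rfl⟩
  classical
  have hsub : (c.edges.toFinset : Set (Sym2 V)) ⊆ E G s := by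
    intro e hmem
    induction e with | _ a b => ?_
    have hmem : s(a, b) ∈ c.edges := by simpa using hmem
    obtain ⟨t, ht, h⟩ := c.mk_mem_edges_iff_exists.1 hmem
    rw [← h, ← hpn t ht, ← hpn1 t ht, mem_E]
    exact ⟨hsucc t, ⟨_, rfl⟩, ⟨_, rfl⟩⟩
  have hce : (c.edges.toFinset : Set (Sym2 V)).ncard = m := by
    rw [Set.ncard_coe_finset, List.toFinset_card_of_nodup hcyc.isTrail.edges_nodup]
    simp [hm]
  have hge := Set.ncard_le_ncard hsub
  have hEeq := Set.eq_of_subset_of_ncard_le hsub (by omega)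
  refine ⟨s, m, p, ⟨h3, hinj, ?_, rfl⟩, by omega⟩
  intro i j
  constructor
  · intro h
    have : s(p i, p j) ∈ E G s := mem_E.2 ⟨h, ⟨i, rfl⟩, ⟨j, rfl⟩⟩
    rw [← hEeq] at this
    have : s(p i, p j) ∈ c.edges := by simpa using this
    obtain ⟨t, ht, h⟩ := c.mk_mem_edges_iff_exists.1 this
    rw [← hpn t ht, ← hpn1 t ht, Sym2.eq_iff, hinj, hinj, hinj, hinj] at h
    rcases h with ⟨h1, h2⟩ | ⟨h1, h2⟩
    · left
      have := Int.dvd_sub h1 h2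
      convert this using 1; ring
    · right
      have := Int.dvd_sub h1 h2
      convert this using 1; ring
  · rintro (h | h)
    · rw [(hinj j (i + 1)).2 (by convert h using 1; ring)]
      exact hsucc i
    · rw [(hinj i (j + 1)).2 (by convert h using 1; ring)]
      exact (hsucc j).symm

theorem uni_UB [Finite V] (hc : G.Connected) (he : G.edgeSet.ncard = Nat.card V) :
    UB G Set.univ := by
  obtain ⟨s, m, p, C, hE⟩ := exists_cyc hc he
  have h3 := C.h3
  have h4 := C.card
  have h1 : s.ncard ≤ Nat.card V := by
    rw [← Set.ncard_univ]; exact Set.ncard_le_ncard (Set.subset_univ _)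
  exact grow hc he (Nat.card V - s.ncard) s (by omega) (by omega) hE (cyc_UB C)

theorem nT_eq (G : SimpleGraph V) : nT G = 1 + (S G Set.univ).ncard := by
  unfold nT
  rw [← Nat.card_coe_set_eq]
  congr 1
  have : S G Set.univ = {H | IsSubtree H} := by ext H; simp [S]
  rw [this]
  rfl

/-- initial segment -/
def Seg (n k : ℕ) : Set (Fin n) := {i | i.val < k}

theorem Seg_succ {n k : ℕ} (hk : k < n) : Seg n (k + 1) = insert ⟨k, hk⟩ (Seg n k) := by
  ext i; simp [Seg, Fin.ext_iff]; omega

theorem Seg_univ (n : ℕ) : Seg n n = Set.univ := by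
  ext i; simp [Seg]

/-- triangle parametrisation -/
def tri (n : ℕ) (hn : 3 ≤ n) (i : ℤ) : Fin n := ⟨(i % 3).toNat, by omega⟩

theorem tri_cyc {n : ℕ} (hn : 3 ≤ n) (G : SimpleGraph (Fin n))
    (h : ∀ i j : Fin n, i.val < 3 → j.val < 3 → (G.Adj i j ↔ i ≠ j)) :
    Cyc G (Seg n 3) 3 (tri n hn) := by
  refine ⟨le_rfl, ?_, ?_, ?_⟩
  · intro i j
    simp only [tri, Fin.mk.injEq]
    push_cast
    omega
  · intro i j
    rw [h _ _ (by simp only [tri]; omega) (by simp only [tri]; omega)]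
    simp only [tri, ne_eq, Fin.mk.injEq]
    push_cast
    omega
  · ext i
    simp only [Seg, tri, Set.mem_ofPred_eq, Set.mem_range, Fin.ext_iff]
    constructor
    · intro hi; exact ⟨i.val, by omega⟩
    · rintro ⟨y, hy⟩; omega

theorem tri_vals {n : ℕ} (hn : 3 ≤ n) (G : SimpleGraph (Fin n))
    (h : ∀ i j : Fin n, i.val < 3 → j.val < 3 → (G.Adj i j ↔ i ≠ j)) :
    (∀ x ∈ Seg n 3, (S1 G (Seg n 3) x).ncard = 6) ∧ (S G (Seg n 3)).ncard = 9 := by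
  have C := tri_cyc hn G h
  have hc := C.card
  have U := cyc_UB C
  constructor
  · intro x hx
    have h1 := U.at_lo x hx
    have h2 := U.at_hi x hx
    rw [hc] at h1 h2
    omega
  · have h1 := U.lo
    have h2 := U.hi
    rw [hc] at h1 h2
    omega

theorem UP_val (n : ℕ) (hn : 3 ≤ n) (k : ℕ) (hk : 3 ≤ k) : ∀ hkn : k ≤ n,
    (S1 (UPn n) (Seg n k) ⟨k - 1, by omega⟩).ncard = k + 3 ∧
    2 * (S (UPn n) (Seg n k)).ncard + 12 = k ^ 2 + 7 * k := by
  induction k, hk using Nat.le_induction with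
  | base =>
    intro _
    obtain ⟨h1, h2⟩ := tri_vals hn (UPn n) (by
      intro i j hi hj
      simp only [UPn, UPnl, fromRel_adj, ne_eq, Fin.ext_iff]
      omega)
    exact ⟨h1 _ (by simp [Seg]), by omega⟩
  | succ k hk ih =>
    intro hkn
    obtain ⟨h1, h2⟩ := ih (by omega)
    have L : Leaf (UPn n) (Seg n k) ⟨k - 1, by omega⟩ ⟨k, by omega⟩ := by
      refine ⟨by simp [Seg], by simp [Seg]; omega, ?_, ?_⟩
      · simp only [UPn, UPnl, fromRel_adj, ne_eq, Fin.ext_iff]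
        omega
      · intro w hw
        simp only [Seg, Set.mem_ofPred_eq] at hw
        simp only [UPn, UPnl, fromRel_adj, ne_eq, Fin.ext_iff]
        omega
    have e1 := leaf_at_v L
    have e2 := leaf_tot L
    rw [Seg_succ (by omega : k < n)]
    simp only [Nat.add_sub_cancel]
    rw [e1, e2, h1]
    exact ⟨by omega, by nlinarith⟩

theorem US_val (n : ℕ) (hn : 3 ≤ n) (k : ℕ) (hk : 3 ≤ k) : ∀ _ : k ≤ n,
    4 * (S1 (USn n) (Seg n k) ⟨0, by omega⟩).ncard = 3 * 2 ^ k ∧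
    4 * (S (USn n) (Seg n k)).ncard = 3 * 2 ^ k + 4 * k := by
  induction k, hk using Nat.le_induction with
  | base =>
    intro _
    obtain ⟨h1, h2⟩ := tri_vals hn (USn n) (by
      intro i j hi hj
      simp only [USn, USnl, fromRel_adj, ne_eq, Fin.ext_iff]
      omega)
    rw [h1 _ (by simp [Seg]), h2]
    norm_num
  | succ k hk ih =>
    intro hkn
    obtain ⟨h1, h2⟩ := ih (by omega)
    have L : Leaf (USn n) (Seg n k) ⟨0, by omega⟩ ⟨k, by omega⟩ := by
      refine ⟨by simp [Seg], by simp [Seg]; omega, ?_, ?_⟩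
      · simp only [USn, USnl, fromRel_adj, ne_eq, Fin.ext_iff]
        exact ⟨by omega, Or.inl (Or.inr (Or.inr ⟨trivial, hk⟩))⟩
      · intro w hw
        simp only [Seg, Set.mem_ofPred_eq] at hw
        simp only [USn, USnl, fromRel_adj, ne_eq, Fin.ext_iff]
        omega
    have e1 := leaf_at_u L
    have e2 := leaf_tot L
    rw [Seg_succ (by omega : k < n), e1, e2, pow_succ]
    omega

end UniX

/-- for every `n`-vertex unicyclic graph `G` (`n ≥ 3`),
`n(US_n) ≥ n(G) ≥ n(UP_n)`. -/
theorem nT_unicyclic_extremal (n : ℕ) (hn : 3 ≤ n) (G : SimpleGraph (Fin n))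
    (hconn : G.Connected) (hedges : G.edgeSet.ncard = n) :
    nT (UPn n) ≤ nT G ∧ nT G ≤ nT (USn n) := by

  have U := UniX.uni_UB hconn (by rw [hedges, Nat.card_eq_fintype_card, Fintype.card_fin])
  have hc : (Set.univ : Set (Fin n)).ncard = n := by
    rw [Set.ncard_univ, Nat.card_eq_fintype_card, Fintype.card_fin]
  have h1 := (UniX.UP_val n hn n hn le_rfl).2
  have h2 := (UniX.US_val n hn n hn le_rfl).2
  have h3 := U.lo
  have h4 := U.hi
  rw [hc] at h3 h4
  rw [UniX.Seg_univ] at h1 h2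
  rw [UniX.nT_eq, UniX.nT_eq, UniX.nT_eq]
  omega
end

section
/- For any integer n ≥ 4, n(US_n) = 2^{n-1} + 2^{n-2} + n + 1 and this is at least n^2 + 1 = n(C_n). -/
open SimpleGraph

lemma acyclic_of_parent {W : Type*} (G : SimpleGraph W) (f : W → ℕ)
    (h : ∀ v u w, G.Adj v u → G.Adj v w → f u ≤ f v → f w ≤ f v → u = w) : G.IsAcyclic := by
  classical
  intro v c hc
  obtain ⟨x, hx, hmax⟩ := c.support.toFinset.exists_max_image f ⟨v, by simp⟩
  simp only [List.mem_toFinset] at hx hmax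
  have hc' := hc.rotate hx
  have hsup : ∀ y, y ∈ (c.rotate x hx).support → f y ≤ f x := by
    intro y hy
    exact hmax y ((SimpleGraph.Walk.mem_support_rotate_iff ..).1 hy)
  apply hc'.snd_ne_penultimate
  exact h x _ _ (SimpleGraph.Walk.adj_snd hc'.not_nil)
    (SimpleGraph.Walk.adj_penultimate hc'.not_nil).symm
    (hsup _ (SimpleGraph.Walk.getVert_mem_support _ _))
    (hsup _ (SimpleGraph.Walk.getVert_mem_support _ _))

lemma isSubtree_of {V : Type*} {G : SimpleGraph V} (H : G.Subgraph) (r : V) (hr : r ∈ H.verts)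
    (f : V → ℕ)
    (hpar : ∀ v ∈ H.verts, v ≠ r → ∃ u, H.Adj v u ∧ f u < f v)
    (huniq : ∀ v u w, H.Adj v u → H.Adj v w → f u ≤ f v → f w ≤ f v → u = w) :
    IsSubtree H := by
  refine ⟨?_, ?_⟩
  · have key : ∀ k, ∀ v : H.verts, f v = k → H.coe.Reachable ⟨r, hr⟩ v := by
      intro k
      induction k using Nat.strong_induction_on with
      | _ k ih =>
        intro v hv
        by_cases hvr : v.1 = r
        · have : v = ⟨r, hr⟩ := Subtype.ext hvr
          rw [this]
        · obtain ⟨u, hu, hlt⟩ := hpar v v.2 hvr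
          have h1 := ih (f u) (by omega) ⟨u, H.edge_vert hu.symm⟩ rfl
          refine h1.trans (SimpleGraph.Adj.reachable ?_)
          simpa using hu.symm
    refine ⟨(SimpleGraph.connected_iff_exists_forall_reachable _).2 ⟨⟨r, hr⟩, fun w => key _ w rfl⟩⟩
  · apply acyclic_of_parent _ (fun v => f v.1)
    intro v u w h1 h2 h3 h4
    exact Subtype.ext (huniq v u w (by simpa using h1) (by simpa using h2) h3 h4)

lemma conn_closed {V : Type*} {G : SimpleGraph V} {H : G.Subgraph} (hH : IsSubtree H)
    (S : V → Prop) (hS : ∀ x y, H.Adj x y → S x → S y) {a b : V} (ha : a ∈ H.verts)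
    (hb : b ∈ H.verts) (haS : S a) : S b := by
  have : H.coe.Reachable ⟨a, ha⟩ ⟨b, hb⟩ := hH.1.coe.preconnected _ _
  obtain ⟨p⟩ := this
  have key : ∀ (x y : H.verts), H.coe.Walk x y → S x → S y := by
    intro x y p
    induction p with
    | nil => exact id
    | cons h _ ih => exact fun hx => ih (hS _ _ (by simpa using h) hx)
  exact key _ _ p haS

lemma bridge_cut {V : Type*} {G : SimpleGraph V} {H : G.Subgraph} (hH : IsSubtree H)
    {a b : V} (hab : H.Adj a b) :
    ∃ S : V → Prop, S a ∧ ¬ S b ∧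
      ∀ x y, H.Adj x y → ¬ (x = a ∧ y = b) → ¬ (x = b ∧ y = a) → (S x → S y) := by
  have ha := H.edge_vert hab
  have hb := H.edge_vert hab.symm
  have hbr := SimpleGraph.isAcyclic_iff_forall_adj_isBridge.1 hH.2
    (v := ⟨a, ha⟩) (w := ⟨b, hb⟩) (by simpa using hab)
  rw [SimpleGraph.isBridge_iff] at hbr
  refine ⟨fun x => ∃ hx : x ∈ H.verts, (H.coe.deleteEdges
    {s((⟨a, ha⟩ : H.verts), ⟨b, hb⟩)}).Reachable ⟨a, ha⟩ ⟨x, hx⟩, ⟨ha, by rfl⟩, ?_, ?_⟩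
  · rintro ⟨_, h⟩
    exact hbr h
  · rintro x y hxy h1 h2 ⟨hx, h⟩
    refine ⟨H.edge_vert hxy.symm, h.trans (SimpleGraph.Adj.reachable ?_)⟩
    simp only [SimpleGraph.deleteEdges_adj, Set.mem_singleton_iff,
      Sym2.eq_iff, Subtype.mk.injEq]
    refine ⟨by simpa using hxy, ?_⟩
    tauto

/-- cyclic offset of `v` from `i`. -/
def offs {n : ℕ} (i v : Fin n) : ℕ := if i.val ≤ v.val then v.val - i.val else v.val + n - i.val

lemma offs_lt {n : ℕ} (i v : Fin n) : offs i v < n := by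
  unfold offs; split <;> omega

lemma offs_self {n : ℕ} (i : Fin n) : offs i i = 0 := by
  unfold offs; simp

lemma offs_inj {n : ℕ} (i : Fin n) {u v : Fin n} (h : offs i u = offs i v) : u = v := by
  ext
  unfold offs at h; split at h <;> split at h <;> omega

lemma offs_surj {n : ℕ} (i : Fin n) (j : ℕ) (hj : j < n) : ∃ v, offs i v = j := by
  by_cases h : i.val + j < n
  · refine ⟨⟨i.val + j, h⟩, ?_⟩
    unfold offs; simp
  · refine ⟨⟨i.val + j - n, by omega⟩, ?_⟩
    unfold offs; simp only; split <;> omega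

lemma cycG_adj {n : ℕ} (hn : 4 ≤ n) (i u v : Fin n) : (cycG n).Adj u v ↔
    (offs i v = offs i u + 1 ∨ offs i u = offs i v + 1 ∨ (offs i u = 0 ∧ offs i v + 1 = n) ∨
      (offs i v = 0 ∧ offs i u + 1 = n)) := by
  unfold cycG
  rw [SimpleGraph.fromRel_adj, Ne, Fin.ext_iff]
  unfold offs
  split <;> split <;> omega

/-- arc in the cycle starting at `i` with `k+1` vertices -/
def arc {n : ℕ} (hn : 4 ≤ n) (i k : Fin n) : (cycG n).Subgraph where
  verts := {v | offs i v ≤ k.val}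
  Adj u v := (offs i v = offs i u + 1 ∧ offs i v ≤ k.val) ∨
    (offs i u = offs i v + 1 ∧ offs i u ≤ k.val)
  adj_sub := by
    intro u v h
    rw [cycG_adj hn i]
    omega
  edge_vert := by
    intro u v h
    simp only [Set.mem_ofPred_eq]
    omega
  symm := ⟨by
    intro u v h
    tauto⟩

lemma arc_subtree {n : ℕ} (hn : 4 ≤ n) (i k : Fin n) : IsSubtree (arc hn i k) := by
  apply isSubtree_of _ i (by simp [arc, offs_self]) (offs i)
  · intro v hv hne
    have hv' : offs i v ≤ k.val := hv
    have h0 : offs i v ≠ 0 := fun h => hne (offs_inj i (by rw [h, offs_self]))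
    obtain ⟨u, hu⟩ := offs_surj i (offs i v - 1) (by have := offs_lt i v; omega)
    refine ⟨u, ?_, by omega⟩
    simp only [arc]
    omega
  · intro v u w h1 h2 h3 h4
    simp only [arc] at h1 h2
    apply offs_inj i
    omega

lemma arc_inj {n : ℕ} (hn : 4 ≤ n) (i k i' k' : Fin n) (h : arc hn i k = arc hn i' k') :
    i = i' ∧ k = k' := by
  have hv : ∀ v, offs i v ≤ k.val ↔ offs i' v ≤ k'.val := by
    intro v
    have := congrArg (fun H => v ∈ H.verts) h
    simpa [arc] using this
  have ha : ∀ u v, (arc hn i k).Adj u v ↔ (arc hn i' k').Adj u v := by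
    intro u v; rw [h]
  simp only [arc] at ha
  have hi : i = i' := by
    by_contra hne
    have h1 := (hv i).1 (by rw [offs_self]; omega)
    have h0 : offs i' i ≠ 0 := fun h => hne (offs_inj i' (by rw [h, offs_self]))
    obtain ⟨p, hp⟩ := offs_surj i' (offs i' i - 1) (by have := offs_lt i' i; omega)
    have h2 := (ha p i).2 (by omega)
    rw [offs_self] at h2
    have h3 : offs i p = 1 := by omega
    have h4 := (cycG_adj hn i' p i).1 ((cycG_adj hn i p i).2 (by rw [offs_self]; omega))
    -- the two arcs are oriented the same way
    unfold offs at hp h3 h0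
    split at hp <;> split at hp <;> split at h3 <;> omega
  subst hi
  refine ⟨rfl, ?_⟩
  obtain ⟨v, hv1⟩ := offs_surj i k.val k.2
  obtain ⟨w, hw⟩ := offs_surj i k'.val k'.2
  have := (hv v).1 (by omega)
  have := (hv w).2 (by omega)
  ext; omega

lemma subtree_arc {n : ℕ} (hn : 4 ≤ n) (H : (cycG n).Subgraph) (hH : IsSubtree H) :
    ∃ i k, arc hn i k = H := by
  classical
  obtain ⟨r, hr⟩ := hH.1.nonempty
  -- a start vertex
  have hstart : ∃ i ∈ H.verts, ∀ u, offs i u + 1 = n → ¬ H.Adj u i := by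
    by_contra! hcon
    have hall : ∀ j, ∀ v, offs v r = j → v ∈ H.verts := by
      intro j
      induction j with
      | zero =>
        intro v hv
        have : v = r := offs_inj v (by rw [hv, offs_self])
        rwa [this]
      | succ j ih =>
        intro v hv
        obtain ⟨w, hw⟩ := offs_surj v 1 (by omega)
        have hwH := ih w (by unfold offs at *; split at hw <;> split at hv <;> split <;> omega)
        obtain ⟨u, hu, huw⟩ := hcon w hwH
        have : u = v := by
          ext; unfold offs at hu hw; split at hu <;> split at hw <;> omega
        rw [← this]; exact H.edge_vert huw
    have hadj : ∀ v, ∀ u, offs v u + 1 = n → H.Adj u v := by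
      intro v u hu
      obtain ⟨u', h1, h2⟩ := hcon v (hall _ v rfl)
      rwa [← offs_inj v (show offs v u' = offs v u by omega)]
    obtain ⟨l, hl⟩ := offs_surj r (n - 1) (by omega)
    obtain ⟨S, h1, h2, h3⟩ := bridge_cut hH (hadj r l (by omega)).symm
    have : ∀ j, ∀ v, offs r v = j → S v := by
      intro j
      induction j with
      | zero =>
        intro v hv
        rwa [← offs_inj r (show offs r r = offs r v by rw [hv, offs_self])]
      | succ j ih =>
        intro v hv
        obtain ⟨w, hw⟩ := offs_surj r j (by have := offs_lt r v; omega)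
        have hwv : offs v w + 1 = n := by
          unfold offs at *; split at hw <;> split at hv <;> split <;> omega
        have hlt := offs_lt r v
        have hrr := offs_self r
        refine h3 w v (hadj v w hwv) ?_ ?_ (ih w hw)
        · rintro ⟨rfl, rfl⟩
          omega
        · rintro ⟨rfl, rfl⟩
          omega
    exact h2 (this _ l rfl)
  obtain ⟨i, hi, hst⟩ := hstart
  obtain ⟨m, hm, hmax⟩ := (Finset.univ.filter (fun v => v ∈ H.verts)).exists_max_image (offs i)
    ⟨i, by simpa using hi⟩
  simp only [Finset.mem_filter, Finset.mem_univ, true_and] at hm hmax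
  have hadjH : ∀ u v, H.Adj u v → offs i v = offs i u + 1 ∨ offs i u = offs i v + 1 := by
    intro u v huv
    have h1 := (cycG_adj hn i u v).1 huv.adj_sub
    rcases h1 with h | h | ⟨h, h'⟩ | ⟨h, h'⟩
    · exact Or.inl h
    · exact Or.inr h
    · exfalso
      have : u = i := offs_inj i (by rw [h, offs_self])
      subst this
      exact hst v h' huv.symm
    · exfalso
      have : v = i := offs_inj i (by rw [h, offs_self])
      subst this
      exact hst u h' huv
  have hedge : ∀ u v, offs i v = offs i u + 1 → offs i v ≤ offs i m → H.Adj u v := by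
    intro u v huv hvm
    by_contra hno
    have := conn_closed hH (fun x => offs i x ≤ offs i u) (by
      intro x y hxy hx
      by_contra hy
      have h1 := hadjH x y hxy
      have e1 : x = u := offs_inj i (by omega)
      have e2 : y = v := offs_inj i (by omega)
      subst e1 e2
      exact hno hxy) hi hm (by simp [offs_self])
    omega
  refine ⟨i, ⟨offs i m, offs_lt i m⟩, ?_⟩
  apply SimpleGraph.Subgraph.ext
  · ext v
    simp only [arc, Set.mem_ofPred_eq]
    constructor
    · intro hv
      by_cases h0 : offs i v = 0
      · rwa [← offs_inj i (show offs i i = offs i v by rw [h0, offs_self])]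
      · obtain ⟨u, hu⟩ := offs_surj i (offs i v - 1) (by have := offs_lt i v; omega)
        exact H.edge_vert (hedge u v (by omega) hv).symm
    · exact hmax v
  · ext u v
    simp only [arc]
    constructor
    · rintro (⟨h1, h2⟩ | ⟨h1, h2⟩)
      · exact hedge u v h1 h2
      · exact (hedge v u h1 h2).symm
    · intro h
      have h1 := hmax u (H.edge_vert h)
      have h2 := hmax v (H.edge_vert h.symm)
      have := hadjH u v h
      omega

lemma nT_cyc (n : ℕ) (hn : 4 ≤ n) : nT (cycG n) = n ^ 2 + 1 := by
  have : Nat.card (Fin n × Fin n) = Nat.card {H : (cycG n).Subgraph // IsSubtree H} := by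
    apply Nat.card_eq_of_bijective (fun p => ⟨arc hn p.1 p.2, arc_subtree hn p.1 p.2⟩)
    constructor
    · rintro ⟨i, k⟩ ⟨i', k'⟩ h
      obtain ⟨h1, h2⟩ := arc_inj hn i k i' k' (congrArg Subtype.val h)
      rw [h1, h2]
    · rintro ⟨H, hH⟩
      obtain ⟨i, k, h⟩ := subtree_arc hn H hH
      exact ⟨(i, k), Subtype.ext h⟩
  unfold nT
  rw [← this]
  simp
  ring

lemma pow_ineq (n : ℕ) (hn : 4 ≤ n) : n ^ 2 + 1 ≤ 2 ^ (n - 1) + 2 ^ (n - 2) + n + 1 := by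
  obtain ⟨m, rfl⟩ := Nat.exists_eq_add_of_le hn
  have e1 : 4 + m - 1 = m + 3 := by omega
  have e2 : 4 + m - 2 = m + 2 := by omega
  rw [e1, e2]
  induction m with
  | zero => norm_num
  | succ m ih =>
    have := ih (by omega) (by omega) (by omega)
    have h2 : m + 1 ≤ 2 ^ m := Nat.lt_two_pow_self
    simp only [pow_succ] at *
    nlinarith

lemma USn_adj {m : ℕ} (u v : Fin (m + 3)) : (USn (m + 3)).Adj u v ↔
    ((u.val = 0 ∧ v.val ≠ 0) ∨ (v.val = 0 ∧ u.val ≠ 0) ∨ (u.val = 1 ∧ v.val = 2) ∨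
      (u.val = 2 ∧ v.val = 1)) := by
  unfold USn USnl
  rw [SimpleGraph.fromRel_adj, Ne, Fin.ext_iff]
  omega

/-- star with center `0` and leaves given by `P` -/
def usA {m : ℕ} (P : Fin (m + 3) → Prop) : (USn (m + 3)).Subgraph where
  verts := {v | v.val = 0 ∨ P v}
  Adj u v := (u.val = 0 ∧ v.val ≠ 0 ∧ P v) ∨ (v.val = 0 ∧ u.val ≠ 0 ∧ P u)
  adj_sub := by
    intro u v h
    rw [USn_adj]
    tauto
  edge_vert := by
    intro u v h
    simp only [Set.mem_ofPred_eq]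
    tauto
  symm := ⟨by
    intro u v h
    tauto⟩

lemma usA_subtree {m : ℕ} (P : Fin (m + 3) → Prop) : IsSubtree (usA P) := by
  apply isSubtree_of _ 0 (by simp [usA]) (fun v => v.val)
  · intro v hv hne
    have h0 : v.val ≠ 0 := fun h => hne (Fin.ext h)
    refine ⟨0, ?_, ?_⟩
    · simp only [usA, Set.mem_ofPred_eq] at hv ⊢
      right
      exact ⟨rfl, h0, by tauto⟩
    · show 0 < v.val
      omega
  · intro v u w h1 h2 h3 h4
    simp only [usA] at h1 h2
    ext
    omega

/-- edge `12`, edge `0c`, and leaves of `0` given by `P` -/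
def usB {m : ℕ} (b : Bool) (P : Fin (m + 3) → Prop) : (USn (m + 3)).Subgraph where
  verts := {v | v.val < 3 ∨ P v}
  Adj u v := (u.val = 0 ∧ 3 ≤ v.val ∧ P v) ∨ (v.val = 0 ∧ 3 ≤ u.val ∧ P u) ∨
    (u.val = 0 ∧ v.val = (if b then 1 else 2)) ∨ (v.val = 0 ∧ u.val = (if b then 1 else 2)) ∨
    (u.val = 1 ∧ v.val = 2) ∨ (u.val = 2 ∧ v.val = 1)
  adj_sub := by
    intro u v h
    rw [USn_adj]
    cases b <;> simp only [Bool.false_eq_true, if_true, if_false] at h <;> omega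
  edge_vert := by
    intro u v h
    simp only [Set.mem_ofPred_eq]
    by_cases hP : P u
    · exact Or.inr hP
    · simp only [hP, and_false, false_or] at h
      cases b <;> simp only [Bool.false_eq_true, if_true, if_false] at h <;> omega
  symm := ⟨by
    intro u v h
    tauto⟩

lemma usB_subtree {m : ℕ} (b : Bool) (P : Fin (m + 3) → Prop) : IsSubtree (usB b P) := by
  apply isSubtree_of _ 0 (by simp [usB])
    (fun v => if v.val = 0 then 0 else if v.val = (if b then 2 else 1) then 2 else 1)
  · intro v hv hne
    have h0 : v.val ≠ 0 := fun h => hne (Fin.ext h)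
    simp only [usB, Set.mem_ofPred_eq] at hv ⊢
    by_cases hv3 : 3 ≤ v.val
    · refine ⟨0, ?_, ?_⟩
      · right; left
        exact ⟨rfl, hv3, by rcases hv with h | h; · omega
                            · exact h⟩
      · have hz : (0 : Fin (m + 3)).val = 0 := rfl
        simp only [h0, hz, if_true, if_false]
        split_ifs <;> omega
    · by_cases hvb : v.val = (if b then 2 else 1)
      · refine ⟨⟨if b then 1 else 2, by split <;> omega⟩, ?_, ?_⟩
        · cases b
          · exact Or.inr (Or.inr (Or.inr (Or.inr (Or.inl ⟨hvb, rfl⟩))))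
          · exact Or.inr (Or.inr (Or.inr (Or.inr (Or.inr ⟨hvb, rfl⟩))))
        · cases b <;> simp only [Bool.false_eq_true, if_true, if_false] at hvb ⊢ <;> simp only [hvb] <;> norm_num
      · refine ⟨0, ?_, ?_⟩
        · have hz : (0 : Fin (m + 3)).val = 0 := rfl
          cases b <;> simp only [Bool.false_eq_true, if_true, if_false] at hvb ⊢ <;> omega
        · have hz : (0 : Fin (m + 3)).val = 0 := rfl
          simp only [h0, hvb, hz, if_true, if_false]
          omega
  · intro v u w h1 h2 h3 h4
    simp only [usB] at h1 h2 h3 h4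
    ext
    cases b <;> simp only [Bool.false_eq_true, if_true, if_false] at h1 h2 h3 h4 <;> split_ifs at h3 h4 <;> omega

/-- a single vertex -/
def usC {m : ℕ} (c : Fin (m + 2)) : (USn (m + 3)).Subgraph where
  verts := {v | v.val = c.val + 1}
  Adj _ _ := False
  adj_sub := fun h => h.elim
  edge_vert := fun h => h.elim
  symm := ⟨fun _ _ h => h⟩

lemma usC_subtree {m : ℕ} (c : Fin (m + 2)) : IsSubtree (usC c) := by
  apply isSubtree_of _ c.succ (by simp [usC]) (fun v => v.val)
  · intro v hv hne
    simp only [usC, Set.mem_ofPred_eq] at hv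
    exact (hne (Fin.ext (by simpa using hv))).elim
  · intro v u w h1
    exact h1.elim

/-- the edge `12` -/
def usD (m : ℕ) : (USn (m + 3)).Subgraph where
  verts := {v | v.val = 1 ∨ v.val = 2}
  Adj u v := (u.val = 1 ∧ v.val = 2) ∨ (u.val = 2 ∧ v.val = 1)
  adj_sub := by
    intro u v h
    rw [USn_adj]
    omega
  edge_vert := by
    intro u v h
    simp only [Set.mem_ofPred_eq]
    omega
  symm := ⟨by
    intro u v h
    tauto⟩

lemma usD_subtree (m : ℕ) : IsSubtree (usD m) := by
  apply isSubtree_of _ ⟨1, by omega⟩ (by simp [usD]) (fun v => v.val)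
  · intro v hv hne
    have h0 : v.val ≠ 1 := fun h => hne (Fin.ext h)
    simp only [usD, Set.mem_ofPred_eq] at hv
    refine ⟨⟨1, by omega⟩, ?_, ?_⟩
    · simp only [usD]
      right
      exact ⟨by omega, trivial⟩
    · show 1 < v.val
      omega
  · intro v u w h1 h2 h3 h4
    simp only [usD] at h1 h2
    ext
    omega

/-- the code type enumerating the subtrees of `US_{m+3}` -/
abbrev USCode (m : ℕ) : Type :=
  Set (Fin (m + 2)) ⊕ (Bool × Set (Fin m)) ⊕ Fin (m + 2) ⊕ Unit

/-- shift a set of indices -/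
def shiftP {k n : ℕ} (d : ℕ) (s : Set (Fin k)) (v : Fin n) : Prop :=
  ∃ i ∈ s, v.val = i.val + d

lemma shiftP_iff {k n d : ℕ} (s : Set (Fin k)) (i : Fin k) (h : i.val + d < n) :
    shiftP d s (⟨i.val + d, h⟩ : Fin n) ↔ i ∈ s := by
  constructor
  · rintro ⟨j, hj, he⟩
    have : i = j := Fin.ext (by simpa using he)
    rwa [this]
  · intro hi
    exact ⟨i, hi, rfl⟩

lemma shiftP_le {k n d : ℕ} {s : Set (Fin k)} {v : Fin n} (h : shiftP d s v) : d ≤ v.val := by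
  obtain ⟨i, _, h⟩ := h
  omega

/-- the subtree with given code -/
def usF {m : ℕ} : USCode m → (USn (m + 3)).Subgraph
  | .inl s => usA (shiftP 1 s)
  | .inr (.inl (b, s)) => usB b (shiftP 3 s)
  | .inr (.inr (.inl c)) => usC c
  | .inr (.inr (.inr ())) => usD m

lemma usF_subtree {m : ℕ} (c : USCode m) : IsSubtree (usF c) := by
  rcases c with s | ⟨b, s⟩ | c | u
  · exact usA_subtree _
  · exact usB_subtree _ _
  · exact usC_subtree _
  · exact usD_subtree _

lemma usF_inj {m : ℕ} : Function.Injective (usF (m := m)) := by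
  intro c c' h
  have hv : ∀ v, v ∈ (usF c).verts ↔ v ∈ (usF c').verts := by intro v; rw [h]
  have ha : ∀ u v, (usF c).Adj u v ↔ (usF c').Adj u v := by intro u v; rw [h]
  have hv0 := hv 0
  have ha12 := ha ⟨1, by omega⟩ ⟨2, by omega⟩
  rcases c with s | ⟨b, s⟩ | c | u <;> rcases c' with s' | ⟨b', s'⟩ | c' | u' <;>
    try (exfalso; simp [usF, usA, usB, usC, usD] at hv0 ha12; done)
  · congr 1
    ext i
    have := hv ⟨i.val + 1, by omega⟩
    simpa [usF, usA, shiftP_iff] using this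
  · have hb : b = b' := by
      have := ha 0 ⟨1, by omega⟩
      cases b <;> cases b' <;> simp [usF, usB] at this ⊢
    subst hb
    have hs : s = s' := by
      ext i
      have := hv ⟨i.val + 3, by omega⟩
      simpa [usF, usB, shiftP_iff] using this
    rw [hs]
  · have := hv c.succ
    simp [usF, usC] at this
    rw [Fin.ext this]
  · rfl

set_option maxHeartbeats 1000000 in
lemma usF_surj {m : ℕ} (H : (USn (m + 3)).Subgraph) (hH : IsSubtree H) : ∃ c, usF c = H := by
  have hadj : ∀ u v, H.Adj u v → _ := fun u v h => (USn_adj u v).1 h.adj_sub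
  have hvl : ∀ {u v}, H.Adj u v → u ∈ H.verts := fun h => H.edge_vert h
  obtain ⟨v1, hv1⟩ : ∃ v : Fin (m + 3), v.val = 1 := ⟨⟨1, by omega⟩, rfl⟩
  obtain ⟨v2, hv2⟩ : ∃ v : Fin (m + 3), v.val = 2 := ⟨⟨2, by omega⟩, rfl⟩
  have hz : (0 : Fin (m + 3)).val = 0 := rfl
  have e0 : ∀ v : Fin (m + 3), v.val = 0 → v = 0 := fun v h => Fin.ext h
  have e1 : ∀ v : Fin (m + 3), v.val = 1 → v = v1 := fun v h => Fin.ext (by omega)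
  have e2 : ∀ v : Fin (m + 3), v.val = 2 → v = v2 := fun v h => Fin.ext (by omega)
  have n01 : (0 : Fin (m+3)) ≠ v1 := fun h => by have := congrArg Fin.val h; omega
  have n02 : (0 : Fin (m+3)) ≠ v2 := fun h => by have := congrArg Fin.val h; omega
  have n12 : v1 ≠ v2 := fun h => by have := congrArg Fin.val h; omega
  -- pendant vertices hang on `0`
  have hpend : ∀ v ∈ H.verts, 0 ∈ H.verts → 3 ≤ v.val → H.Adj 0 v := by
    intro v hv h0 h3
    by_contra hno
    have := conn_closed hH (fun x => x = v) (by
      rintro x y hxy rfl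
      have h1 := hadj _ _ hxy
      have : y = 0 := e0 y (by omega)
      subst this
      exact (hno hxy.symm).elim) hv h0 rfl
    subst this
    simp at h3
  by_cases h0 : 0 ∈ H.verts
  · by_cases h12 : H.Adj v1 v2
    · -- exactly one of 01, 02
      have hone : H.Adj 0 v1 ∨ H.Adj 0 v2 := by
        by_contra! hno
        have := conn_closed hH (fun x => x = v1 ∨ x = v2) (by
          rintro x y hxy hx
          have h1 := hadj _ _ hxy
          by_cases hy : y.val = 0
          · have := e0 y hy
            subst this
            rcases hx with rfl | rfl
            · exact (hno.1 hxy.symm).elim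
            · exact (hno.2 hxy.symm).elim
          · rcases hx with rfl | rfl
            · right; apply e2; omega
            · left; apply e1; omega) (hvl h12) h0 (Or.inl rfl)
        rcases this with h | h
        · exact n01 h
        · exact n02 h
      have hnot : ¬ (H.Adj 0 v1 ∧ H.Adj 0 v2) := by
        rintro ⟨ha, hb⟩
        obtain ⟨S, s1, s2, s3⟩ := bridge_cut hH h12
        have t0 : S 0 := s3 v1 0 ha.symm (by tauto) (by tauto) s1
        exact s2 (s3 0 v2 hb (by tauto) (by tauto) t0)
      have hP : ∀ v : Fin (m+3), shiftP 3 {i : Fin m | H.Adj 0 ⟨i.val + 3, by omega⟩} v ↔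
          3 ≤ v.val ∧ H.Adj 0 v := by
        intro v
        constructor
        · rintro ⟨i, hi, he⟩
          have : v = ⟨i.val + 3, by omega⟩ := Fin.ext he
          rw [this]
          exact ⟨by simp, hi⟩
        · rintro ⟨h3, hv⟩
          refine ⟨⟨v.val - 3, by omega⟩, ?_, by simp; omega⟩
          have : (⟨v.val - 3 + 3, by omega⟩ : Fin (m+3)) = v := Fin.ext (by simp; omega)
          simpa [this] using hv
      classical
      refine ⟨.inr (.inl (decide (H.Adj 0 v1), {i | H.Adj 0 ⟨i.val + 3, by omega⟩})), ?_⟩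
      have hkey : ∀ v : Fin (m+3), v.val = (if decide (H.Adj 0 v1) then 1 else 2) ↔
          (v.val < 3 ∧ H.Adj 0 v) := by
        intro v
        have hsc : v.val = 0 ∨ v.val = 1 ∨ v.val = 2 ∨ 3 ≤ v.val := by omega
        rcases hsc with h | h | h | h
        · have hn : ¬ H.Adj 0 v := fun hq => by have := hadj _ _ hq; omega
          simp only [hn, and_false, iff_false]
          split <;> omega
        · have := e1 v h; subst this
          by_cases hq : H.Adj 0 v <;> simp [hq, h]
        · have := e2 v h; subst this
          by_cases hq : H.Adj 0 v1
          · have : ¬ H.Adj 0 v := fun h => hnot ⟨hq, h⟩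
            simp [hq, h, this]
          · have : H.Adj 0 v := by tauto
            simp [hq, h, this]
        · constructor
          · intro h'; split at h' <;> omega
          · rintro ⟨h', _⟩; omega
      apply SimpleGraph.Subgraph.ext
      · ext v
        simp only [usF, usB, Set.mem_ofPred_eq, hP]
        constructor
        · rintro (h | h)
          · have hsc : v.val = 0 ∨ v.val = 1 ∨ v.val = 2 := by omega
            rcases hsc with h | h | h
            · rw [e0 v h]; exact h0
            · rw [e1 v h]; exact hvl h12
            · rw [e2 v h]; exact hvl h12.symm
          · exact hvl h.2.symm
        · intro hv
          by_cases h3 : 3 ≤ v.val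
          · exact Or.inr ⟨h3, hpend v hv h0 h3⟩
          · left; omega
      · ext u v
        simp only [usF, usB, hP, hkey]
        constructor
        · rintro (⟨h, h', h''⟩ | ⟨h, h', h''⟩ | ⟨h, h'⟩ | ⟨h, h'⟩ | ⟨h, h'⟩ | ⟨h, h'⟩)
          · rw [e0 u h]; exact h''.2
          · rw [e0 v h]; exact h''.2.symm
          · rw [e0 u h]; exact h'.2
          · rw [e0 v h]; exact h'.2.symm
          · rw [e1 u h, e2 v h']; exact h12
          · rw [e2 u h, e1 v h']; exact h12.symm
        · intro h
          rcases hadj u v h with ⟨h1, h2⟩ | ⟨h1, h2⟩ | h1 | h1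
          · rw [e0 u h1] at h
            by_cases h3 : 3 ≤ v.val
            · exact Or.inl ⟨h1, h3, h3, h⟩
            · exact Or.inr (Or.inr (Or.inl ⟨h1, by omega, h⟩))
          · rw [e0 v h1] at h
            by_cases h3 : 3 ≤ u.val
            · exact Or.inr (Or.inl ⟨h1, h3, h3, h.symm⟩)
            · exact Or.inr (Or.inr (Or.inr (Or.inl ⟨h1, by omega, h.symm⟩)))
          · exact Or.inr (Or.inr (Or.inr (Or.inr (Or.inl h1))))
          · exact Or.inr (Or.inr (Or.inr (Or.inr (Or.inr h1))))
    · -- a star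
      have hall : ∀ v ∈ H.verts, v.val ≠ 0 → H.Adj 0 v := by
        intro v hv hv0
        by_contra hno
        have := conn_closed hH (fun x => x = v) (by
          rintro x y hxy rfl
          rcases hadj _ _ hxy with ⟨h1, h2⟩ | ⟨h1, h2⟩ | ⟨h1, h2⟩ | ⟨h1, h2⟩
          · omega
          · rw [e0 y h1] at hxy; exact (hno hxy.symm).elim
          · rw [e1 x h1, e2 y h2] at hxy; exact (h12 hxy).elim
          · rw [e2 x h1, e1 y h2] at hxy; exact (h12 hxy.symm).elim) hv h0 rfl
        subst this
        simp at hv0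
      have hP : ∀ v : Fin (m+3), shiftP 1 {i : Fin (m+2) | i.succ ∈ H.verts} v ↔
          v.val ≠ 0 ∧ v ∈ H.verts := by
        intro v
        constructor
        · rintro ⟨i, hi, he⟩
          have : v = i.succ := Fin.ext (by simpa using he)
          rw [this]
          exact ⟨by simp, hi⟩
        · rintro ⟨h3, hv⟩
          refine ⟨⟨v.val - 1, by omega⟩, ?_, by simp; omega⟩
          have : Fin.succ (⟨v.val - 1, by omega⟩ : Fin (m+2)) = v := Fin.ext (by simp; omega)
          simpa [this] using hv
      refine ⟨.inl {i | i.succ ∈ H.verts}, ?_⟩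
      apply SimpleGraph.Subgraph.ext
      · ext v
        simp only [usF, usA, Set.mem_ofPred_eq, hP]
        constructor
        · rintro (h | h)
          · rw [e0 v h]; exact h0
          · exact h.2
        · tauto
      · ext u v
        simp only [usF, usA, hP]
        constructor
        · rintro (⟨h, h', h''⟩ | ⟨h, h', h''⟩)
          · rw [e0 u h]; exact hall v h''.2 h'
          · rw [e0 v h]; exact (hall u h''.2 h').symm
        · intro h
          rcases hadj u v h with ⟨h1, h2⟩ | ⟨h1, h2⟩ | ⟨h1, h2⟩ | ⟨h1, h2⟩
          · exact Or.inl ⟨h1, h2, h2, hvl h.symm⟩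
          · exact Or.inr ⟨h1, h2, h2, hvl h⟩
          · rw [e1 u h1, e2 v h2] at h; exact (h12 h).elim
          · rw [e2 u h1, e1 v h2] at h; exact (h12 h.symm).elim
  · have hadj' : ∀ u v, H.Adj u v → (u.val = 1 ∧ v.val = 2) ∨ (u.val = 2 ∧ v.val = 1) := by
      intro u v h
      rcases hadj u v h with ⟨h1, h2⟩ | ⟨h1, h2⟩ | h1 | h1
      · rw [e0 u h1] at h; exact (h0 (hvl h)).elim
      · rw [e0 v h1] at h; exact (h0 (hvl h.symm)).elim
      · tauto
      · tauto
    by_cases h12 : H.Adj v1 v2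
    · refine ⟨.inr (.inr (.inr ())), ?_⟩
      apply SimpleGraph.Subgraph.ext
      · ext v
        simp only [usF, usD, Set.mem_ofPred_eq]
        constructor
        · rintro (h | h)
          · rw [e1 v h]; exact hvl h12
          · rw [e2 v h]; exact hvl h12.symm
        · intro hv
          exact conn_closed hH (fun v => v.val = 1 ∨ v.val = 2) (by
            intro x y hxy _
            have := hadj' x y hxy
            omega) (hvl h12) hv (Or.inl hv1)
      · ext u v
        simp only [usF, usD]
        constructor
        · rintro (⟨h, h'⟩ | ⟨h, h'⟩)
          · rw [e1 u h, e2 v h']; exact h12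
          · rw [e2 u h, e1 v h']; exact h12.symm
        · exact hadj' u v
    · have hnone : ∀ u v, ¬ H.Adj u v := by
        intro u v h
        rcases hadj' u v h with ⟨h1, h2⟩ | ⟨h1, h2⟩
        · rw [e1 u h1, e2 v h2] at h; exact (h12 h).elim
        · rw [e2 u h1, e1 v h2] at h; exact (h12 h.symm).elim
      obtain ⟨r, hr⟩ := hH.1.nonempty
      have hr0 : r.val ≠ 0 := fun h => h0 (e0 r h ▸ hr)
      refine ⟨.inr (.inr (.inl ⟨r.val - 1, by omega⟩)), ?_⟩
      apply SimpleGraph.Subgraph.ext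
      · ext v
        simp only [usF, usC, Set.mem_ofPred_eq]
        constructor
        · intro h
          have : v = r := Fin.ext (by omega)
          rwa [this]
        · intro hv
          have := conn_closed hH (fun x => x = r) (fun x y hxy _ => (hnone x y hxy).elim) hr hv rfl
          rw [this]; omega
      · ext u v
        simp only [usF, usC, hnone]

lemma nT_US (m : ℕ) : nT (USn (m + 3)) = 2 ^ (m + 2) + 2 ^ (m + 1) + (m + 3) + 1 := by
  have : Nat.card (USCode m) = Nat.card {H : (USn (m + 3)).Subgraph // IsSubtree H} := by
    apply Nat.card_eq_of_bijective (fun c => ⟨usF c, usF_subtree c⟩)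
    constructor
    · intro c c' h
      exact usF_inj (congrArg Subtype.val h)
    · rintro ⟨H, hH⟩
      obtain ⟨c, h⟩ := usF_surj H hH
      exact ⟨c, Subtype.ext h⟩
  unfold nT
  rw [← this]
  classical
  rw [Nat.card_eq_fintype_card]
  simp only [Fintype.card_sum, Fintype.card_prod, Fintype.card_set, Fintype.card_fin,
    Fintype.card_bool, Fintype.card_unit]
  ring

/-- for `n ≥ 4`, `n(US_n) = 2^{n-1} + 2^{n-2} + n + 1 ≥ n² + 1 = n(C_n)`. -/
theorem nT_USn (n : ℕ) (hn : 4 ≤ n) :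
    nT (USn n) = 2 ^ (n - 1) + 2 ^ (n - 2) + n + 1 ∧
    nT (cycG n) = n ^ 2 + 1 ∧
    n ^ 2 + 1 ≤ 2 ^ (n - 1) + 2 ^ (n - 2) + n + 1 := by
  refine ⟨?_, nT_cyc n hn, pow_ineq n hn⟩
  obtain ⟨m, rfl⟩ : ∃ m, n = m + 3 := ⟨n - 3, by omega⟩
  exact nT_US m
end

section
/- If G is an n-vertex unicyclic graph with girth l (3 ≤ l ≤ n), then for every integer k ≥ 0, n_k(US_n^l) ≥ n_k(G) ≥ n_k(UP_n^l). -/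
open SimpleGraph

structure NKGood (l : ℕ) (f : ℕ → ℕ) : Prop where
  zero : f 0 = l - 1
  cyc : ∀ i, 0 < i → i < l → f i = i - 1
  par : ∀ i, l ≤ i → f i < i

/-- `(S, s)` encodes a subtree with vertex set `S` rooted at `s`. -/
structure NKVal (l : ℕ) (f : ℕ → ℕ) (S : Finset ℕ) (s : ℕ) : Prop where
  mem : s ∈ S
  cl : ∀ t ∈ S, t ≠ s → f t ∈ S
  sep : l ≤ s → ∀ t ∈ S, l ≤ t

open Classical in
noncomputable def nkFam (l : ℕ) (f : ℕ → ℕ) (N k : ℕ) : Finset (Finset ℕ × ℕ) :=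
  ((Finset.range N).powerset ×ˢ Finset.range N).filter (fun p => NKVal l f p.1 p.2 ∧ p.1.card = k)

open Classical in
noncomputable def nkFamAt (l : ℕ) (f : ℕ → ℕ) (N v k : ℕ) : Finset (Finset ℕ × ℕ) :=
  (nkFam l f N k).filter (fun p => v ∈ p.1)

lemma mem_nkFam {l : ℕ} {f : ℕ → ℕ} {N k : ℕ} {p : Finset ℕ × ℕ} :
    p ∈ nkFam l f N k ↔ p.1 ⊆ Finset.range N ∧ NKVal l f p.1 p.2 ∧ p.1.card = k := by
  simp only [nkFam, Finset.mem_filter, Finset.mem_product, Finset.mem_powerset]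
  constructor
  · rintro ⟨⟨h1, h2⟩, h3⟩; exact ⟨h1, h3⟩
  · rintro ⟨h1, h3⟩; exact ⟨⟨h1, h1 h3.1.mem⟩, h3⟩

lemma mem_nkFamAt {l : ℕ} {f : ℕ → ℕ} {N v k : ℕ} {p : Finset ℕ × ℕ} :
    p ∈ nkFamAt l f N v k ↔
      p.1 ⊆ Finset.range N ∧ NKVal l f p.1 p.2 ∧ p.1.card = k ∧ v ∈ p.1 := by
  simp only [nkFamAt, Finset.mem_filter, mem_nkFam]; tauto

lemma nkFam_succ (l : ℕ) (f : ℕ → ℕ) (N k : ℕ) :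
    (nkFam l f (N + 1) k).card = (nkFam l f N k).card + (nkFamAt l f (N + 1) N k).card := by
  classical
  rw [← Finset.card_union_of_disjoint]
  · congr 1
    ext p
    simp only [Finset.mem_union, mem_nkFam, mem_nkFamAt]
    constructor
    · rintro ⟨h1, h2, h3⟩
      by_cases h : N ∈ p.1
      · right; exact ⟨h1, h2, h3, h⟩
      · left
        refine ⟨fun x hx => ?_, h2, h3⟩
        have := h1 hx
        simp only [Finset.mem_range] at *
        have : x ≠ N := by rintro rfl; exact h hx
        omega
    · rintro (⟨h1, h2⟩ | ⟨h1, h2, h3, _⟩)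
      · exact ⟨h1.trans (Finset.range_mono (by omega)), h2⟩
      · exact ⟨h1, h2, h3⟩
  · rw [Finset.disjoint_left]
    intro p hp hq
    have := (mem_nkFam.1 hp).1 (mem_nkFamAt.1 hq).2.2.2
    simp at this

lemma nkFam_base {l : ℕ} {f g : ℕ → ℕ} (hf : NKGood l f) (hg : NKGood l g) (k : ℕ) :
    nkFam l f l k = nkFam l g l k := by
  have key : ∀ t < l, f t = g t := by
    intro t ht
    rcases Nat.eq_zero_or_pos t with rfl | h
    · rw [hf.zero, hg.zero]
    · rw [hf.cyc t h ht, hg.cyc t h ht]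
  ext p
  simp only [mem_nkFam]
  constructor
  · rintro ⟨h1, h2, h3⟩
    refine ⟨h1, ⟨h2.mem, fun t ht hs => ?_, h2.sep⟩, h3⟩
    rw [← key t (by simpa using h1 ht)]; exact h2.cl t ht hs
  · rintro ⟨h1, h2, h3⟩
    refine ⟨h1, ⟨h2.mem, fun t ht hs => ?_, h2.sep⟩, h3⟩
    rw [key t (by simpa using h1 ht)]; exact h2.cl t ht hs

/-! ### Lower bound -/

/-- cyclic arcs: `{s, s+1, …, s+k-1}` mod `l`, containing `v`, with start `v - a`. -/
lemma nk_base_lower {l : ℕ} {f : ℕ → ℕ} (hf : NKGood l f) (hl : 3 ≤ l) {v k : ℕ} (hv : v < l)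
    (hk : k ≤ l) : k ≤ (nkFamAt l f l v k).card := by
  classical
  have hfm : ∀ t < l, f t = (t + (l - 1)) % l := by
    intro t ht
    rcases Nat.eq_zero_or_pos t with rfl | h
    · rw [hf.zero, zero_add, Nat.mod_eq_of_lt (by omega)]
    · rw [hf.cyc t h ht, show t + (l - 1) = (t - 1) + l by omega, Nat.add_mod_right,
        Nat.mod_eq_of_lt (by omega)]
  have hinj : ∀ s : ℕ, Set.InjOn (fun i => (s + i) % l) (Finset.range l : Set ℕ) := by
    intro s i hi j hj h
    simp only [Finset.coe_range, Set.mem_Iio] at hi hj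
    have h2 : i ≡ j [MOD l] := Nat.ModEq.add_left_cancel' s h
    rwa [Nat.ModEq, Nat.mod_eq_of_lt hi, Nat.mod_eq_of_lt hj] at h2
  let φ : ℕ → Finset ℕ × ℕ := fun a =>
    ((Finset.range k).image (fun i => ((v + (l - a)) + i) % l), (v + (l - a)) % l)
  have : (Finset.range k).card ≤ (nkFamAt l f l v k).card := by
    refine Finset.card_le_card_of_injOn φ ?_ ?_
    · intro a ha
      simp only [Finset.coe_range, Set.mem_Iio] at ha
      rw [Finset.mem_coe, mem_nkFamAt]
      refine ⟨?_, ⟨?_, ?_, ?_⟩, ?_, ?_⟩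
      · intro x hx
        simp only [φ, Finset.mem_image] at hx
        obtain ⟨i, _, rfl⟩ := hx
        exact Finset.mem_range.2 (Nat.mod_lt _ (by omega))
      · simp only [φ, Finset.mem_image, Finset.mem_range]
        exact ⟨0, by omega, by simp⟩
      · intro t ht hts
        simp only [φ, Finset.mem_image, Finset.mem_range] at ht hts ⊢
        obtain ⟨i, hi, rfl⟩ := ht
        have hi0 : i ≠ 0 := by rintro rfl; simp at hts
        refine ⟨i - 1, by omega, ?_⟩
        rw [hfm _ (Nat.mod_lt _ (by omega)), Nat.mod_add_mod,
          show v + (l - a) + i + (l - 1) = v + (l - a) + (i - 1) + l by omega, Nat.add_mod_right]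
      · intro h
        have : (v + (l - a)) % l < l := Nat.mod_lt _ (by omega)
        simp only [φ] at h
        omega
      · simp only [φ]
        rw [Finset.card_image_of_injOn, Finset.card_range]
        exact (hinj _).mono (by intro x; simp; omega)
      · simp only [φ, Finset.mem_image, Finset.mem_range]
        refine ⟨a, ha, ?_⟩
        rw [show v + (l - a) + a = v + l by omega, Nat.add_mod_right, Nat.mod_eq_of_lt hv]
    · intro a ha b hb h
      simp only [Finset.coe_range, Set.mem_Iio] at ha hb
      have h2 := congrArg Prod.snd h
      simp only [φ] at h2
      have h3 : l - a ≡ l - b [MOD l] := Nat.ModEq.add_left_cancel' v h2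
      have h4 : l - a + (a + b) ≡ l - b + (a + b) [MOD l] := h3.add_right _
      have h5 : b ≡ a [MOD l] := by
        have e1 : l - a + (a + b) = b + l := by omega
        have e2 : l - b + (a + b) = a + l := by omega
        rw [e1, e2] at h4
        simpa [Nat.ModEq] using h4
      rw [Nat.ModEq, Nat.mod_eq_of_lt (by omega), Nat.mod_eq_of_lt (by omega)] at h5
      exact h5.symm
  simpa using this

lemma nkFamAt_mono (l : ℕ) (f : ℕ → ℕ) (N v k : ℕ) :
    (nkFamAt l f N v k).card ≤ (nkFamAt l f (N + 1) v k).card := by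
  apply Finset.card_le_card
  intro p
  simp only [mem_nkFamAt]
  rintro ⟨h1, h⟩
  exact ⟨h1.trans (Finset.range_mono (by omega)), h⟩

lemma nkFamAt_insert {l : ℕ} {f : ℕ → ℕ} {N v w k : ℕ} (hN : l ≤ N)
    (hw : w = v ∨ w = N)
    (h : ∀ p ∈ nkFamAt l f N v k, f N ∈ p.1) (hlow : ∀ p ∈ nkFamAt l f N v k, l ≤ p.2 → l ≤ N) :
    (nkFamAt l f N v k).card ≤ (nkFamAt l f (N + 1) w (k + 1)).card := by
  classical
  have hnot : ∀ p ∈ nkFamAt l f N v k, N ∉ p.1 := by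
    intro p hp h
    have := (mem_nkFamAt.1 hp).1 h
    simp at this
  refine Finset.card_le_card_of_injOn (fun p => (insert N p.1, p.2)) ?_ ?_
  · intro p hp
    have hn := hnot p hp
    have hfN := h p hp
    rw [Finset.mem_coe, mem_nkFamAt] at *
    obtain ⟨h1, h2, h3, h4⟩ := hp
    refine ⟨?_, ⟨?_, ?_, ?_⟩, ?_, ?_⟩
    · intro x hx
      rcases Finset.mem_insert.1 hx with rfl | hx
      · simp
      · have := h1 hx
        simp at *; omega
    · exact Finset.mem_insert_of_mem h2.mem
    · intro t ht hts
      rcases Finset.mem_insert.1 ht with rfl | ht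
      · exact Finset.mem_insert_of_mem hfN
      · exact Finset.mem_insert_of_mem (h2.cl t ht hts)
    · intro hs t ht
      rcases Finset.mem_insert.1 ht with rfl | ht
      · exact hN
      · exact h2.sep hs t ht
    · rw [Finset.card_insert_of_notMem hn, h3]
    · rcases hw with rfl | rfl
      · exact Finset.mem_insert_of_mem h4
      · exact Finset.mem_insert_self _ _
  · intro p hp q hq hpq
    have h1 := hnot p hp
    have h2 := hnot q hq
    simp only [Prod.mk.injEq] at hpq
    refine Prod.ext ?_ hpq.2
    rw [← Finset.erase_insert h1, ← Finset.erase_insert h2, hpq.1]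

lemma nk_lower {l : ℕ} {f : ℕ → ℕ} (hf : NKGood l f) (hl : 3 ≤ l) (N : ℕ) (hN : l ≤ N) :
    ∀ v < N, ∀ k, 1 ≤ k → k ≤ N → max 1 (k + l - N) ≤ (nkFamAt l f N v k).card := by
  induction N, hN using Nat.le_induction with
  | base =>
    intro v hv k hk hkl
    have := nk_base_lower hf hl hv hkl
    rw [Nat.add_sub_cancel]; exact max_le (by omega) this
  | succ N hN ih =>
    intro v hv k hk hkN
    have hfN := hf.par N hN
    rcases Nat.lt_or_ge v N with hvN | hvN
    · rcases Nat.lt_or_ge N k with hk' | hk'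
      · obtain rfl : k = N + 1 := by omega
        have h1 := ih v hvN N (by omega) le_rfl
        have h2 : (nkFamAt l f N v N).card ≤ (nkFamAt l f (N + 1) v (N + 1)).card := by
          apply nkFamAt_insert hN (Or.inl rfl)
          · intro p hp
            obtain ⟨h1, h2, h3, h4⟩ := mem_nkFamAt.1 hp
            have : p.1 = Finset.range N := Finset.eq_of_subset_of_card_le h1 (by simp [h3])
            rw [this]; simpa using hfN
          · intros; exact hN
        omega
      · have h1 := ih v hvN k hk hk'
        have h2 := nkFamAt_mono l f N v k
        omega
    · obtain rfl : v = N := by omega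
      rcases Nat.lt_or_ge 1 k with hk' | hk'
      · obtain ⟨j, rfl⟩ : ∃ j, k = j + 1 := ⟨k - 1, by omega⟩
        have h1 := ih (f v) hfN j (by omega) (by omega)
        have h2 : (nkFamAt l f v (f v) j).card ≤ (nkFamAt l f (v + 1) v (j + 1)).card := by
          apply nkFamAt_insert hN (Or.inr rfl)
          · intro p hp
            exact (mem_nkFamAt.1 hp).2.2.2
          · intros; exact hN
        omega
      · obtain rfl : k = 1 := by omega
        have : (({v}, v) : Finset ℕ × ℕ) ∈ nkFamAt l f (v + 1) v 1 := by
          rw [mem_nkFamAt]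
          refine ⟨by simp, ⟨by simp, ?_, ?_⟩, by simp, by simp⟩
          · intro t ht hts; simp at ht; exact absurd ht hts
          · intro _ t ht; simp at ht; omega
        have : 0 < (nkFamAt l f (v + 1) v 1).card := Finset.card_pos.2 ⟨_, this⟩
        omega

lemma nk_downclosed (A : Finset ℕ) (h : ∀ t ∈ A, t ≠ 0 → t - 1 ∈ A) : A = Finset.range A.card := by
  have h' : ∀ d t, t + d ∈ A → t ∈ A := by
    intro d
    induction d with
    | zero => intro t ht; exact ht
    | succ d ih =>
      intro t ht
      apply ih
      have := h _ ht (by omega)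
      simpa using this
  symm
  apply Finset.eq_of_subset_of_card_le
  · intro x hx
    by_contra hxA
    have : A ⊆ Finset.range x := by
      intro y hy
      by_contra hyx
      simp at hyx
      apply hxA
      apply h' (y - x)
      rwa [Nat.add_sub_cancel' hyx]
    have := Finset.card_le_card this
    simp at this hx
    omega
  · simp

def nkUPf (l : ℕ) : ℕ → ℕ := fun i => if i = 0 then l - 1 else i - 1
def nkUSf (l : ℕ) : ℕ → ℕ := fun i => if i = 0 then l - 1 else if i < l then i - 1 else 0

lemma nkUPf_good (l : ℕ) (hl : 3 ≤ l) : NKGood l (nkUPf l) := by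
  constructor
  · simp [nkUPf]
  · intro i h _; simp [nkUPf]; omega
  · intro i h; simp [nkUPf]; split_ifs <;> omega

lemma nkUSf_good (l : ℕ) (hl : 3 ≤ l) : NKGood l (nkUSf l) := by
  constructor
  · simp [nkUSf]
  · intro i h h2; simp [nkUSf, h2]; omega
  · intro i h; simp [nkUSf]; split_ifs <;> omega

lemma nk_UP_upper {l i k : ℕ} (hl : 3 ≤ l) (hi : l ≤ i) (hk : k ≤ i + 1) :
    (nkFamAt l (nkUPf l) (i + 1) i k).card ≤ max 1 (k + l - (i + 1)) := by
  classical
  have struct : ∀ p ∈ nkFamAt l (nkUPf l) (i + 1) i k, ∃ m, m ≤ p.2 ∧ p.2 ≤ i ∧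
      (l ≤ p.2 → m = 0) ∧ i + 1 + m = k + p.2 ∧
      p.1 = Finset.Icc p.2 i ∪ Finset.range m := by
    rintro ⟨S, s⟩ hp
    obtain ⟨h1, h2, h3, h4⟩ := mem_nkFamAt.1 hp
    simp only at h1 h2 h3 h4 ⊢
    have hsi : s ≤ i := by have := h1 h2.mem; simp at this; omega
    have hup : ∀ d, s + d ≤ i → i - d ∈ S := by
      intro d
      induction d with
      | zero => intro _; exact h4
      | succ d ih =>
        intro hd
        have := h2.cl _ (ih (by omega)) (by omega)
        simp only [nkUPf] at this
        rw [if_neg (by omega)] at this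
        rwa [Nat.sub_sub] at this
    have hdown := nk_downclosed (S.filter (· < s)) (by
      intro t ht ht0
      simp only [Finset.mem_filter] at ht ⊢
      have := h2.cl t ht.1 (by omega)
      simp only [nkUPf, if_neg ht0] at this
      exact ⟨this, by omega⟩)
    set m := (S.filter (· < s)).card with hm
    have hS : S = Finset.Icc s i ∪ Finset.range m := by
      rw [← hdown]
      ext x
      simp only [Finset.mem_union, Finset.mem_Icc, Finset.mem_filter]
      constructor
      · intro hx
        have := h1 hx
        simp only [Finset.mem_range] at this
        by_cases h : x < s
        · right; exact ⟨hx, h⟩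
        · left; omega
      · rintro (⟨hx1, hx2⟩ | hx)
        · have := hup (i - x) (by omega)
          rwa [Nat.sub_sub_self hx2] at this
        · exact hx.1
    have hms : m ≤ s := by
      have : Finset.range m ⊆ Finset.range s := by
        rw [← hdown]; intro x hx; simp at hx; simp; exact hx.2
      simpa using Finset.card_le_card this
    refine ⟨m, hms, hsi, ?_, ?_, hS⟩
    · intro hls
      by_contra hm0
      have : 0 ∈ S := by rw [hS]; simp; omega
      have := h2.sep hls 0 this
      omega
    · have hc := congrArg Finset.card hS
      rw [Finset.card_union_of_disjoint, h3, Nat.card_Icc, Finset.card_range] at hc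
      · omega
      · rw [Finset.disjoint_left]; intro x; simp; omega
  have : (nkFamAt l (nkUPf l) (i + 1) i k).card ≤
      (insert (i + 1 - k) (Finset.Ico (i + 1 - k) l)).card := by
    refine Finset.card_le_card_of_injOn Prod.snd ?_ ?_
    · intro p hp
      obtain ⟨m, a1, a2, a3, a4, a5⟩ := struct p hp
      simp only [Finset.coe_insert, Set.mem_insert_iff, Finset.mem_coe, Finset.mem_Ico]
      by_cases h : l ≤ p.2
      · have := a3 h; omega
      · omega
    · intro p hp q hq hpq
      obtain ⟨m, a1, a2, a3, a4, a5⟩ := struct p hp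
      obtain ⟨m', b1, b2, b3, b4, b5⟩ := struct q hq
      have : m = m' := by omega
      refine Prod.ext ?_ hpq
      rw [a5, b5, hpq, this]
  refine this.trans ?_
  by_cases h : i + 1 - k < l
  · rw [Finset.insert_eq_of_mem (by simp; omega), Nat.card_Ico]; omega
  · rw [Finset.Ico_eq_empty (by omega)]; simp

lemma nk_comb_lower {l : ℕ} {f : ℕ → ℕ} (hf : NKGood l f) (hl : 3 ≤ l) (k n : ℕ) (hn : l ≤ n) :
    (nkFam l (nkUPf l) n k).card ≤ (nkFam l f n k).card := by
  induction n, hn using Nat.le_induction with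
  | base => rw [nkFam_base hf (nkUPf_good l hl)]
  | succ N hN ih =>
    rw [nkFam_succ, nkFam_succ]
    apply Nat.add_le_add ih
    by_cases hk : 1 ≤ k ∧ k ≤ N + 1
    · exact (nk_UP_upper hl hN hk.2).trans (nk_lower hf hl (N+1) (by omega) N (by omega) k hk.1 hk.2)
    · rw [Finset.card_eq_zero.2]
      · simp
      · rw [Finset.eq_empty_iff_forall_notMem]
        intro p hp
        obtain ⟨h1, h2, h3, h4⟩ := mem_nkFamAt.1 hp
        have h5 := Finset.card_le_card h1
        have h6 := Finset.card_pos.2 ⟨_, h4⟩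
        rw [Finset.card_range] at h5
        omega

/-! ### Upper bound -/

lemma nkGood_mod {l : ℕ} {f : ℕ → ℕ} (hf : NKGood l f) (hl : 3 ≤ l) :
    ∀ t < l, f t = (t + (l - 1)) % l := by
  intro t ht
  rcases Nat.eq_zero_or_pos t with rfl | h
  · rw [hf.zero, zero_add, Nat.mod_eq_of_lt (by omega)]
  · rw [hf.cyc t h ht, show t + (l - 1) = (t - 1) + l by omega, Nat.add_mod_right,
      Nat.mod_eq_of_lt (by omega)]

lemma nk_root {l : ℕ} {f : ℕ → ℕ} (hf : NKGood l f) (hl : 3 ≤ l) (i : ℕ) :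
    ∃ r < l, ∀ S s, NKVal l f S s → s < l → i ∈ S → r ∈ S := by
  induction i using Nat.strong_induction_on with
  | _ i ih =>
    rcases Nat.lt_or_ge i l with h | h
    · exact ⟨i, h, fun _ _ _ _ h => h⟩
    · obtain ⟨r, hr, H⟩ := ih (f i) (hf.par i h)
      exact ⟨r, hr, fun S s hS hs hi => H S s hS hs (hS.cl i hi (by omega))⟩

lemma nk_rot {l r : ℕ} (hr : r < l) : ∃ ρ : ℕ → ℕ, Function.Injective ρ ∧
    (∀ t, l ≤ t → ρ t = t) ∧ (∀ t < l, ρ t < l) ∧ ρ r = 0 ∧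
    (∀ t < l, ρ ((t + (l - 1)) % l) = (ρ t + (l - 1)) % l) := by
  have hl : 0 < l := by omega
  refine ⟨fun t => if t < l then (t + (l - r)) % l else t, ?_, ?_, ?_, ?_, ?_⟩
  · intro a b hab
    have ha := Nat.mod_lt (a + (l - r)) hl
    have hb := Nat.mod_lt (b + (l - r)) hl
    by_cases h1 : a < l <;> by_cases h2 : b < l <;> simp only [h1, h2, if_true, if_false] at hab
    · have h3 : a ≡ b [MOD l] := Nat.ModEq.add_right_cancel' _ hab
      rwa [Nat.ModEq, Nat.mod_eq_of_lt h1, Nat.mod_eq_of_lt h2] at h3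
    · omega
    · omega
    · exact hab
  · intro t ht; simp; omega
  · intro t ht; simp only [ht, if_true]; exact Nat.mod_lt _ hl
  · simp only [hr, if_true]
    rw [Nat.add_sub_cancel' hr.le, Nat.mod_self]
  · intro t ht
    simp only [ht, if_true, Nat.mod_lt _ hl, Nat.mod_add_mod]
    congr 1; omega

/-- if the root is off the cycle, the root is the minimum. -/
lemma nkVal_min {l : ℕ} {f : ℕ → ℕ} (hf : NKGood l f) {S : Finset ℕ} {s : ℕ}
    (h : NKVal l f S s) (hs : l ≤ s) : ∀ t ∈ S, s ≤ t := by
  intro t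
  induction t using Nat.strong_induction_on with
  | _ t ih =>
    intro ht
    by_contra hst
    have h1 := h.cl t ht (by omega)
    have h2 := hf.par t (h.sep hs t ht)
    have := ih _ h2 h1
    omega

lemma nk_upper {l i k : ℕ} {f : ℕ → ℕ} (hf : NKGood l f) (hl : 3 ≤ l) (hi : l ≤ i) :
    (nkFamAt l f (i + 1) i k).card ≤ (nkFamAt l (nkUSf l) (i + 1) i k).card := by
  classical
  obtain ⟨r, hr, hroot⟩ := nk_root hf hl i
  obtain ⟨ρ, hinj, hρ1, hρ2, hρr, hρf⟩ := nk_rot hr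
  have hfm := nkGood_mod hf hl
  have hg := nkUSf_good l hl
  have hgm := nkGood_mod hg hl
  have hg0 : ∀ t, l ≤ t → nkUSf l t = 0 := by
    intro t ht; simp only [nkUSf]; rw [if_neg (by omega), if_neg (by omega)]
  have hfi := hf.par i hi
  let φ : Finset ℕ × ℕ → Finset ℕ × ℕ := fun p =>
    if p.2 < l then (p.1.image ρ, ρ p.2)
    else if p.2 = i then ({i}, i)
    else (insert 0 (p.1.erase (f i)), 0)
  -- facts in the off-cycle cases
  have hcase2 : ∀ p ∈ nkFamAt l f (i + 1) i k, ¬ p.2 < l → p.2 = i → p.1 = {i} := by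
    intro p hp h1 h2
    obtain ⟨a1, a2, a3, a4⟩ := mem_nkFamAt.1 hp
    ext t
    simp only [Finset.mem_singleton]
    constructor
    · intro ht
      have b1 := nkVal_min hf a2 (by omega) t ht
      have b2 := a1 ht
      simp only [Finset.mem_range] at b2
      omega
    · rintro rfl; exact a4
  have hcase3 : ∀ p ∈ nkFamAt l f (i + 1) i k, ¬ p.2 < l → p.2 ≠ i →
      f i ∈ p.1 ∧ l ≤ f i ∧ 0 ∉ p.1 := by
    intro p hp h1 h2
    obtain ⟨a1, a2, a3, a4⟩ := mem_nkFamAt.1 hp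
    have h3 := a2.cl i a4 (Ne.symm h2)
    refine ⟨h3, a2.sep (by omega) _ h3, fun h0 => ?_⟩
    have := a2.sep (by omega) _ h0
    omega
  have hcase1 : ∀ p ∈ nkFamAt l f (i + 1) i k, p.2 < l → l ≤ f i → f i ∈ p.1.image ρ := by
    intro p hp h1 h2
    obtain ⟨a1, a2, a3, a4⟩ := mem_nkFamAt.1 hp
    exact Finset.mem_image.2 ⟨f i, a2.cl i a4 (by omega), hρ1 _ h2⟩
  refine Finset.card_le_card_of_injOn φ ?_ ?_
  · intro p hp
    rw [Finset.mem_coe] at hp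
    have hp' := hp
    obtain ⟨a1, a2, a3, a4⟩ := mem_nkFamAt.1 hp
    rw [Finset.mem_coe, mem_nkFamAt]
    by_cases h1 : p.2 < l
    · simp only [φ, if_pos h1]
      refine ⟨?_, ⟨?_, ?_, ?_⟩, ?_, ?_⟩
      · intro x hx
        obtain ⟨t, ht, rfl⟩ := Finset.mem_image.1 hx
        rcases Nat.lt_or_ge t l with h | h
        · have := hρ2 t h; simp; omega
        · rw [hρ1 t h]; exact a1 ht
      · exact Finset.mem_image_of_mem _ a2.mem
      · intro x hx hxs
        obtain ⟨t, ht, rfl⟩ := Finset.mem_image.1 hx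
        have hts : t ≠ p.2 := by rintro rfl; exact hxs rfl
        rcases Nat.lt_or_ge t l with h | h
        · rw [hgm _ (hρ2 t h), ← hρf t h, ← hfm t h]
          exact Finset.mem_image_of_mem _ (a2.cl t ht hts)
        · rw [hρ1 t h, hg0 t h, ← hρr]
          exact Finset.mem_image_of_mem _ (hroot _ _ a2 h1 a4)
      · intro h; have := hρ2 _ h1; omega
      · rw [Finset.card_image_of_injective _ hinj, a3]
      · exact Finset.mem_image.2 ⟨i, a4, hρ1 i hi⟩
    · by_cases h2 : p.2 = i
      · simp only [φ, if_neg h1, if_pos h2]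
        have h3 := hcase2 p hp h1 h2
        refine ⟨by simp, ⟨by simp, ?_, ?_⟩, ?_, by simp⟩
        · intro t ht hts; simp at ht; exact absurd ht hts
        · intro _ t ht; simp at ht; omega
        · rw [← h3]; exact a3
      · simp only [φ, if_neg h1, if_neg h2]
        obtain ⟨b1, b2, b3⟩ := hcase3 p hp h1 h2
        refine ⟨?_, ⟨by simp, ?_, ?_⟩, ?_, ?_⟩
        · intro x hx
          rcases Finset.mem_insert.1 hx with rfl | hx
          · simp
          · exact a1 (Finset.mem_of_mem_erase hx)
        · intro t ht ht0
          rcases Finset.mem_insert.1 ht with rfl | ht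
          · exact absurd rfl ht0
          · rw [hg0 t (a2.sep (by omega) t (Finset.mem_of_mem_erase ht))]
            simp
        · intro h; omega
        · rw [Finset.card_insert_of_notMem (fun h => b3 (Finset.mem_of_mem_erase h)),
            Finset.card_erase_of_mem b1, a3]
          have := Finset.card_pos.2 ⟨_, b1⟩
          omega
        · exact Finset.mem_insert_of_mem (Finset.mem_erase.2 ⟨by omega, a4⟩)
  · -- injectivity
    have hne12 : ∀ p ∈ nkFamAt l f (i + 1) i k, ∀ q ∈ nkFamAt l f (i + 1) i k, p.2 < l →
        ¬ q.2 < l → φ p ≠ φ q := by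
      intro p hp q hq h1 h2 heq
      by_cases h3 : q.2 = i
      · simp only [φ, if_pos h1, if_neg h2, if_pos h3, Prod.mk.injEq] at heq
        have := hρ2 _ h1
        omega
      · simp only [φ, if_pos h1, if_neg h2, if_neg h3, Prod.mk.injEq] at heq
        obtain ⟨b1, b2, b3⟩ := hcase3 q hq h2 h3
        have h4 := hcase1 p hp h1 b2
        rw [heq.1] at h4
        simp only [Finset.mem_insert, Finset.mem_erase, ne_eq, not_true_eq_false, false_and,
          or_false] at h4
        omega
    intro p hp q hq heq
    rw [Finset.mem_coe] at hp hq
    by_cases h1 : p.2 < l <;> by_cases h2 : q.2 < l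
    · simp only [φ, if_pos h1, if_pos h2, Prod.mk.injEq] at heq
      exact Prod.ext (Finset.image_injective hinj heq.1) (hinj heq.2)
    · exact absurd heq (hne12 p hp q hq h1 h2)
    · exact absurd heq.symm (hne12 q hq p hp h2 h1)
    · have hS : p.1 = q.1 := by
        by_cases h3 : p.2 = i <;> by_cases h4 : q.2 = i
        · rw [hcase2 p hp h1 h3, hcase2 q hq h2 h4]
        · simp only [φ, if_neg h1, if_neg h2, if_pos h3, if_neg h4, Prod.mk.injEq] at heq
          omega
        · simp only [φ, if_neg h1, if_neg h2, if_neg h3, if_pos h4, Prod.mk.injEq] at heq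
          omega
        · simp only [φ, if_neg h1, if_neg h2, if_neg h3, if_neg h4, Prod.mk.injEq] at heq
          obtain ⟨b1, b2, b3⟩ := hcase3 p hp h1 h3
          obtain ⟨c1, c2, c3⟩ := hcase3 q hq h2 h4
          have e := congrArg (fun S => Finset.erase S 0) heq.1
          rw [Finset.erase_insert (fun h => b3 (Finset.mem_of_mem_erase h)),
            Finset.erase_insert (fun h => c3 (Finset.mem_of_mem_erase h))] at e
          rw [← Finset.insert_erase b1, ← Finset.insert_erase c1, e]
      refine Prod.ext hS ?_
      have a2 := (mem_nkFamAt.1 hp).2.1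
      have b2 := (mem_nkFamAt.1 hq).2.1
      apply le_antisymm
      · exact nkVal_min hf a2 (by omega) _ (hS ▸ b2.mem)
      · exact nkVal_min hf b2 (by omega) _ (hS ▸ a2.mem)

lemma nk_comb_upper {l : ℕ} {f : ℕ → ℕ} (hf : NKGood l f) (hl : 3 ≤ l) (k n : ℕ) (hn : l ≤ n) :
    (nkFam l f n k).card ≤ (nkFam l (nkUSf l) n k).card := by
  induction n, hn using Nat.le_induction with
  | base => rw [nkFam_base hf (nkUSf_good l hl)]
  | succ N hN ih =>
    rw [nkFam_succ, nkFam_succ]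
    exact Nat.add_le_add ih (nk_upper hf hl hN)

/-! ### Subtrees as pairs -/

lemma nkGood_ff {l : ℕ} {f : ℕ → ℕ} (hf : NKGood l f) (hl : 3 ≤ l) (t : ℕ) : f (f t) ≠ t := by
  have hlt : ∀ u < l, f u < l := by
    intro u hu
    rcases Nat.eq_zero_or_pos u with rfl | h
    · rw [hf.zero]; omega
    · rw [hf.cyc u h hu]; omega
  rcases Nat.lt_or_ge t l with h | h
  · rcases Nat.eq_zero_or_pos t with rfl | h0
    · rw [hf.zero, hf.cyc (l - 1) (by omega) (by omega)]; omega
    · rw [hf.cyc t h0 h]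
      rcases Nat.eq_zero_or_pos (t - 1) with h1 | h1
      · rw [h1, hf.zero]; omega
      · rw [hf.cyc _ h1 (by omega)]; omega
  · have h1 := hf.par t h
    rcases Nat.lt_or_ge (f t) l with h2 | h2
    · have := hlt _ h2; omega
    · have := hf.par _ h2; omega

lemma nkVal_desc {l : ℕ} {f : ℕ → ℕ} (hf : NKGood l f) {S : Finset ℕ} {s : ℕ}
    (h : NKVal l f S s) : ∃ μ : ℕ → ℕ, ∀ t ∈ S, t ≠ s → μ (f t) < μ t := by
  refine ⟨fun t => if l ≤ t then t else if s ≤ t then t - s else t + l - s, ?_⟩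
  intro t ht hts
  simp only
  rcases Nat.lt_or_ge s l with hs | hs
  · rcases Nat.lt_or_ge t l with h1 | h1
    · rcases Nat.eq_zero_or_pos t with rfl | h0
      · rw [hf.zero]; split_ifs <;> omega
      · rw [hf.cyc t h0 h1]; split_ifs <;> omega
    · have := hf.par t h1
      split_ifs <;> omega
  · have h1 := h.sep hs t ht
    have h2 := h.sep hs _ (h.cl t ht hts)
    have := hf.par t h1
    simp only [h1, h2, if_true]; exact this

structure NKLab {n : ℕ} (G : SimpleGraph (Fin n)) (f : ℕ → ℕ) (e : Fin n → ℕ)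
    (F : Fin n → Fin n) : Prop where
  inj : Function.Injective e
  lt : ∀ v, e v < n
  comm : ∀ v, e (F v) = f (e v)
  adj : ∀ a b, G.Adj a b ↔ F a = b ∨ F b = a

lemma NKLab.surj {n : ℕ} {G : SimpleGraph (Fin n)} {f : ℕ → ℕ} {e : Fin n → ℕ}
    {F : Fin n → Fin n} (L : NKLab G f e F) (i : ℕ) (hi : i < n) : ∃ v, e v = i := by
  let g : Fin n → Fin n := fun v => ⟨e v, L.lt v⟩
  have hg : Function.Injective g := fun a b h => L.inj (congrArg Fin.val h)
  obtain ⟨v, hv⟩ := (Finite.injective_iff_surjective.1 hg) ⟨i, hi⟩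
  exact ⟨v, congrArg Fin.val hv⟩

lemma NKLab.edge_inj {n l : ℕ} {G : SimpleGraph (Fin n)} {f : ℕ → ℕ} {e : Fin n → ℕ}
    {F : Fin n → Fin n} (hinj : Function.Injective e) (hcomm : ∀ v, e (F v) = f (e v))
    (hf : NKGood l f) (hl : 3 ≤ l) {v w : Fin n}
    (h : s(v, F v) = s(w, F w)) : v = w := by
  rcases Sym2.eq_iff.1 h with h | h
  · exact h.1
  · exfalso
    apply nkGood_ff hf hl (e v)
    rw [← hcomm, ← hcomm, h.2, ← h.1]

def nkH {n : ℕ} {G : SimpleGraph (Fin n)} {f : ℕ → ℕ} {e : Fin n → ℕ}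
    {F : Fin n → Fin n} (L : NKLab G f e F) (S : Finset ℕ) (s : ℕ) : G.Subgraph where
  verts := {v | e v ∈ S}
  Adj a b := (e a ∈ S ∧ e b ∈ S) ∧ ((F a = b ∧ e a ≠ s) ∨ (F b = a ∧ e b ≠ s))
  adj_sub := by
    intro a b h
    rw [L.adj]
    tauto
  edge_vert := by
    intro a b h
    exact h.1.1
  symm := ⟨by
    intro a b h
    tauto⟩

lemma nkH_subtree {n l : ℕ} {G : SimpleGraph (Fin n)} {f : ℕ → ℕ} {e : Fin n → ℕ}
    {F : Fin n → Fin n} (L : NKLab G f e F) (hf : NKGood l f) {S : Finset ℕ} {s : ℕ}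
    (hS : S ⊆ Finset.range n) (h : NKVal l f S s) : IsSubtree (nkH L S s) := by
  classical
  obtain ⟨r, hr⟩ := L.surj s (by simpa using hS h.mem)
  set H := nkH L S s with hH
  have hrm : r ∈ H.verts := by change e r ∈ S; rw [hr]; exact h.mem
  have hFm : ∀ v ∈ H.verts, v ≠ r → F v ∈ H.verts := by
    intro v hv hvr
    change e (F v) ∈ S
    rw [L.comm]
    exact h.cl _ hv (fun h' => hvr (L.inj (h'.trans hr.symm)))
  have hadj : ∀ v ∈ H.verts, v ≠ r → H.Adj v (F v) := by
    intro v hv hvr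
    refine ⟨⟨hv, hFm v hv hvr⟩, Or.inl ⟨rfl, fun h' => hvr (L.inj (h'.trans hr.symm))⟩⟩
  obtain ⟨μ, hμ⟩ := nkVal_desc hf h
  have hreach : ∀ m, ∀ v (hv : v ∈ H.verts), μ (e v) = m →
      H.coe.Reachable ⟨v, hv⟩ ⟨r, hrm⟩ := by
    intro m
    induction m using Nat.strong_induction_on with
    | _ m ih =>
      intro v hv hm
      by_cases hvr : v = r
      · subst hvr; exact SimpleGraph.Reachable.refl _
      · have h1 := hμ (e v) hv (fun h' => hvr (L.inj (h'.trans hr.symm)))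
        rw [← L.comm] at h1
        have h2 := ih _ (hm ▸ h1) (F v) (hFm v hv hvr) rfl
        have h3 : H.coe.Adj ⟨v, hv⟩ ⟨F v, hFm v hv hvr⟩ := hadj v hv hvr
        exact h3.reachable.trans h2
  have hconn : H.coe.Connected := by
    rw [SimpleGraph.connected_iff_exists_forall_reachable]
    exact ⟨⟨r, hrm⟩, fun w => (hreach _ w.1 w.2 rfl).symm⟩
  refine ⟨SimpleGraph.Subgraph.connected_iff'.2 hconn, ?_⟩
  have htree : H.coe.IsTree := by
    rw [SimpleGraph.isTree_iff_connected_and_card]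
    refine ⟨hconn, le_antisymm ?_ hconn.card_vert_le_card_edgeSet_add_one⟩
    let g : H.verts → Sym2 H.verts := fun w =>
      s(w, if hw : F w ∈ H.verts then ⟨F w, hw⟩ else w)
    have hsub : H.coe.edgeSet ⊆ g '' {⟨r, hrm⟩}ᶜ := by
      intro x
      induction x with
      | _ a b =>
        intro hab
        rw [SimpleGraph.mem_edgeSet] at hab
        obtain ⟨⟨h1, h2⟩, h3 | h3⟩ := hab
        · refine ⟨a, ?_, ?_⟩
          · intro h'; apply h3.2; rw [Set.mem_singleton_iff] at h'; rw [h']; exact hr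
          · have : F a.1 ∈ H.verts := by rw [h3.1]; exact b.2
            have h4 : (⟨F a.1, this⟩ : H.verts) = b := Subtype.ext h3.1
            simp only [g, this, dif_pos, h4]
        · refine ⟨b, ?_, ?_⟩
          · intro h'; apply h3.2; rw [Set.mem_singleton_iff] at h'; rw [h']; exact hr
          · have : F b.1 ∈ H.verts := by rw [h3.1]; exact a.2
            have h4 : (⟨F b.1, this⟩ : H.verts) = a := Subtype.ext h3.1
            simp only [g, this, dif_pos, h4]
            exact Sym2.eq_swap
    have c1 := Set.ncard_le_ncard hsub (Set.toFinite _)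
    have c2 := Set.ncard_image_le (f := g) (Set.toFinite ({⟨r, hrm⟩}ᶜ : Set H.verts))
    have c3 := Set.ncard_add_ncard_compl ({⟨r, hrm⟩} : Set H.verts)
    rw [Set.ncard_singleton] at c3
    change H.coe.edgeSet.ncard + 1 ≤ _
    omega
  exact htree.isAcyclic

lemma nkH_surj {n l : ℕ} {G : SimpleGraph (Fin n)} {f : ℕ → ℕ} {e : Fin n → ℕ}
    {F : Fin n → Fin n} (L : NKLab G f e F) (hf : NKGood l f) (hl : 3 ≤ l)
    (H : G.Subgraph) (hH : IsSubtree H) :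
    ∃ S s, S ⊆ Finset.range n ∧ NKVal l f S s ∧ nkH L S s = H := by
  classical
  obtain ⟨hc, hac⟩ := hH
  have htree : H.coe.IsTree := ⟨SimpleGraph.Subgraph.connected_iff'.1 hc, hac⟩
  have hcard : H.coe.edgeSet.ncard + 1 = H.verts.ncard :=
    (SimpleGraph.isTree_iff_connected_and_card.1 htree).2
  let A : Set (Fin n) := {v | H.Adj v (F v)}
  have hAv : A ⊆ H.verts := fun v hv => H.edge_vert hv
  have hE1 : H.edgeSet.ncard = H.coe.edgeSet.ncard := by
    rw [← SimpleGraph.Subgraph.image_coe_edgeSet_coe]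
    exact Set.ncard_image_of_injective _ (Sym2.map.injective Subtype.val_injective)
  have hE2 : H.edgeSet = (fun v => s(v, F v)) '' A := by
    ext x
    induction x with
    | _ a b =>
      rw [SimpleGraph.Subgraph.mem_edgeSet]
      constructor
      · intro hab
        rcases (L.adj a b).1 (H.adj_sub hab) with h | h
        · subst h; exact ⟨a, hab, rfl⟩
        · subst h; exact ⟨b, hab.symm, Sym2.eq_swap⟩
      · rintro ⟨v, hv, hvv⟩
        simp only at hvv
        rw [← SimpleGraph.Subgraph.mem_edgeSet, ← hvv]
        exact hv
  have hE3 : H.edgeSet.ncard = A.ncard := by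
    rw [hE2]
    exact Set.ncard_image_of_injective _ (fun v w h => NKLab.edge_inj (G := G) L.inj L.comm hf hl h)
  have hdiff : (H.verts \ A).ncard = 1 := by
    have := Set.ncard_sdiff_add_ncard_of_subset hAv
    omega
  obtain ⟨r, hr⟩ := Set.ncard_eq_one.1 hdiff
  have hrv : r ∈ H.verts ∧ r ∉ A := by
    have : r ∈ H.verts \ A := by rw [hr]; rfl
    exact this
  have hA : ∀ v ∈ H.verts, v ≠ r → H.Adj v (F v) := by
    intro v hv hvr
    by_contra h
    have : v ∈ H.verts \ A := ⟨hv, h⟩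
    rw [hr] at this
    exact hvr this
  have hmemS : ∀ v, e v ∈ (H.verts.toFinite.toFinset).image e ↔ v ∈ H.verts := by
    intro v
    rw [Finset.mem_image]
    constructor
    · rintro ⟨w, hw, hwv⟩
      rw [← L.inj hwv]; simpa using hw
    · intro hv; exact ⟨v, by simpa using hv, rfl⟩
  refine ⟨(H.verts.toFinite.toFinset).image e, e r, ?_, ⟨?_, ?_, ?_⟩, ?_⟩
  · intro x hx
    obtain ⟨v, _, rfl⟩ := Finset.mem_image.1 hx
    exact Finset.mem_range.2 (L.lt v)
  · rw [hmemS]; exact hrv.1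
  · intro t ht htr
    obtain ⟨v, hv, rfl⟩ := Finset.mem_image.1 ht
    have hv' : v ∈ H.verts := by simpa using hv
    rw [← L.comm, hmemS]
    exact H.edge_vert (hA v hv' (by rintro rfl; exact htr rfl)).symm
  · intro hlr t ht
    by_contra htl
    obtain ⟨v, hv, rfl⟩ := Finset.mem_image.1 ht
    have hv' : v ∈ H.verts := by simpa using hv
    have hA' : ∀ v ∈ H.verts, e v < l → H.Adj v (F v) := by
      intro v hv hvl
      apply hA v hv
      rintro rfl; omega
    have h0 : ∀ i, ∀ v ∈ H.verts, e v = i → i < l → ∃ c ∈ H.verts, e c = 0 := by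
      intro i
      induction i with
      | zero => intro v hv hvi _; exact ⟨v, hv, hvi⟩
      | succ i ih =>
        intro v hv hvi hil
        refine ih (F v) (H.edge_vert (hA' v hv (by omega)).symm) ?_ (by omega)
        rw [L.comm, hvi, hf.cyc _ (by omega) hil]; rfl
    obtain ⟨c, hcv, hc0⟩ := h0 _ v hv' rfl (by omega)
    have hadj := hA' c hcv (by omega)
    have hFc : F c ∈ H.verts := H.edge_vert hadj.symm
    have hadj' : H.coe.Adj ⟨c, hcv⟩ ⟨F c, hFc⟩ := hadj
    have hb := SimpleGraph.isAcyclic_iff_forall_adj_isBridge.1 hac hadj'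
    rw [SimpleGraph.isBridge_iff] at hb
    apply hb
    symm
    have key : ∀ i, ∀ v (hv : v ∈ H.verts), e v = i → i < l →
        (H.coe.deleteEdges {s(⟨c, hcv⟩, ⟨F c, hFc⟩)}).Reachable ⟨v, hv⟩ ⟨c, hcv⟩ := by
      intro i
      induction i with
      | zero =>
        intro v hv hvi _
        have : v = c := L.inj (hvi.trans hc0.symm)
        subst this
        exact SimpleGraph.Reachable.refl _
      | succ i ih =>
        intro v hv hvi hil
        have h1 := hA' v hv (by omega)
        have h2 : F v ∈ H.verts := H.edge_vert h1.symm
        have h3 := ih (F v) h2 (by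
          rw [L.comm, hvi, hf.cyc _ (by omega) hil]; rfl) (by omega)
        refine SimpleGraph.Reachable.trans (SimpleGraph.Adj.reachable ?_) h3
        rw [SimpleGraph.deleteEdges_adj]
        refine ⟨h1, fun h4 => ?_⟩
        rw [Set.mem_singleton_iff] at h4
        have h5 := congrArg (Sym2.map Subtype.val) h4
        simp only [Sym2.map_mk] at h5
        have : v = c := NKLab.edge_inj (G := G) L.inj L.comm hf hl h5
        subst this
        omega
    exact key (l - 1) (F c) hFc (by rw [L.comm, hc0, hf.zero]) (by omega)
  · apply SimpleGraph.Subgraph.ext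
    · ext v
      exact hmemS v
    · ext a b
      change ((e a ∈ _ ∧ e b ∈ _) ∧ ((F a = b ∧ e a ≠ e r) ∨ (F b = a ∧ e b ≠ e r))) ↔ _
      rw [hmemS, hmemS]
      constructor
      · rintro ⟨⟨h1, h2⟩, ⟨rfl, h3⟩ | ⟨rfl, h3⟩⟩
        · exact hA a h1 (by rintro rfl; exact h3 rfl)
        · exact (hA b h2 (by rintro rfl; exact h3 rfl)).symm
      · intro hab
        refine ⟨⟨H.edge_vert hab, H.edge_vert hab.symm⟩, ?_⟩
        rcases (L.adj a b).1 (H.adj_sub hab) with h | h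
        · left
          refine ⟨h, fun h' => hrv.2 ?_⟩
          rw [← L.inj h']
          change H.Adj a (F a)
          rw [h]; exact hab
        · right
          refine ⟨h, fun h' => hrv.2 ?_⟩
          rw [← L.inj h']
          change H.Adj b (F b)
          rw [h]; exact hab.symm

lemma nkH_inj {n l : ℕ} {G : SimpleGraph (Fin n)} {f : ℕ → ℕ} {e : Fin n → ℕ}
    {F : Fin n → Fin n} (L : NKLab G f e F) (hf : NKGood l f) (hl : 3 ≤ l)
    {S S' : Finset ℕ} {s s' : ℕ} (hS : S ⊆ Finset.range n) (hS' : S' ⊆ Finset.range n)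
    (h : NKVal l f S s) (h' : NKVal l f S' s') (heq : nkH L S s = nkH L S' s') :
    S = S' ∧ s = s' := by
  have hv : ∀ v, e v ∈ S ↔ e v ∈ S' := by
    intro v
    have := congrArg (fun H : G.Subgraph => v ∈ H.verts) heq
    exact iff_of_eq this
  have hSS : S = S' := by
    ext x
    constructor
    · intro hx
      obtain ⟨v, rfl⟩ := L.surj x (by simpa using hS hx)
      exact (hv v).1 hx
    · intro hx
      obtain ⟨v, rfl⟩ := L.surj x (by simpa using hS' hx)
      exact (hv v).2 hx
  refine ⟨hSS, ?_⟩
  subst hSS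
  by_contra hne
  obtain ⟨v, hvs⟩ := L.surj s (by simpa using hS h.mem)
  have h1 : (nkH L S s').Adj v (F v) := by
    refine ⟨⟨?_, ?_⟩, Or.inl ⟨rfl, ?_⟩⟩
    · rw [hvs]; exact h.mem
    · rw [L.comm, hvs]; exact h'.cl s h.mem hne
    · rw [hvs]; exact hne
  rw [← heq] at h1
  rcases h1.2 with h2 | h2
  · exact h2.2 hvs
  · apply nkGood_ff hf hl (e v)
    rw [← L.comm, ← L.comm, h2.1]

lemma nk_eq_fam {n l : ℕ} {G : SimpleGraph (Fin n)} {f : ℕ → ℕ} {e : Fin n → ℕ}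
    {F : Fin n → Fin n} (L : NKLab G f e F) (hf : NKGood l f) (hl : 3 ≤ l) (k : ℕ) :
    nk G k = (nkFam l f n k).card := by
  classical
  have hncard : ∀ S s, S ⊆ Finset.range n → (nkH L S s).verts.ncard = S.card := by
    intro S s hS
    have : e '' (nkH L S s).verts = (S : Set ℕ) := by
      ext x
      constructor
      · rintro ⟨v, hv, rfl⟩; exact hv
      · intro hx
        obtain ⟨v, rfl⟩ := L.surj x (by simpa using hS hx)
        exact ⟨v, hx, rfl⟩
    rw [← Set.ncard_image_of_injective _ L.inj, this, Set.ncard_coe_finset]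
  let φ : (nkFam l f n k) → {H : G.Subgraph // IsSubtree H ∧ H.verts.ncard = k} := fun p =>
    ⟨nkH L p.1.1 p.1.2, by
      obtain ⟨h1, h2, h3⟩ := mem_nkFam.1 p.2
      exact ⟨nkH_subtree L hf h1 h2, by rw [hncard _ _ h1, h3]⟩⟩
  have hφ : Function.Bijective φ := by
    constructor
    · intro p q hpq
      obtain ⟨h1, h2, h3⟩ := mem_nkFam.1 p.2
      obtain ⟨g1, g2, g3⟩ := mem_nkFam.1 q.2
      obtain ⟨e1, e2⟩ := nkH_inj L hf hl h1 g1 h2 g2 (congrArg Subtype.val hpq)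
      exact Subtype.ext (Prod.ext e1 e2)
    · rintro ⟨H, hH, hk⟩
      obtain ⟨S, s, h1, h2, h3⟩ := nkH_surj L hf hl H hH
      refine ⟨⟨(S, s), mem_nkFam.2 ⟨h1, h2, ?_⟩⟩, Subtype.ext h3⟩
      rw [← hncard S s h1, h3, hk]
  rw [nk, ← Nat.card_eq_of_bijective φ hφ]
  simp

/-! ### The labellings -/

lemma nkLab_val {n : ℕ} {G : SimpleGraph (Fin n)} {f : ℕ → ℕ} (hfn : ∀ i < n, f i < n)
    (h : ∀ a b : Fin n, G.Adj a b ↔ f a.val = b.val ∨ f b.val = a.val) :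
    NKLab G f (fun v => v.val) (fun v => ⟨f v.val, hfn _ v.2⟩) where
  inj := Fin.val_injective
  lt v := v.2
  comm _ := rfl
  adj a b := by rw [h, Fin.ext_iff, Fin.ext_iff]

lemma nkGood_lt {l n : ℕ} {f : ℕ → ℕ} (hf : NKGood l f) (hl : 3 ≤ l) (hn : l ≤ n) :
    ∀ i < n, f i < n := by
  intro i hi
  rcases Nat.lt_or_ge i l with h | h
  · rcases Nat.eq_zero_or_pos i with rfl | h0
    · rw [hf.zero]; omega
    · rw [hf.cyc i h0 h]; omega
  · exact (hf.par i h).trans hi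

lemma nk_UP_eq {n l : ℕ} (hl : 3 ≤ l) (hn : l ≤ n) (k : ℕ) :
    nk (UPnl n l) k = (nkFam l (nkUPf l) n k).card := by
  have hg := nkUPf_good l hl
  refine nk_eq_fam (nkLab_val (nkGood_lt hg hl hn) ?_) hg hl k
  intro a b
  simp only [UPnl, SimpleGraph.fromRel_adj, nkUPf, ne_eq, Fin.ext_iff]
  split_ifs <;> omega

lemma nk_US_eq {n l : ℕ} (hl : 3 ≤ l) (hn : l ≤ n) (k : ℕ) :
    nk (USnl n l) k = (nkFam l (nkUSf l) n k).card := by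
  have hg := nkUSf_good l hl
  refine nk_eq_fam (nkLab_val (nkGood_lt hg hl hn) ?_) hg hl k
  intro a b
  simp only [USnl, SimpleGraph.fromRel_adj, nkUSf, ne_eq, Fin.ext_iff]
  split_ifs <;> omega

lemma nk_exists_lab {n l : ℕ} (hl : 3 ≤ l) (hn : l ≤ n)
    (G : SimpleGraph (Fin n)) (hconn : G.Connected) (hedges : G.edgeSet.ncard = n)
    (hgirth : G.girth = l) :
    ∃ f e F, NKGood l f ∧ NKLab G f e F := by
  classical
  have hnac : ¬ G.IsAcyclic := by
    intro h
    rw [SimpleGraph.girth_eq_zero.2 h] at hgirth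
    omega
  obtain ⟨a, w, hw, hwl⟩ := SimpleGraph.exists_girth_eq_length.2 hnac
  have hlen : w.length = l := by rw [← hwl, hgirth]
  let c : ℕ → Fin n := w.getVert
  have hcinj : ∀ i < l, ∀ j < l, c i = c j → i = j := by
    intro i hi j hj h
    exact hw.getVert_injOn' (by rw [Set.mem_ofPred_eq]; omega)
      (by rw [Set.mem_ofPred_eq]; omega) h
  have hcadj : ∀ i < l, G.Adj (c i) (c (i + 1)) := fun i hi => w.adj_getVert_succ (by omega)
  have hcl : c l = c 0 := by
    simp only [c]
    rw [← hlen, w.getVert_length, w.getVert_zero]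
  -- parents
  have hpar : ∀ v, v ≠ a → ∃ u, G.Adj v u ∧ G.dist u a < G.dist v a := by
    intro v hva
    obtain ⟨p, hp⟩ := hconn.exists_walk_length_eq_dist v a
    cases p with
    | nil => exact absurd rfl hva
    | cons h q =>
      refine ⟨_, h, ?_⟩
      have := SimpleGraph.dist_le q
      rw [SimpleGraph.Walk.length_cons] at hp
      omega
  choose! P hPadj hPdist using hpar
  -- keys
  have hkey : ∃ key : Fin n → ℕ, Function.Injective key ∧ (∀ i < l, key (c i) = i) ∧
      (∀ v, (∀ i < l, v ≠ c i) → l ≤ key v ∧ key (P v) < key v) := by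
    let key : Fin n → ℕ := fun v =>
      if h : ∃ i < l, v = c i then Nat.find h else l + G.dist v a * n + v.val
    have k1 : ∀ i < l, key (c i) = i := by
      intro i hi
      have h : ∃ j < l, c i = c j := ⟨i, hi, rfl⟩
      simp only [key, dif_pos h]
      have := Nat.find_spec h
      exact (hcinj _ hi _ this.1 this.2).symm
    have k2 : ∀ v, (∀ i < l, v ≠ c i) → key v = l + G.dist v a * n + v.val := by
      intro v hv
      have h : ¬ ∃ j < l, v = c j := by
        rintro ⟨j, hj, h⟩; exact hv j hj h
      simp only [key, dif_neg h]
    have hcase : ∀ v, (∃ i < l, v = c i) ∨ (∀ i < l, v ≠ c i) := by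
      intro v
      by_cases h : ∃ i < l, v = c i
      · exact Or.inl h
      · right; intro i hi hv; exact h ⟨i, hi, hv⟩
    refine ⟨key, ?_, k1, ?_⟩
    · intro v u hvu
      rcases hcase v with ⟨i, hi, rfl⟩ | hv <;> rcases hcase u with ⟨j, hj, rfl⟩ | hu
      · rw [k1 i hi, k1 j hj] at hvu; rw [hvu]
      · rw [k1 i hi, k2 u hu] at hvu; omega
      · rw [k1 j hj, k2 v hv] at hvu; omega
      · rw [k2 v hv, k2 u hu] at hvu
        apply Fin.ext
        have h1 : (G.dist v a * n + v.val) % n = (G.dist u a * n + u.val) % n := by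
          congr 1; omega
        rwa [Nat.mul_add_mod', Nat.mul_add_mod', Nat.mod_eq_of_lt v.2, Nat.mod_eq_of_lt u.2] at h1
    · intro v hv
      refine ⟨by rw [k2 v hv]; omega, ?_⟩
      have hva : v ≠ a := by
        have := hv 0 (by omega)
        simpa [c] using this
      rw [k2 v hv]
      rcases hcase (P v) with ⟨i, hi, h⟩ | h
      · rw [h, k1 i hi]; omega
      · rw [k2 _ h]
        have h1 := hPdist v hva
        have h2 : (G.dist (P v) a + 1) * n ≤ G.dist v a * n := Nat.mul_le_mul_right _ h1
        have h3 := (P v).2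
        rw [add_mul, one_mul] at h2
        omega
  obtain ⟨key, kinj, kc, knc⟩ := hkey
  -- ranks
  let e : Fin n → ℕ := fun v => (Finset.univ.filter (fun u => key u < key v)).card
  have hmono : ∀ u v, key u < key v → e u < e v := by
    intro u v huv
    apply Finset.card_lt_card
    rw [Finset.ssubset_iff_of_subset]
    · exact ⟨u, by simpa using huv, by simp⟩
    · intro x hx
      simp only [Finset.mem_filter, Finset.mem_univ, true_and] at *
      omega
  have einj : Function.Injective e := by
    intro u v huv
    rcases Nat.lt_trichotomy (key u) (key v) with h | h | h
    · have := hmono _ _ h; omega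
    · exact kinj h
    · have := hmono _ _ h; omega
  have elt : ∀ v, e v < n := by
    intro v
    have : (Finset.univ.filter (fun u => key u < key v)).card < (Finset.univ : Finset (Fin n)).card := by
      apply Finset.card_lt_card
      rw [Finset.ssubset_iff_of_subset (Finset.subset_univ _)]
      exact ⟨v, by simp, by simp⟩
    simpa using this
  have hout : ∀ v, l ≤ key v ∨ ∃ i < l, v = c i := by
    intro v
    by_cases h : ∃ i < l, v = c i
    · exact Or.inr h
    · left; exact (knc v (fun i hi hv => h ⟨i, hi, hv⟩)).1
  have ec : ∀ i < l, e (c i) = i := by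
    intro i hi
    have : (Finset.univ.filter (fun u => key u < key (c i))) = (Finset.range i).image c := by
      ext u
      simp only [Finset.mem_filter, Finset.mem_univ, true_and, Finset.mem_image, Finset.mem_range]
      rw [kc i hi]
      constructor
      · intro hu
        rcases hout u with h | ⟨j, hj, rfl⟩
        · omega
        · rw [kc j hj] at hu; exact ⟨j, hu, rfl⟩
      · rintro ⟨j, hj, rfl⟩
        rw [kc j (by omega)]; exact hj
    simp only [e]
    rw [this, Finset.card_image_of_injOn, Finset.card_range]
    intro x hx y hy hxy
    simp only [Finset.coe_range, Set.mem_Iio] at hx hy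
    exact hcinj x (by omega) y (by omega) hxy
  have enc : ∀ v, (∀ i < l, v ≠ c i) → l ≤ e v := by
    intro v hv
    have h1 := hmono (c (l - 1)) v (by rw [kc _ (by omega)]; have := (knc v hv).1; omega)
    rw [ec _ (by omega)] at h1
    omega
  have hesurj : ∀ i < n, ∃ v, e v = i := by
    intro i hi
    let g : Fin n → Fin n := fun v => ⟨e v, elt v⟩
    have hg : Function.Injective g := fun a b h => einj (congrArg Fin.val h)
    obtain ⟨v, hv⟩ := (Finite.injective_iff_surjective.1 hg) ⟨i, hi⟩
    exact ⟨v, congrArg Fin.val hv⟩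
  -- the function
  let F : Fin n → Fin n := fun v =>
    if e v = 0 then c (l - 1) else if e v < l then c (e v - 1) else P v
  let f : ℕ → ℕ := fun j =>
    if h : ∃ v, e v = j then e (F h.choose) else 0
  have hcomm : ∀ v, e (F v) = f (e v) := by
    intro v
    have h : ∃ u, e u = e v := ⟨v, rfl⟩
    simp only [f, dif_pos h]
    rw [einj h.choose_spec]
  have hgood : NKGood l f := by
    refine ⟨?_, ?_, ?_⟩
    · rw [← ec 0 (by omega), ← hcomm]
      simp only [F]
      rw [if_pos (ec 0 (by omega)), ec _ (by omega)]
    · intro i h0 hi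
      conv_lhs => rw [← ec i hi]
      rw [← hcomm]
      simp only [F]
      rw [ec i hi, if_neg (by omega), if_pos hi, ec _ (by omega)]
    · intro i hi
      by_cases hin : i < n
      · obtain ⟨v, rfl⟩ := hesurj i hin
        rw [← hcomm]
        simp only [F]
        rw [if_neg (by omega), if_neg (by omega)]
        apply hmono
        refine (knc v ?_).2
        rintro j hj rfl
        rw [ec j hj] at hi
        omega
      · have : ¬ ∃ v, e v = i := by
          rintro ⟨v, rfl⟩; exact hin (elt v)
        simp only [f, dif_neg this]
        omega
  have hFadj : ∀ v, G.Adj v (F v) := by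
    intro v
    by_cases h : ∃ i < l, v = c i
    · obtain ⟨i, hi, rfl⟩ := h
      simp only [F]
      rw [ec i hi]
      by_cases hi0 : i = 0
      · rw [if_pos hi0, hi0, ← hcl]
        have := hcadj (l - 1) (by omega)
        rw [Nat.sub_add_cancel (by omega)] at this
        exact this.symm
      · rw [if_neg hi0, if_pos hi]
        have := hcadj (i - 1) (by omega)
        rw [Nat.sub_add_cancel (by omega)] at this
        exact this.symm
    · have hv : ∀ i < l, v ≠ c i := fun i hi hv => h ⟨i, hi, hv⟩
      have := enc v hv
      simp only [F]
      rw [if_neg (by omega), if_neg (by omega)]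
      apply hPadj
      have := hv 0 (by omega)
      simpa [c] using this
  refine ⟨f, e, F, hgood, einj, elt, hcomm, ?_⟩
  intro x y
  constructor
  · intro hxy
    let φ : Fin n → G.edgeSet := fun v => ⟨s(v, F v), hFadj v⟩
    have hφ : Function.Injective φ := by
      intro v u h
      exact NKLab.edge_inj (G := G) einj hcomm hgood hl (congrArg Subtype.val h)
    have hb := hφ.bijective_of_nat_card_le (by
      rw [Nat.card_eq_fintype_card (α := Fin n), Fintype.card_fin]
      exact hedges.le)
    obtain ⟨v, hv⟩ := hb.2 ⟨s(x, y), hxy⟩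
    have hv' : s(v, F v) = s(x, y) := congrArg Subtype.val hv
    rcases Sym2.eq_iff.1 hv' with ⟨rfl, h⟩ | ⟨rfl, h⟩
    · left; exact h
    · right; exact h
  · rintro (rfl | rfl)
    · exact hFadj x
    · exact (hFadj y).symm

/-- if `G` is an `n`-vertex unicyclic graph with girth `l`
(`3 ≤ l ≤ n`), then `n_k(US_n^l) ≥ n_k(G) ≥ n_k(UP_n^l)` for every `k ≥ 0`. -/
theorem nk_unicyclic_girth_extremal (n l : ℕ) (hl : 3 ≤ l) (hn : l ≤ n)
    (G : SimpleGraph (Fin n)) (hconn : G.Connected) (hedges : G.edgeSet.ncard = n)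
    (hgirth : G.girth = l) (k : ℕ) :
    nk (UPnl n l) k ≤ nk G k ∧ nk G k ≤ nk (USnl n l) k := by
  obtain ⟨f, e, F, hf, L⟩ := nk_exists_lab hl hn G hconn hedges hgirth
  rw [nk_UP_eq hl hn, nk_US_eq hl hn, nk_eq_fam L hf hl k]
  exact ⟨nk_comb_lower hf hl k n hn, nk_comb_upper hf hl k n hn⟩
end

section
/- For any integers l_1 ≥ l_2 ≥ 3, n(U_1(l_1,l_2)) - n(U_2(l_1,l_2)) = (l_1 - l_2)(l_1 l_2 + l_1 + l_2 - 1)/2 ≥ 0, with equality if and only if l_1 = l_2. Moreover, with u and v the branching vertices of U_1(l_1,l_2) and U_2(l_1,l_2) respectively, n(u, U_1(l_1,l_2)) - n(v, U_2(l_1,l_2)) = (l_1+1)(l_2+1)(l_1-l_2)/2 ≥ 0. -/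
open SimpleGraph

lemma bdry {V : Type*} {G : SimpleGraph V} (S : Set V) {u v : V} (h : G.Reachable u v)
    (hu : u ∈ S) (hv : v ∉ S) : ∃ x y, G.Adj x y ∧ x ∈ S ∧ y ∉ S := by
  obtain ⟨p⟩ := h
  obtain ⟨d, -, h1, h2⟩ := p.exists_boundary_dart S hu hv
  exact ⟨d.fst, d.snd, d.adj, h1, h2⟩

/-- crossing edges in connected subgraphs -/
lemma sub_bdry {V : Type*} {G : SimpleGraph V} {H : G.Subgraph} (hH : H.Connected) (S : Set V)
    {u v : V} (hu : u ∈ H.verts) (hv : v ∈ H.verts)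
    (huS : u ∈ S) (hvS : v ∉ S) : ∃ x y, H.Adj x y ∧ x ∈ S ∧ y ∉ S := by
  have h := hH.coe.preconnected ⟨u, hu⟩ ⟨v, hv⟩
  obtain ⟨x, y, h1, h2, h3⟩ := bdry {x : H.verts | x.1 ∈ S} h huS hvS
  exact ⟨x, y, h1, h2, h3⟩

lemma acyc_of_cut {V : Type*} {G : SimpleGraph V} (H : G.Subgraph)
    (h : ∀ u v, H.Adj u v → ∃ S : Set V, u ∈ S ∧ v ∉ S ∧
      ∀ x y, H.Adj x y → x ∈ S → y ∉ S → x = u ∧ y = v) : H.coe.IsAcyclic := by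
  rw [SimpleGraph.isAcyclic_iff_forall_adj_isBridge]
  intro u v huv
  rw [SimpleGraph.isBridge_iff]
  intro hr
  obtain ⟨S, hu, hv, hS⟩ := h u v huv
  obtain ⟨x, y, h1, h2, h3⟩ := bdry {x : H.verts | x.1 ∈ S} hr hu hv
  rw [SimpleGraph.deleteEdges_adj] at h1
  obtain ⟨e1, e2⟩ := hS x y h1.1 h2 h3
  apply h1.2
  simp [Subtype.ext e1, Subtype.ext e2]

/-- a subgraph with a decreasing measure towards a root is connected -/
lemma conn_of_parent {V : Type*} {G : SimpleGraph V} (H : G.Subgraph) (r : V) (hr : r ∈ H.verts)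
    (f : V → ℕ) (h : ∀ x ∈ H.verts, x ≠ r → ∃ y, H.Adj x y ∧ f y < f x) : H.Connected := by
  have key : ∀ n, ∀ x (hx : x ∈ H.verts), f x = n → H.coe.Reachable ⟨x, hx⟩ ⟨r, hr⟩ := by
    intro n
    induction n using Nat.strong_induction_on with
    | _ n ih =>
      intro x hx hn
      by_cases hxr : x = r
      · subst hxr; exact SimpleGraph.Reachable.refl _
      · obtain ⟨y, hy, hlt⟩ := h x hx hxr
        have h1 : H.coe.Adj ⟨x, hx⟩ ⟨y, hy.snd_mem⟩ := hy
        exact h1.reachable.trans (ih (f y) (by omega) y hy.snd_mem rfl)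
  rw [SimpleGraph.Subgraph.connected_iff']
  have : Nonempty H.verts := ⟨⟨r, hr⟩⟩
  exact ⟨fun x y => (key _ x.1 x.2 rfl).trans (key _ y.1 y.2 rfl).symm⟩

lemma UP_adj {n l : ℕ} (x y : Fin n) (hl : 3 ≤ l) : (UPnl n l).Adj x y ↔
    (y.val = x.val + 1 ∨ x.val = y.val + 1 ∨ (x.val = 0 ∧ y.val + 1 = l) ∨
      (y.val = 0 ∧ x.val + 1 = l)) := by
  simp only [UPnl, SimpleGraph.fromRel_adj, ne_eq, Fin.ext_iff]
  omega

/-- interval path -/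
def PP (n l a b : ℕ) : (UPnl n l).Subgraph where
  verts := {x | a ≤ x.val ∧ x.val ≤ b}
  Adj x y := (a ≤ x.val ∧ x.val ≤ b) ∧ (a ≤ y.val ∧ y.val ≤ b) ∧
    (y.val = x.val + 1 ∨ x.val = y.val + 1)
  adj_sub := by
    intro x y h
    simp only [UPnl, SimpleGraph.fromRel_adj, ne_eq, Fin.ext_iff]
    omega
  edge_vert := by
    intro x y h
    exact h.1
  symm := ⟨fun x y h => by omega⟩

/-- subtrees through the closing edge -/
def QQ (n l i j k : ℕ) (hl : 3 ≤ l) :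
    (UPnl n l).Subgraph where
  verts := {x | x.val ≤ i ∨ (j ≤ x.val ∧ x.val ≤ k) ∨ x.val = 0 ∨ x.val + 1 = l}
  Adj x y := (y.val = x.val + 1 ∧ (x.val < i ∨ (j ≤ x.val ∧ x.val < k))) ∨
    (x.val = y.val + 1 ∧ (y.val < i ∨ (j ≤ y.val ∧ y.val < k))) ∨
    (x.val = 0 ∧ y.val + 1 = l) ∨ (y.val = 0 ∧ x.val + 1 = l)
  adj_sub := by
    intro x y h
    rw [UP_adj _ _ hl]
    omega
  edge_vert := by
    intro x y h
    simp only [Set.mem_ofPred_eq]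
    omega
  symm := ⟨fun x y h => by omega⟩

lemma PP_subtree {n l a b : ℕ} (hab : a ≤ b) (hb : b < n) : IsSubtree (PP n l a b) := by
  constructor
  · apply conn_of_parent _ ⟨a, by omega⟩ (by simp [PP, hab]) (fun x => x.val)
    intro x hx hne
    simp only [PP, Set.mem_ofPred_eq, ne_eq, Fin.ext_iff] at hx hne ⊢
    exact ⟨⟨x.val - 1, by omega⟩, by simp only; omega, by simp only; omega⟩
  · apply acyc_of_cut
    intro u v h
    simp only [PP] at h ⊢
    rcases h.2.2 with h' | h'
    · refine ⟨{x | x.val ≤ u.val}, ?_⟩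
      simp only [Set.mem_ofPred_eq, Fin.ext_iff]
      refine ⟨by omega, by omega, fun x y => by omega⟩
    · refine ⟨{x | u.val ≤ x.val}, ?_⟩
      simp only [Set.mem_ofPred_eq, Fin.ext_iff]
      refine ⟨by omega, by omega, fun x y => by omega⟩

lemma QQ_subtree {n l i j k : ℕ} (hl : 3 ≤ l) (hij : i < j) (hj : j < l) (hk : l ≤ k + 1)
    (hn : k < n) : IsSubtree (QQ n l i j k hl) := by
  constructor
  · apply conn_of_parent _ ⟨0, by omega⟩ (by simp [QQ])
      (fun x => if x.val ≤ i then x.val else if x.val < l then l - x.val else x.val)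
    intro x hx hne
    simp only [QQ, Set.mem_ofPred_eq, ne_eq, Fin.ext_iff] at hx hne ⊢
    by_cases h1 : x.val ≤ i
    · exact ⟨⟨x.val - 1, by omega⟩, by first | (simp only; omega) | (simp; done) | (simp; omega), by simp only; split_ifs <;> omega⟩
    by_cases h2 : x.val + 1 = l
    · exact ⟨⟨0, by omega⟩, by first | (simp only; omega) | (simp; done) | (simp; omega), by simp only; split_ifs <;> omega⟩
    by_cases h3 : x.val < l
    · exact ⟨⟨x.val + 1, by omega⟩, by first | (simp only; omega) | (simp; done) | (simp; omega), by simp only; split_ifs <;> omega⟩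
    · exact ⟨⟨x.val - 1, by omega⟩, by first | (simp only; omega) | (simp; done) | (simp; omega), by simp only; split_ifs <;> omega⟩
  · apply acyc_of_cut
    intro u v h
    simp only [QQ] at h ⊢
    have fin : ∀ (T : ℕ → Prop), (T u.val ∧ ¬ T v.val ∧ ∀ x y : ℕ,
        ((y = x + 1 ∧ (x < i ∨ (j ≤ x ∧ x < k))) ∨
    (x = y + 1 ∧ (y < i ∨ (j ≤ y ∧ y < k))) ∨
    (x = 0 ∧ y + 1 = l) ∨ (y = 0 ∧ x + 1 = l)) → T x → ¬ T y → x = u.val ∧ y = v.val) →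
      ∃ S : Set (Fin n), u ∈ S ∧ v ∉ S ∧ ∀ (x y : Fin n),
    ((y.val = x.val + 1 ∧ (x.val < i ∨ (j ≤ x.val ∧ x.val < k))) ∨
    (x.val = y.val + 1 ∧ (y.val < i ∨ (j ≤ y.val ∧ y.val < k))) ∨
    (x.val = 0 ∧ y.val + 1 = l) ∨ (y.val = 0 ∧ x.val + 1 = l)) → x ∈ S → y ∉ S → x = u ∧ y = v := by
      rintro T ⟨h1, h2, h3⟩
      refine ⟨{x | T x.val}, h1, h2, fun x y h hx hy => ?_⟩
      rw [Fin.ext_iff, Fin.ext_iff]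
      exact h3 _ _ h hx hy
    rcases h with ⟨h, h' | h'⟩ | ⟨h, h' | h'⟩ | h | h
    · exact fin (fun x => ¬ (v.val ≤ x ∧ x ≤ i)) ⟨by omega, by omega, fun x y => by omega⟩
    · by_cases hu : v.val < l
      · exact fin (fun x => j ≤ x ∧ x ≤ u.val) ⟨by omega, by omega, fun x y => by omega⟩
      · exact fin (fun x => ¬ (v.val ≤ x)) ⟨by omega, by omega, fun x y => by omega⟩
    · exact fin (fun x => (u.val ≤ x ∧ x ≤ i)) ⟨by omega, by omega, fun x y => by omega⟩
    · by_cases hu : u.val < l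
      · exact fin (fun x => ¬ (j ≤ x ∧ x ≤ v.val)) ⟨by omega, by omega, fun x y => by omega⟩
      · exact fin (fun x => (u.val ≤ x)) ⟨by omega, by omega, fun x y => by omega⟩
    · exact fin (fun x => x ≤ i) ⟨by omega, by omega, fun x y => by omega⟩
    · exact fin (fun x => ¬ x ≤ i) ⟨by omega, by omega, fun x y => by omega⟩

section classify
variable {n l : ℕ}

/-- `t` is a vertex of `H` -/
def VV (H : (UPnl n l).Subgraph) (t : ℕ) : Prop := ∃ x : Fin n, x.val = t ∧ x ∈ H.verts
/-- `t, t+1` is an edge of `H` -/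
def EE (H : (UPnl n l).Subgraph) (t : ℕ) : Prop :=
  ∃ x y : Fin n, x.val = t ∧ y.val = t + 1 ∧ H.Adj x y
/-- the closing edge is in `H` -/
def CC (H : (UPnl n l).Subgraph) : Prop :=
  ∃ x y : Fin n, x.val = 0 ∧ y.val + 1 = l ∧ H.Adj x y

lemma VV_iff (H : (UPnl n l).Subgraph) (x : Fin n) : x ∈ H.verts ↔ VV H x.val := by
  constructor
  · exact fun h => ⟨x, rfl, h⟩
  · rintro ⟨y, h, h'⟩
    rwa [← Fin.ext h]

lemma EE_VV {H : (UPnl n l).Subgraph} {t : ℕ} (h : EE H t) : VV H t ∧ VV H (t + 1) := by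
  obtain ⟨x, y, h1, h2, h3⟩ := h
  exact ⟨⟨x, h1, h3.fst_mem⟩, ⟨y, h2, h3.snd_mem⟩⟩

lemma adj_iff (hl : 3 ≤ l) (H : (UPnl n l).Subgraph) (x y : Fin n) : H.Adj x y ↔
    ((y.val = x.val + 1 ∧ EE H x.val) ∨ (x.val = y.val + 1 ∧ EE H y.val) ∨
      (CC H ∧ ((x.val = 0 ∧ y.val + 1 = l) ∨ (y.val = 0 ∧ x.val + 1 = l)))) := by
  constructor
  · intro h
    rcases (UP_adj x y hl).1 h.adj_sub with h1 | h1 | h1 | h1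
    · exact Or.inl ⟨h1, x, y, rfl, h1, h⟩
    · exact Or.inr (Or.inl ⟨h1, y, x, rfl, h1, h.symm⟩)
    · exact Or.inr (Or.inr ⟨⟨x, y, h1.1, h1.2, h⟩, Or.inl h1⟩)
    · exact Or.inr (Or.inr ⟨⟨y, x, h1.1, h1.2, h.symm⟩, Or.inr h1⟩)
  · rintro (⟨h1, a, b, ha, hb, h⟩ | ⟨h1, a, b, ha, hb, h⟩ | ⟨⟨a, b, ha, hb, h⟩, h1 | h1⟩)
    · rwa [Fin.ext (by omega : x.val = a.val), Fin.ext (by omega : y.val = b.val)]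
    · rw [Fin.ext (by omega : x.val = b.val), Fin.ext (by omega : y.val = a.val)]
      exact h.symm
    · rwa [Fin.ext (by omega : x.val = a.val), Fin.ext (by omega : y.val = b.val)]
    · rw [Fin.ext (by omega : x.val = b.val), Fin.ext (by omega : y.val = a.val)]
      exact h.symm

lemma cross (hl : 3 ≤ l) {H : (UPnl n l).Subgraph} (hH : H.Connected) (T : ℕ → Prop) {a b : ℕ}
    (ha : VV H a) (hb : VV H b) (hTa : T a) (hTb : ¬ T b) :
    ∃ x y : ℕ, T x ∧ ¬ T y ∧ ((y = x + 1 ∧ EE H x) ∨ (x = y + 1 ∧ EE H y) ∨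
      (CC H ∧ ((x = 0 ∧ y + 1 = l) ∨ (y = 0 ∧ x + 1 = l)))) := by
  obtain ⟨u, rfl, hu⟩ := ha
  obtain ⟨v, rfl, hv⟩ := hb
  obtain ⟨x, y, h1, h2, h3⟩ := sub_bdry hH {x | T x.val} hu hv hTa hTb
  exact ⟨x, y, h2, h3, (adj_iff hl H x y).1 h1⟩

lemma exists_missing (hl : 3 ≤ l) {H : (UPnl n l).Subgraph} (hH : H.coe.IsAcyclic) (hC : CC H) :
    ∃ t, t + 1 < l ∧ ¬ EE H t := by
  by_contra! hall
  obtain ⟨x, y, hx, hy, h⟩ := hC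
  rw [SimpleGraph.isAcyclic_iff_forall_adj_isBridge] at hH
  have hb := hH (v := ⟨x, h.fst_mem⟩) (w := ⟨y, h.snd_mem⟩) h
  rw [SimpleGraph.isBridge_iff] at hb
  apply hb
  have key : ∀ t, t + 1 ≤ l → ∀ (z : Fin n) (hz : z ∈ H.verts), z.val = t →
      (H.coe.deleteEdges {s(⟨x, h.fst_mem⟩, ⟨y, h.snd_mem⟩)}).Reachable ⟨x, h.fst_mem⟩ ⟨z, hz⟩ := by
    intro t
    induction t with
    | zero =>
      intro _ z hz hz0
      have : z = x := Fin.ext (by omega)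
      subst this
      exact SimpleGraph.Reachable.refl _
    | succ t ih =>
      intro ht z hz hzt
      obtain ⟨a, b, ha, hb, hab⟩ := hall t (by omega)
      have : b = z := Fin.ext (by omega)
      subst this
      refine (ih (by omega) a hab.fst_mem ha).trans (SimpleGraph.Adj.reachable ?_)
      rw [SimpleGraph.deleteEdges_adj]
      refine ⟨hab, ?_⟩
      simp only [Set.mem_singleton_iff, Sym2.eq_iff, Subtype.mk.injEq, Fin.ext_iff]
      omega
  exact key (l - 1) (by omega) y h.snd_mem (by omega)

lemma exists_max (P : ℕ → Prop) (N a : ℕ) (ha : P a) (hN : ∀ t, P t → t < N) :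
    ∃ b, P b ∧ ∀ t, P t → t ≤ b := by
  classical
  refine ⟨Nat.findGreatest P N, Nat.findGreatest_spec (hN a ha).le ha, fun t ht =>
    Nat.le_findGreatest (hN t ht).le ht⟩

lemma exists_min (P : ℕ → Prop) (a : ℕ) (ha : P a) :
    ∃ b, P b ∧ ∀ t, P t → b ≤ t := by
  classical
  exact ⟨Nat.find ⟨a, ha⟩, Nat.find_spec ⟨a, ha⟩, fun t ht => Nat.find_min' _ ht⟩

lemma classify (hl : 3 ≤ l) {H : (UPnl n l).Subgraph} (hH : IsSubtree H) :
    (∃ a b, a ≤ b ∧ b < n ∧ H = PP n l a b) ∨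
    (∃ i j k, i < j ∧ j < l ∧ l ≤ k + 1 ∧ k < n ∧ H = QQ n l i j k hl) := by
  obtain ⟨hc, hac⟩ := hH
  have hVn : ∀ t, VV H t → t < n := by
    rintro t ⟨x, rfl, -⟩
    exact x.2
  obtain ⟨x0, hx0⟩ := hc.nonempty
  have hv0 : VV H x0.val := ⟨x0, rfl, hx0⟩
  obtain ⟨b, hb, hbm⟩ := exists_max _ n _ hv0 hVn
  by_cases hC : CC H
  · right
    have hCV : VV H 0 ∧ VV H (l - 1) := by
      obtain ⟨x, y, hx, hy, h⟩ := hC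
      exact ⟨⟨x, hx, h.fst_mem⟩, ⟨y, by omega, h.snd_mem⟩⟩
    obtain ⟨t0, ht0⟩ := exists_missing hl hac hC
    obtain ⟨i, hi, him⟩ := exists_min (fun t => t + 1 < l ∧ ¬ EE H t) t0 ht0
    obtain ⟨j, hj, hjm⟩ := exists_max (fun t => t + 1 < l ∧ ¬ EE H t) l t0 ht0 (fun t h => by omega)
    have hij := him j hj
    have hlb := hbm _ hCV.2
    have E1 : ∀ t, t < i → EE H t := fun t ht => by
      by_contra hne
      have := him t ⟨by omega, hne⟩
      omega
    have E2 : ∀ t, j < t → t + 1 < l → EE H t := fun t ht htl => by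
      by_contra hne
      have := hjm t ⟨by omega, hne⟩
      omega
    have E3 : ∀ t, l ≤ t + 1 → t < b → EE H t := fun t ht htb => by
      obtain ⟨x, y, h1, h2, h3⟩ := cross hl hc (fun s => s ≤ t) hCV.1 hb (by simp) (by simpa using htb)
      rcases h3 with ⟨h3, h4⟩ | ⟨h3, h4⟩ | ⟨-, h3⟩
      · rwa [show t = x by omega]
      · omega
      · omega
    have N : ∀ t, i < t → t ≤ j → ¬ VV H t := fun t h1 h2 h3 => by
      obtain ⟨x, y, h1, h2, h3⟩ := cross hl hc (fun s => i < s ∧ s ≤ j) h3 hCV.1 ⟨h1, h2⟩ (by simp)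
      rcases h3 with ⟨h3, h4⟩ | ⟨h3, h4⟩ | ⟨-, h3⟩
      · exact hj.2 (by rwa [show j = x by omega])
      · exact hi.2 (by rwa [show i = y by omega])
      · omega
    have hE : ∀ t, EE H t ↔ (t < i ∨ (j + 1 ≤ t ∧ t < b)) := by
      intro t
      constructor
      · intro h
        have h1 := EE_VV h
        have h2 := hbm _ h1.2
        have h3 := N t
        have h4 := N (t + 1)
        have h5 : t ≠ i := fun e => hi.2 (e ▸ h)
        by_contra hne
        by_cases h6 : t ≤ j
        · exact h3 (by omega) h6 h1.1
        · omega
      · rintro (h | ⟨h, h'⟩)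
        · exact E1 t h
        · by_cases htl : t + 1 < l
          · exact E2 t (by omega) htl
          · exact E3 t (by omega) h'
    have hV : ∀ t, VV H t ↔ (t ≤ i ∨ (j + 1 ≤ t ∧ t ≤ b) ∨ t = 0 ∨ t + 1 = l) := by
      intro t
      constructor
      · intro h
        have h2 := hbm _ h
        have h3 := N t
        by_contra hne
        exact h3 (by omega) (by omega) h
      · intro h
        by_cases h0 : t = 0
        · rw [h0]; exact hCV.1
        by_cases h1 : t + 1 = l
        · rw [show t = l - 1 by omega]; exact hCV.2
        by_cases h2 : t = b
        · rw [h2]; exact hb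
        by_cases h3 : t ≤ i
        · have := (EE_VV (E1 (t - 1) (by omega))).2
          rwa [show t - 1 + 1 = t by omega] at this
        · exact (EE_VV ((hE t).2 (by omega))).1
    refine ⟨i, j + 1, b, by omega, by omega, by omega, hVn b hb, ?_⟩
    apply SimpleGraph.Subgraph.ext
    · ext x
      rw [VV_iff, hV]
      rfl
    · ext x y
      rw [adj_iff hl, hE, hE]
      simp only [hC, true_and]
      rfl
  · left
    obtain ⟨a, ha, ham⟩ := exists_min _ _ hv0
    have E1 : ∀ t, a ≤ t → t < b → EE H t := fun t ht htb => by
      obtain ⟨x, y, h1, h2, h3⟩ := cross hl hc (fun s => s ≤ t) ha hb ht (by simpa using htb)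
      rcases h3 with ⟨h3, h4⟩ | ⟨h3, h4⟩ | ⟨h3, -⟩
      · rwa [show t = x by omega]
      · omega
      · exact absurd h3 hC
    have hE : ∀ t, EE H t ↔ (a ≤ t ∧ t < b) := by
      intro t
      constructor
      · intro h
        have h1 := ham _ (EE_VV h).1
        have h2 := hbm _ (EE_VV h).2
        omega
      · exact fun h => E1 t h.1 h.2
    have hV : ∀ t, VV H t ↔ (a ≤ t ∧ t ≤ b) := by
      intro t
      constructor
      · exact fun h => ⟨ham _ h, hbm _ h⟩
      · intro h
        by_cases h2 : t = b
        · rw [h2]; exact hb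
        · exact (EE_VV (E1 t h.1 (by omega))).1
    refine ⟨a, b, hbm a ha, hVn b hb, ?_⟩
    apply SimpleGraph.Subgraph.ext
    · ext x
      rw [VV_iff, hV]
      rfl
    · ext x y
      rw [adj_iff hl, hE, hE]
      simp only [hC, PP, false_and, or_false]
      omega

lemma PP_inj {a b a' b' : ℕ} (hab : a ≤ b) (hb : b < n) (hab' : a' ≤ b') (hb' : b' < n)
    (h : PP n l a b = PP n l a' b') : a = a' ∧ b = b' := by
  have hv : ∀ t, t < n → ((a ≤ t ∧ t ≤ b) ↔ (a' ≤ t ∧ t ≤ b')) := fun t ht => by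
    have : (⟨t, ht⟩ : Fin n) ∈ (PP n l a b).verts ↔ (⟨t, ht⟩ : Fin n) ∈ (PP n l a' b').verts := by
      rw [h]
    exact this
  have h1 := hv a (by omega)
  have h2 := hv b (by omega)
  have h3 := hv a' (by omega)
  have h4 := hv b' (by omega)
  omega

lemma QQ_inj (hl : 3 ≤ l) {i j k i' j' k' : ℕ} (hij : i < j) (hj : j < l) (hk : l ≤ k + 1)
    (hn : k < n) (hij' : i' < j') (hj' : j' < l) (hk' : l ≤ k' + 1) (hn' : k' < n)
    (h : QQ n l i j k hl = QQ n l i' j' k' hl) : i = i' ∧ j = j' ∧ k = k' := by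
  have hv : ∀ t, t + 1 < n → ((t < i ∨ (j ≤ t ∧ t < k)) ↔ (t < i' ∨ (j' ≤ t ∧ t < k'))) :=
    fun t ht => by
    have : (QQ n l i j k hl).Adj (⟨t, by omega⟩ : Fin n) ⟨t + 1, ht⟩ ↔
      (QQ n l i' j' k' hl).Adj (⟨t, by omega⟩ : Fin n) ⟨t + 1, ht⟩ := by
      rw [h]
    simp only [QQ, true_and] at this
    omega
  have hw : ∀ t, t < n → ((t ≤ i ∨ (j ≤ t ∧ t ≤ k) ∨ t = 0 ∨ t + 1 = l) ↔
      (t ≤ i' ∨ (j' ≤ t ∧ t ≤ k') ∨ t = 0 ∨ t + 1 = l)) := fun t ht => by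
    have : (⟨t, ht⟩ : Fin n) ∈ (QQ n l i j k hl).verts ↔
      (⟨t, ht⟩ : Fin n) ∈ (QQ n l i' j' k' hl).verts := by
      rw [h]
    exact this
  have h1 := hw k (by omega)
  have h2 := hw k' (by omega)
  have ek : k = k' := by omega
  subst ek
  clear h1 h2
  have h3 := hv i (by omega)
  have h4 := hv i' (by omega)
  have ei : i = i' := by omega
  subst ei
  clear h3 h4
  have h5 := hw j (by omega)
  have h6 := hw j' (by omega)
  have ej : j = j' := by omega
  exact ⟨rfl, ej, rfl⟩

lemma PP_ne_QQ (hl : 3 ≤ l) (hln : l ≤ n) {a b i j k : ℕ} : PP n l a b ≠ QQ n l i j k hl := by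
  intro h
  have : (PP n l a b).Adj (⟨0, by omega⟩ : Fin n) ⟨l - 1, by omega⟩ ↔
      (QQ n l i j k hl).Adj (⟨0, by omega⟩ : Fin n) ⟨l - 1, by omega⟩ := by rw [h]
  simp only [QQ, PP, true_and] at this
  omega

/-- index pairs for intervals -/
def AA (n : ℕ) : Finset (ℕ × ℕ) := (Finset.range n ×ˢ Finset.range n).filter (fun p => p.1 ≤ p.2)
/-- index pairs for intervals through `l-1` -/
def AB (n l : ℕ) : Finset (ℕ × ℕ) := Finset.range l ×ˢ Finset.Ico (l - 1) n
/-- index triples for the others -/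
def BB (n l : ℕ) : Finset ((_ : ℕ) × ℕ × ℕ) :=
  (Finset.range l).sigma (fun j => Finset.range j ×ˢ Finset.Ico (l - 1) n)

lemma card_AB : (AB n l).card = l * (n - (l - 1)) := by simp [AB]

lemma card_BB : 2 * (BB n l).card = l * (l - 1) * (n - (l - 1)) := by
  have : (BB n l).card = (∑ j ∈ Finset.range l, j) * (n - (l - 1)) := by
    simp [BB, Finset.card_sigma, Finset.sum_mul]
  rw [this, ← Finset.sum_range_id_mul_two]
  ring

lemma count (hl : 3 ≤ l) (hln : l ≤ n) (p : (UPnl n l).Subgraph → Prop) (A : Finset (ℕ × ℕ))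
    (hA : ∀ a b, (a, b) ∈ A ↔ (a ≤ b ∧ b < n ∧ p (PP n l a b)))
    (hB : ∀ i j k, i < j → j < l → l ≤ k + 1 → k < n → p (QQ n l i j k hl)) :
    Nat.card {H : (UPnl n l).Subgraph // IsSubtree H ∧ p H} = A.card + (BB n l).card := by
  classical
  have memB : ∀ i j k, (⟨j, i, k⟩ : (_ : ℕ) × ℕ × ℕ) ∈ BB n l ↔
      (i < j ∧ j < l ∧ l ≤ k + 1 ∧ k < n) := by
    intro i j k
    simp only [BB, Finset.mem_sigma, Finset.mem_product, Finset.mem_range, Finset.mem_Ico]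
    omega
  rw [← Finset.card_image_of_injOn (s := A) (f := fun q => PP n l q.1 q.2),
    ← Finset.card_image_of_injOn (s := BB n l) (f := fun q => QQ n l q.2.1 q.1 q.2.2 hl),
    ← Finset.card_union_of_disjoint]
  · apply Nat.subtype_card
    intro H
    simp only [Finset.mem_union, Finset.mem_image]
    constructor
    · rintro (⟨⟨a, b⟩, h, rfl⟩ | ⟨⟨j, i, k⟩, h, rfl⟩)
      · obtain ⟨h1, h2, h3⟩ := (hA a b).1 h
        exact ⟨PP_subtree h1 h2, h3⟩
      · obtain ⟨h1, h2, h3, h4⟩ := (memB i j k).1 h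
        exact ⟨QQ_subtree hl h1 h2 h3 h4, hB i j k h1 h2 h3 h4⟩
    · rintro ⟨hH, hp⟩
      rcases classify hl hH with ⟨a, b, h1, h2, rfl⟩ | ⟨i, j, k, h1, h2, h3, h4, rfl⟩
      · exact Or.inl ⟨(a, b), (hA a b).2 ⟨h1, h2, hp⟩, rfl⟩
      · exact Or.inr ⟨⟨j, i, k⟩, (memB i j k).2 ⟨h1, h2, h3, h4⟩, rfl⟩
  · rw [Finset.disjoint_left]
    simp only [Finset.mem_image]
    rintro H ⟨q, -, rfl⟩ ⟨q', -, h⟩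
    exact PP_ne_QQ hl hln h.symm
  · rintro ⟨j, i, k⟩ h ⟨j', i', k'⟩ h' e
    obtain ⟨h1, h2, h3, h4⟩ := (memB i j k).1 h
    obtain ⟨h1', h2', h3', h4'⟩ := (memB i' j' k').1 h'
    obtain ⟨rfl, rfl, rfl⟩ := QQ_inj hl h1 h2 h3 h4 h1' h2' h3' h4' e
    rfl
  · rintro ⟨a, b⟩ h ⟨a', b'⟩ h' e
    obtain ⟨h1, h2, h3⟩ := (hA a b).1 h
    obtain ⟨h1', h2', h3'⟩ := (hA a' b').1 h'
    obtain ⟨rfl, rfl⟩ := PP_inj h1 h2 h1' h2' e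
    rfl

lemma nT_UP (hl : 3 ≤ l) (hln : l ≤ n) :
    2 * nT (UPnl n l) = 2 + 2 * (AA n).card + l * (l - 1) * (n - (l - 1)) := by
  have h := count hl hln (fun _ => True) (AA n) (fun a b => by simp [AA]; omega)
    (fun _ _ _ _ _ _ _ => trivial)
  simp only [and_true] at h
  rw [nT, h, ← card_BB]
  ring

lemma nAt_UP (hl : 3 ≤ l) (hln : l ≤ n) (h : l - 1 < n) :
    2 * nAt (UPnl n l) ⟨l - 1, h⟩ = 2 * (l * (n - (l - 1))) + l * (l - 1) * (n - (l - 1)) := by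
  have h := count hl hln (fun H => (⟨l - 1, h⟩ : Fin n) ∈ H.verts) (AB n l)
    (fun a b => by
      simp only [AB, PP, Finset.mem_product, Finset.mem_range, Finset.mem_Ico, Set.mem_ofPred_eq]
      omega)
    (fun i j k _ _ _ _ => by
      simp only [QQ, Set.mem_ofPred_eq]
      omega)
  rw [nAt, h, ← card_BB, card_AB]
  ring

end classify

/-- for `l₁ ≥ l₂ ≥ 3`, with `U_1(l₁,l₂)` the cycle `C_{l₁}` with a
pendant path of length `l₂` and `U_2(l₁,l₂)` the cycle `C_{l₂}` with a pendant path
of length `l₁`, and `u`, `v` their branching vertices: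
`n(U_1) - n(U_2) = (l₁-l₂)(l₁l₂+l₁+l₂-1)/2 ≥ 0` with equality iff `l₁ = l₂`, and
`n(u,U_1) - n(v,U_2) = (l₁+1)(l₂+1)(l₁-l₂)/2 ≥ 0`. -/
theorem nT_two_segments (l₁ l₂ : ℕ) (h₂ : 3 ≤ l₂) (h₁₂ : l₂ ≤ l₁) :
    2 * nT (UPnl (l₁ + l₂) l₁) =
      2 * nT (UPnl (l₁ + l₂) l₂) + (l₁ - l₂) * (l₁ * l₂ + l₁ + l₂ - 1) ∧
    nT (UPnl (l₁ + l₂) l₂) ≤ nT (UPnl (l₁ + l₂) l₁) ∧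
    (nT (UPnl (l₁ + l₂) l₁) = nT (UPnl (l₁ + l₂) l₂) ↔ l₁ = l₂) ∧
    2 * nAt (UPnl (l₁ + l₂) l₁) ⟨l₁ - 1, by omega⟩ =
      2 * nAt (UPnl (l₁ + l₂) l₂) ⟨l₂ - 1, by omega⟩ +
        (l₁ + 1) * (l₂ + 1) * (l₁ - l₂) ∧
    nAt (UPnl (l₁ + l₂) l₂) ⟨l₂ - 1, by omega⟩ ≤
      nAt (UPnl (l₁ + l₂) l₁) ⟨l₁ - 1, by omega⟩ := by

  have a1 := nT_UP (n := l₁ + l₂) (l := l₁) (by omega) (by omega)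
  have a2 := nT_UP (n := l₁ + l₂) (l := l₂) (by omega) (by omega)
  have b1 := nAt_UP (n := l₁ + l₂) (l := l₁) (by omega) (by omega) (by omega)
  have b2 := nAt_UP (n := l₁ + l₂) (l := l₂) (by omega) (by omega) (by omega)
  obtain ⟨d, rfl⟩ := Nat.exists_eq_add_of_le h₁₂
  obtain ⟨m, rfl⟩ := Nat.exists_eq_add_of_le h₂
  rw [show 3 + m + d + (3 + m) - (3 + m + d - 1) = 4 + m by omega,
    show 3 + m + d - 1 = 2 + m + d by omega] at a1
  rw [show 3 + m + d + (3 + m) - (3 + m - 1) = 4 + m + d by omega,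
    show 3 + m - 1 = 2 + m by omega] at a2
  rw [show 3 + m + d + (3 + m) - (3 + m + d - 1) = 4 + m by omega] at b1
  rw [show 3 + m + d + (3 + m) - (3 + m - 1) = 4 + m + d by omega] at b2
  have e1 : 3 + m + d - 1 = 2 + m + d := by omega
  have e2 : 3 + m - 1 = 2 + m := by omega
  have e3 : 3 + m + d - (3 + m) = d := by omega
  have e4 : (3 + m + d) * (3 + m) + (3 + m + d) + (3 + m) - 1 =
    (3 + m + d) * (3 + m) + (3 + m + d) + (2 + m) := by omega
  have T : 2 * nT (UPnl (3 + m + d + (3 + m)) (3 + m + d)) =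
      2 * nT (UPnl (3 + m + d + (3 + m)) (3 + m)) + (3 + m + d - (3 + m)) *
        ((3 + m + d) * (3 + m) + (3 + m + d) + (3 + m) - 1) := by
    rw [a1, a2, e3, e4]
    ring
  refine ⟨T, by omega, ?_, ?_, ?_⟩
  · rw [e3] at T
    constructor
    · intro h
      rw [h, e4] at T
      have : d * ((3 + m + d) * (3 + m) + (3 + m + d) + (2 + m)) = 0 := by omega
      rcases Nat.mul_eq_zero.1 this with h | h <;> omega
    · intro h
      have : d = 0 := by omega
      subst this
      simp
  · rw [b1, b2, e3, e1, e2]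
    ring
  · have : 2 * nAt (UPnl (3 + m + d + (3 + m)) (3 + m)) ⟨3 + m - 1, by omega⟩ ≤
      2 * nAt (UPnl (3 + m + d + (3 + m)) (3 + m + d)) ⟨3 + m + d - 1, by omega⟩ := by
      rw [b1, b2, e1, e2]
      nlinarith [Nat.zero_le (d * m), Nat.zero_le (d * m * m), Nat.zero_le (d * d), Nat.zero_le (d * d * m)]
    omega
end
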